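/- Assume condition (C). Suppose either (K,c) ∈ D₁ with μ_b(K,c) < μ_f(K,c) (equivalently, by Proposition BMBF, c₁(K) < c < c_*(K), i.e. (K,c) ∈ D_{1,2}), or (K,c) ∈ D₂. Then there exists a unique real number μ²_pul = μ²_pul(K,c) such that the system (TV) with parameter μ has a solution with u > 0 satisfying condition (HO) with level ū = u₂ if and only if μ = μ²_pul. -/

import Mathlib

open Set Filter MeasureTheory

noncomputable section

namespace TrafficTW

/-- `f(u) = (K u - V(u) - c)/K`. -/
def fTV (V : ℝ → ℝ) (K c u : ℝ) : ℝ := (K * u - V u - c) / K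

/-- `f'(u) = (K - V'(u))/K`. -/
def fdTV (V' : ℝ → ℝ) (K u : ℝ) : ℝ := (K - V' u) / K

/-- `h(u,μ) = f'(u) + μ`. -/
def hTV (V' : ℝ → ℝ) (K μ u : ℝ) : ℝ := fdTV V' K u + μ

/-- `g₁(u) = 1/(τ κ(1/u))`. -/
def g1TV (κ : ℝ → ℝ) (τ u : ℝ) : ℝ := 1 / (τ * κ (1 / u))

/-- `g₂(u) = u/(2 τ κ(1/u))`. -/
def g2TV (κ : ℝ → ℝ) (τ u : ℝ) : ℝ := u / (2 * τ * κ (1 / u))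

/-- The traveling-wave system (TV): `u' = w`, `w' = g₁ f + g₂ h w`. -/
def IsTVSol (V V' κ : ℝ → ℝ) (τ K c μ : ℝ) (u w : ℝ → ℝ) : Prop :=
  (∀ z, HasDerivAt u (w z) z) ∧
  (∀ z, HasDerivAt w
    (g1TV κ τ (u z) * fTV V K c (u z) + g2TV κ τ (u z) * hTV V' K μ (u z) * w z) z)

/-- Assumption (A1), where `V'` and `V''` are the first and second derivatives of `V`. -/
def A1 (V V' V'' : ℝ → ℝ) (UM : ℝ) : Prop :=
  (∀ u ∈ Ici (0:ℝ), HasDerivWithinAt V (V' u) (Ici 0) u) ∧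
  ContinuousOn V' (Ici 0) ∧
  (∀ u ∈ Ioi (0:ℝ), HasDerivAt V' (V'' u) u) ∧
  ContinuousOn V'' (Ioi 0) ∧
  (∀ u, 0 < u → 0 < V' u) ∧ (∃ M, ∀ u, 0 < u → V' u ≤ M) ∧
  Tendsto V' atTop (nhds 0) ∧
  0 < UM ∧ (∀ u, 0 < u → V' u ≤ V' UM) ∧
  (∀ u, 0 < u → (V'' u = 0 ↔ u = UM))

/-- Assumption (A2). -/
def A2 (κ : ℝ → ℝ) : Prop :=
  ContDiffOn ℝ 1 κ (Ioi 0) ∧ ∀ ρ, 0 < ρ → 0 < κ ρ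

/-- `c₀ = -V(0)`. -/
def c0v (V : ℝ → ℝ) : ℝ := - V 0

/-- `c_M(K) = K u_M(K) - V(u_M(K))`, where `uMx` is the function `K ↦ u_M(K)`. -/
def cMf (V : ℝ → ℝ) (uMx : ℝ → ℝ) (K : ℝ) : ℝ := K * uMx K - V (uMx K)

/-- `c_m(K) = K u_m(K) - V(u_m(K))`, where `umx` is the function `K ↦ u_m(K)`. -/
def cmf (V : ℝ → ℝ) (umx : ℝ → ℝ) (K : ℝ) : ℝ := K * umx K - V (umx K)

/-- `c₁(K) = max (c₀, c_m(K))`. -/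
def c1f (V : ℝ → ℝ) (umx : ℝ → ℝ) (K : ℝ) : ℝ := max (c0v V) (cmf V umx K)

/-- `uMx K = u_M(K)` is the unique local maximum point of `u ↦ K u - V(u)`, characterized
by `u_M(K) ∈ (0, U_M)` and `V'(u_M(K)) = K`, for `K ∈ (K₀, K_M)`. -/
def UMaxHyp (V' : ℝ → ℝ) (UM : ℝ) (uMx : ℝ → ℝ) : Prop :=
  ∀ K, V' 0 < K → K < V' UM → uMx K ∈ Ioo 0 UM ∧ V' (uMx K) = K

/-- `umx K = u_m(K)` is the unique local minimum point of `u ↦ K u - V(u)`, characterized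
by `u_m(K) ∈ (U_M, ∞)` and `V'(u_m(K)) = K`, for `K ∈ (0, K_M)`. -/
def UMinHyp (V' : ℝ → ℝ) (UM : ℝ) (umx : ℝ → ℝ) : Prop :=
  ∀ K, 0 < K → K < V' UM → UM < umx K ∧ V' (umx K) = K

/-- Characterization of `K₁ ∈ (K₀, K_M)`: `c_m(K) < c₀` for `K < K₁` and `c_m(K) > c₀`
for `K > K₁`. -/
def K1Hyp (V V' : ℝ → ℝ) (UM : ℝ) (umx : ℝ → ℝ) (K₁ : ℝ) : Prop :=
  V' 0 < K₁ ∧ K₁ < V' UM ∧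
  (∀ K, 0 < K → K < K₁ → cmf V umx K < c0v V) ∧
  cmf V umx K₁ = c0v V ∧
  (∀ K, K₁ < K → K < V' UM → c0v V < cmf V umx K)

/-- The parameter region `D₁`. -/
def D1 (V V' : ℝ → ℝ) (UM : ℝ) (uMx umx : ℝ → ℝ) : Set (ℝ × ℝ) :=
  {p | V' 0 < p.1 ∧ p.1 < V' UM ∧ c1f V umx p.1 < p.2 ∧ p.2 < cMf V uMx p.1}

/-- The parameter region `D₂`. -/
def D2 (V V' : ℝ → ℝ) (umx : ℝ → ℝ) (K₁ : ℝ) : Set (ℝ × ℝ) :=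
  {p | (V' 0 < p.1 ∧ p.1 < K₁ ∧ p.2 = c0v V) ∨
       (0 < p.1 ∧ p.1 < K₁ ∧ cmf V umx p.1 < p.2 ∧ p.2 < c0v V)}

/-- For `(K,c) ∈ D₁`: `u₁ < u₀ < u₂` are the exactly three positive zeros of `f`. -/
def ZerosD1 (V : ℝ → ℝ) (K c u1 u0 u2 : ℝ) : Prop :=
  0 < u1 ∧ u1 < u0 ∧ u0 < u2 ∧
  fTV V K c u1 = 0 ∧ fTV V K c u0 = 0 ∧ fTV V K c u2 = 0 ∧
  ∀ u, 0 < u → fTV V K c u = 0 → u = u1 ∨ u = u0 ∨ u = u2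

/-- For `(K,c) ∈ D₂`: `u₀ < u₂` are the exactly two positive zeros of `f`. -/
def ZerosD2 (V : ℝ → ℝ) (K c u0 u2 : ℝ) : Prop :=
  0 < u0 ∧ u0 < u2 ∧ fTV V K c u0 = 0 ∧ fTV V K c u2 = 0 ∧
  ∀ u, 0 < u → fTV V K c u = 0 → u = u0 ∨ u = u2

/-- Condition (HE1). -/
def HE1 (u1 u2 : ℝ) (u w : ℝ → ℝ) : Prop :=
  Tendsto u atBot (nhds u1) ∧ Tendsto u atTop (nhds u2) ∧
  Tendsto w atBot (nhds 0) ∧ Tendsto w atTop (nhds 0) ∧ ∀ z, 0 < w z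

/-- Condition (HE2). -/
def HE2 (u1 u2 : ℝ) (u w : ℝ → ℝ) : Prop :=
  Tendsto u atBot (nhds u2) ∧ Tendsto u atTop (nhds u1) ∧
  Tendsto w atBot (nhds 0) ∧ Tendsto w atTop (nhds 0) ∧ ∀ z, w z < 0

/-- Condition (HO) with level `ub`. -/
def HO (ub : ℝ) (u w : ℝ → ℝ) : Prop :=
  Tendsto u atBot (nhds ub) ∧ Tendsto u atTop (nhds ub) ∧
  Tendsto w atBot (nhds 0) ∧ Tendsto w atTop (nhds 0) ∧
  ¬ (∀ z, u z = ub ∧ w z = 0)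

/-- (TV) with parameter `μ` has a positive solution satisfying (HE1). -/
def HasHE1 (V V' κ : ℝ → ℝ) (τ K c μ u1 u2 : ℝ) : Prop :=
  ∃ u w : ℝ → ℝ, IsTVSol V V' κ τ K c μ u w ∧ (∀ z, 0 < u z) ∧ HE1 u1 u2 u w

/-- (TV) with parameter `μ` has a positive solution satisfying (HE2). -/
def HasHE2 (V V' κ : ℝ → ℝ) (τ K c μ u1 u2 : ℝ) : Prop :=
  ∃ u w : ℝ → ℝ, IsTVSol V V' κ τ K c μ u w ∧ (∀ z, 0 < u z) ∧ HE2 u1 u2 u w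

/-- (TV) with parameter `μ` has a positive solution satisfying (HO) with level `ub`. -/
def HasHO (V V' κ : ℝ → ℝ) (τ K c μ ub : ℝ) : Prop :=
  ∃ u w : ℝ → ℝ, IsTVSol V V' κ τ K c μ u w ∧ (∀ z, 0 < u z) ∧ HO ub u w

/-- Condition (H): `∫₁^∞ dρ/(ρ³ κ(ρ)) = ∞`. -/
def CondH (κ : ℝ → ℝ) : Prop :=
  ¬ IntegrableOn (fun ρ => 1 / (ρ ^ 3 * κ ρ)) (Ioi 1)

/-- Condition (C). -/
def CondC (V' κ : ℝ → ℝ) (UM K₁ K : ℝ) : Prop :=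
  (K₁ < K ∧ K < V' UM) ∨ (CondH κ ∧ V' 0 < K ∧ K ≤ K₁)

/-- Periodic solution. -/
def IsPeriodicSol (u w : ℝ → ℝ) : Prop :=
  ∃ Z, 0 < Z ∧ ∀ z, u (z + Z) = u z ∧ w (z + Z) = w z

/-- Nonconstant pair of functions. -/
def Nonconst (u w : ℝ → ℝ) : Prop := ∃ z, u z ≠ u 0 ∨ w z ≠ w 0

/-- Discriminant of the Jacobian at an equilibrium `(u,0)`. -/
def discTV (V' κ : ℝ → ℝ) (τ K u μ : ℝ) : ℝ :=
  (g2TV κ τ u) ^ 2 * (hTV V' K μ u) ^ 2 + 4 * g1TV κ τ u * fdTV V' K u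

/-- The eigenvalue `λ₊(u)`. -/
def lamP (V' κ : ℝ → ℝ) (τ K u μ : ℝ) : ℝ :=
  (g2TV κ τ u * hTV V' K μ u + Real.sqrt (discTV V' κ τ K u μ)) / 2

/-- The eigenvalue `λ₋(u)`. -/
def lamM (V' κ : ℝ → ℝ) (τ K u μ : ℝ) : ℝ :=
  (g2TV κ τ u * hTV V' K μ u - Real.sqrt (discTV V' κ τ K u μ)) / 2

/-- `Z` is the minimal period of `(u,w)`. -/
def IsMinPeriod (u w : ℝ → ℝ) (Z : ℝ) : Prop :=
  0 < Z ∧ (∀ z, u (z + Z) = u z ∧ w (z + Z) = w z) ∧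
  ∀ Z', 0 < Z' → (∀ z, u (z + Z') = u z ∧ w (z + Z') = w z) → Z ≤ Z'

/-!
Put `s = u₂ - u` and `E = w ^ 2` along an orbit of (TV). The arcs of a homoclinic orbit below and
above the axis `w = 0` become two profiles with `E(0) = 0` which solve the singular scalar equations
`E' = P + R √E` and `E' = P - R √E`, and the orbit closes up exactly when both profiles return to
zero at the same point. Here `R = r + μ k` with `k > 0`, so the two profiles depend on `μ` in
opposite, strictly monotone ways, and at most one `μ` can close the loop.

For existence, the set of `μ` for which the first profile dies while the second is still positive
and the set with the two roles exchanged are open and disjoint. Both are nonempty: over `D₁` they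
contain `μ_b` and `μ_f`, the parameters of the heteroclinic orbits, and over `D₂` they contain every
`μ` close to `±∞`. By connectedness some `μ` belongs to neither of them, and for this `μ` the two
profiles either die together or both stay positive up to `u = 0`. The second alternative is excluded
because the potential has a negative value further to the left, or, under (H), because it is
unbounded: the potential plus `(√E₊ + √E₋) ^ 2` is nonincreasing.
-/

open scoped Topology

section Calculus

variable {f f' : ℝ → ℝ} {a b : ℝ}

lemma deriv_nonpos_of_forall_le_left {d x : ℝ} (h : HasDerivAt f d x) (hax : a < x)
    (hle : ∀ y ∈ Ioo a x, f x ≤ f y) : d ≤ 0 := by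
  have hslope := (hasDerivWithinAt_iff_tendsto_slope' (self_notMem_Iio)).1
    (h.hasDerivWithinAt (s := Iio x))
  refine le_of_tendsto hslope ?_
  filter_upwards [Ioo_mem_nhdsLT hax] with y hy
  rw [slope_def_field]
  exact div_nonpos_of_nonneg_of_nonpos (sub_nonneg.2 (hle y hy)) (sub_nonpos.2 hy.2.le)

lemma nonneg_of_deriv_pos_of_neg (hf : ContinuousOn f (Icc a b)) (ha : 0 ≤ f a)
    (hd : ∀ x ∈ Ioc a b, f x < 0 → ∃ d, 0 < d ∧ HasDerivAt f d x) :
    ∀ x ∈ Icc a b, 0 ≤ f x := by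
  intro x hx
  obtain ⟨m, hm, hmin⟩ := isCompact_Icc.exists_isMinOn ⟨x, hx⟩ hf
  refine le_trans (not_lt.1 fun hneg => ?_) (hmin hx)
  have ham : a < m := lt_of_le_of_ne hm.1 (by rintro rfl; linarith)
  obtain ⟨d, hd0, hd⟩ := hd m ⟨ham, hm.2⟩ hneg
  exact hd0.not_ge (deriv_nonpos_of_forall_le_left hd ham fun y hy =>
    hmin ⟨hy.1.le, hy.2.le.trans hm.2⟩)

lemma pos_of_deriv_pos_of_nonpos (hf : ContinuousOn f (Icc a b)) (ha : 0 ≤ f a)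
    (hd : ∀ x ∈ Ioc a b, f x ≤ 0 → ∃ d, 0 < d ∧ HasDerivAt f d x) :
    ∀ x ∈ Ioc a b, 0 < f x := by
  intro x hx
  have hnonneg := nonneg_of_deriv_pos_of_neg hf ha fun x hx h => hd x hx h.le
  by_contra hneg
  obtain ⟨d, hd0, hd⟩ := hd x hx (not_lt.1 hneg)
  exact hd0.not_ge (deriv_nonpos_of_forall_le_left hd hx.1 fun y hy =>
    (not_lt.1 hneg).trans (hnonneg y ⟨hy.1.le, hy.2.le.trans hx.2⟩))

lemma nonneg_of_deriv_pos_of_eq_zero (hf : ContinuousOn f (Icc a b)) (ha : 0 ≤ f a)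
    (hd : ∀ x ∈ Ico a b, HasDerivAt f (f' x) x) (hpos : ∀ x ∈ Ico a b, f x = 0 → 0 < f' x) :
    ∀ x ∈ Icc a b, 0 ≤ f x :=
  image_le_of_deriv_right_lt_deriv_boundary' (f := fun _ => (0 : ℝ)) (f' := fun _ => 0)
    continuousOn_const (fun _ _ => hasDerivWithinAt_const _ _ _) ha hf
    (fun x hx => (hd x hx).hasDerivWithinAt) fun x hx h => hpos x hx h.symm

lemma neg_of_deriv_neg_of_nonpos (hf : ContinuousOn f (Icc a b)) (ha : f a ≤ 0)
    (hd : ∀ x ∈ Ico a b, HasDerivAt f (f' x) x) (hneg : ∀ x ∈ Ico a b, f x ≤ 0 → f' x < 0) :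
    ∀ x ∈ Ioc a b, f x < 0 := by
  have hnonpos : ∀ x ∈ Icc a b, f x ≤ 0 := fun x hx => neg_nonneg.1 <|
    nonneg_of_deriv_pos_of_eq_zero (f := fun x => -f x) hf.neg (neg_nonneg.2 ha)
      (fun x hx => (hd x hx).neg)
      (fun x hx h => neg_pos.2 (hneg x hx (neg_eq_zero.1 h).le)) x hx
  have hanti : StrictAntiOn f (Icc a b) := by
    refine strictAntiOn_of_hasDerivWithinAt_neg (convex_Icc _ _) (f' := f') hf ?_ ?_ <;>
      rw [interior_Icc]
    · exact fun x hx => (hd x ⟨hx.1.le, hx.2⟩).hasDerivWithinAt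
    · exact fun x hx => hneg x ⟨hx.1.le, hx.2⟩ (hnonpos x ⟨hx.1.le, hx.2.le⟩)
  intro x hx
  exact (hanti (left_mem_Icc.2 (hx.1.le.trans hx.2)) ⟨hx.1.le, hx.2⟩ hx.1).trans_le ha

end Calculus

/-- `P` is continuous on `[0, T]` and changes sign from positive to negative at `s₀`, growing at
least linearly to the left of `s₀`. In the application `P s = -2 G (u₂ - s)`, where `G = g₁ f` is
the force of (TV), and `s₀ = u₂ - u₀`. -/
structure IsDownCrossing (P : ℝ → ℝ) (s₀ T : ℝ) : Prop where
  zero_lt : 0 < s₀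
  lt_right : s₀ < T
  continuousOn : ContinuousOn P (Icc 0 T)
  pos : ∀ s ∈ Ioo 0 s₀, 0 < P s
  neg : ∀ s ∈ Ioo s₀ T, P s < 0
  slope : ∃ g > 0, ∀ᶠ s in 𝓝[<] s₀, g * (s₀ - s) ≤ P s

/-- Solutions of the singular scalar problem `E' = P + R √E`, `E 0 = 0` on `[0, T]`. If an orbit of
`u' = w`, `w' = G u + H u * w` leaves or enters the saddle `u₂` along an arc on which `w` has
constant sign, then `E = w²`, as a function of `s = u₂ - u`, is such a profile. Since `√E = 0`
where `E ≤ 0`, profiles may be continued to negative values. -/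
structure IsProfile (P R : ℝ → ℝ) (T : ℝ) (E : ℝ → ℝ) : Prop where
  continuousOn : ContinuousOn E (Icc 0 T)
  zero : E 0 = 0
  hasDerivAt : ∀ s ∈ Ioo 0 T, HasDerivAt E (P s + R s * √(E s)) s

section Profile

variable {P R R₁ R₂ E E₁ E₂ : ℝ → ℝ} {s₀ s t T T' : ℝ}

namespace IsDownCrossing

lemma mono (hP : IsDownCrossing P s₀ T) (h0 : s₀ < T') (hT : T' ≤ T) :
    IsDownCrossing P s₀ T' where
  zero_lt := hP.zero_lt
  lt_right := h0
  continuousOn := hP.continuousOn.mono (Icc_subset_Icc_right hT)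
  pos := hP.pos
  neg s hs := hP.neg s ⟨hs.1, hs.2.trans_le hT⟩
  slope := hP.slope

lemma mem_Ioo (hP : IsDownCrossing P s₀ T) : s₀ ∈ Ioo 0 T := ⟨hP.zero_lt, hP.lt_right⟩

lemma Ioo_subset (hP : IsDownCrossing P s₀ T) : Ioo 0 s₀ ⊆ Ioo 0 T :=
  Ioo_subset_Ioo_right hP.lt_right.le

end IsDownCrossing

namespace IsProfile

lemma mono (hE : IsProfile P R T E) (hT : T' ≤ T) : IsProfile P R T' E where
  continuousOn := hE.continuousOn.mono (Icc_subset_Icc_right hT)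
  zero := hE.zero
  hasDerivAt s hs := hE.hasDerivAt s ⟨hs.1, hs.2.trans_le hT⟩

lemma pos_of_lt (hE : IsProfile P R T E) (hP : IsDownCrossing P s₀ T) (hs : s ∈ Ioo 0 s₀) :
    0 < E s := by
  have hsT : s < T := hs.2.trans hP.lt_right
  refine pos_of_deriv_pos_of_nonpos (hE.continuousOn.mono (Icc_subset_Icc_right hsT.le))
    hE.zero.ge ?_ s ⟨hs.1, le_rfl⟩
  intro x hx hEx
  refine ⟨_, ?_, hE.hasDerivAt x ⟨hx.1, hx.2.trans_lt hsT⟩⟩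
  rw [Real.sqrt_eq_zero_of_nonpos hEx, mul_zero, add_zero]
  exact hP.pos x ⟨hx.1, hx.2.trans_lt hs.2⟩

lemma nonneg_crossing (hE : IsProfile P R T E) (hP : IsDownCrossing P s₀ T) : 0 ≤ E s₀ := by
  refine ge_of_tendsto ((hE.hasDerivAt s₀ hP.mem_Ioo).continuousAt.tendsto.mono_left
    (nhdsWithin_le_nhds (s := Iio s₀))) ?_
  filter_upwards [Ioo_mem_nhdsLT hP.zero_lt] with y hy using (hE.pos_of_lt hP hy).le

lemma hasDerivAt_sqrt (hE : IsProfile P R T E) (hs : s ∈ Ioo 0 T) (hEs : 0 < E s) :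
    HasDerivAt (fun x => √(E x)) (P s / (2 * √(E s)) + R s / 2) s := by
  convert (hE.hasDerivAt s hs).sqrt hEs.ne' using 1
  have : 0 < √(E s) := Real.sqrt_pos.2 hEs
  field_simp

lemma hasDerivAt_sqrt_sub (h₁ : IsProfile P R₁ T E₁) (h₂ : IsProfile P R₂ T E₂)
    (hs : s ∈ Ioo 0 T) (hE₁ : 0 < E₁ s) (hE₂ : 0 < E₂ s) :
    HasDerivAt (fun x => √(E₂ x) - √(E₁ x))
      (P s / (2 * √(E₂ s)) - P s / (2 * √(E₁ s)) + (R₂ s - R₁ s) / 2) s :=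
  ((h₂.hasDerivAt_sqrt hs hE₂).sub (h₁.hasDerivAt_sqrt hs hE₁)).congr_deriv (by ring)

lemma continuousOn_sqrt_sub (h₁ : IsProfile P R₁ T E₁) (h₂ : IsProfile P R₂ T E₂) :
    ContinuousOn (fun x => √(E₂ x) - √(E₁ x)) (Icc 0 T) :=
  h₂.continuousOn.sqrt.sub h₁.continuousOn.sqrt

-- As long as `R ≥ -η` to the left of `s₀`, `√E + η s` increases there.
lemma eventually_sqrt_le_mul_sub (hE : IsProfile P R T E) (hP : IsDownCrossing P s₀ T)
    (hR : ContinuousAt R s₀) (hR0 : 0 ≤ R s₀) (hE0 : E s₀ = 0) {η : ℝ} (hη : 0 < η) :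
    ∀ᶠ s in 𝓝[<] s₀, √(E s) ≤ η * (s₀ - s) := by
  have hRη : ∀ᶠ x in 𝓝[<] s₀, -η < R x :=
    (hR.tendsto.mono_left nhdsWithin_le_nhds).eventually (lt_mem_nhds (by linarith))
  obtain ⟨a, ha, haR⟩ := (mem_nhdsLT_iff_exists_Ioo_subset' hP.zero_lt).1
    (inter_mem hRη (Ioo_mem_nhdsLT hP.zero_lt))
  filter_upwards [Ioo_mem_nhdsLT ha] with s hs
  have h0s : 0 < s := (haR hs).2.1
  have hmono : MonotoneOn (fun x => √(E x) + η * x) (Icc s s₀) := by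
    refine monotoneOn_of_hasDerivWithinAt_nonneg (convex_Icc _ _)
      (f' := fun x => P x / (2 * √(E x)) + R x / 2 + η * 1)
      ((hE.continuousOn.sqrt.mono (Icc_subset_Icc h0s.le hP.lt_right.le)).add (by fun_prop))
      ?_ ?_ <;> rw [interior_Icc] <;> intro x hx <;>
      have hx' : x ∈ Ioo 0 s₀ := ⟨h0s.trans hx.1, hx.2⟩
    · exact ((hE.hasDerivAt_sqrt (hP.Ioo_subset hx') (hE.pos_of_lt hP hx')).add
        ((hasDerivAt_id x).const_mul η)).hasDerivWithinAt
    · have hRx : -η < R x := (haR ⟨hs.1.trans hx.1, hx.2⟩).1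
      have hPx := hP.pos x hx'
      have : 0 ≤ P x / (2 * √(E x)) := by positivity
      linarith
  have := hmono (left_mem_Icc.2 hs.2.le) (right_mem_Icc.2 hs.2.le) hs.2.le
  simp only [hE0, Real.sqrt_zero] at this
  linarith

lemma pos_crossing (hE : IsProfile P R T E) (hP : IsDownCrossing P s₀ T)
    (hR : ContinuousAt R s₀) (hR0 : 0 ≤ R s₀) : 0 < E s₀ := by
  refine lt_of_le_of_ne (hE.nonneg_crossing hP) fun hE0 => ?_
  obtain ⟨g, hg, hslope⟩ := hP.slope
  obtain ⟨η, hη, hηg⟩ : ∃ η : ℝ, 0 < η ∧ η * η < g :=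
    ⟨√(g / 2), by positivity, by rw [Real.mul_self_sqrt (by positivity)]; linarith⟩
  have hRη : ∀ᶠ x in 𝓝[<] s₀, -η < R x :=
    (hR.tendsto.mono_left nhdsWithin_le_nhds).eventually (lt_mem_nhds (by linarith))
  obtain ⟨a, ha, hsub⟩ := (mem_nhdsLT_iff_exists_Ioo_subset' hP.zero_lt).1
    (((hslope.and hRη).and (hE.eventually_sqrt_le_mul_sub hP hR hR0 hE0.symm hη)).and
      (Ioo_mem_nhdsLT hP.zero_lt))
  obtain ⟨s, has, hss⟩ := exists_between (show a < s₀ from ha)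
  have h0s : 0 < s := (hsub ⟨has, hss⟩).2.1
  have hmono : MonotoneOn E (Icc s s₀) := by
    refine monotoneOn_of_hasDerivWithinAt_nonneg (convex_Icc _ _)
      (f' := fun x => P x + R x * √(E x))
      (hE.continuousOn.mono (Icc_subset_Icc h0s.le hP.lt_right.le)) ?_ ?_ <;>
      rw [interior_Icc] <;> intro x hx
    · exact (hE.hasDerivAt x ⟨h0s.trans hx.1, hx.2.trans hP.lt_right⟩).hasDerivWithinAt
    · obtain ⟨⟨⟨hPx, hRx⟩, hsqrt⟩, -⟩ := hsub ⟨has.trans hx.1, hx.2⟩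
      have hRE : -η * √(E x) ≤ R x * √(E x) :=
        mul_le_mul_of_nonneg_right hRx.le (Real.sqrt_nonneg _)
      nlinarith [mul_pos (sub_pos.2 hx.2) (sub_pos.2 hηg), mul_le_mul_of_nonneg_left hsqrt hη.le]
  have := hmono (left_mem_Icc.2 hss.le) (right_mem_Icc.2 hss.le) hss.le
  linarith [hE.pos_of_lt hP ⟨h0s, hss⟩]

lemma neg_of_nonpos_of_crossing_lt (hE : IsProfile P R T E) (hP : IsDownCrossing P s₀ T)
    (hs : s₀ < s) (hst : s < t) (htT : t ≤ T) (hEs : E s ≤ 0) : E t < 0 := by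
  have h0s : 0 < s := hP.zero_lt.trans hs
  refine neg_of_deriv_neg_of_nonpos (hE.continuousOn.mono (Icc_subset_Icc_left h0s.le)) hEs
    (fun x hx => hE.hasDerivAt x ⟨h0s.trans_le hx.1, hx.2⟩) (fun x hx hEx => ?_) t ⟨hst, htT⟩
  rw [Real.sqrt_eq_zero_of_nonpos hEx, mul_zero, add_zero]
  exact hP.neg x ⟨hs.trans_le hx.1, hx.2⟩

lemma eventually_nonpos_right (hE : IsProfile P R T E) (hP : IsDownCrossing P s₀ T)
    (hR : ContinuousAt R s₀) (hE0 : E s₀ ≤ 0) : ∀ᶠ s in 𝓝[>] s₀, E s ≤ 0 := by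
  have hR0 : R s₀ < 0 := lt_of_not_ge fun h => (hE.pos_crossing hP hR h).not_ge hE0
  obtain ⟨b, hb, hsub⟩ := (mem_nhdsGT_iff_exists_Ioo_subset' hP.lt_right).1
    (inter_mem ((hR.tendsto.mono_left nhdsWithin_le_nhds).eventually (gt_mem_nhds hR0))
      (Ioo_mem_nhdsGT hP.lt_right))
  filter_upwards [Ioo_mem_nhdsGT hb] with s hs
  have hanti : AntitoneOn E (Icc s₀ s) := by
    refine antitoneOn_of_hasDerivWithinAt_nonpos (convex_Icc _ _)
      (f' := fun x => P x + R x * √(E x))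
      (hE.continuousOn.mono (Icc_subset_Icc hP.zero_lt.le (hsub hs).2.2.le)) ?_ ?_ <;>
      rw [interior_Icc] <;> intro x hx <;> obtain ⟨hRx, hxT⟩ := hsub ⟨hx.1, hx.2.trans hs.2⟩
    · exact (hE.hasDerivAt x ⟨hP.zero_lt.trans hx.1, hxT.2⟩).hasDerivWithinAt
    · exact add_nonpos (hP.neg x ⟨hx.1, hxT.2⟩).le
        (mul_nonpos_of_nonpos_of_nonneg (le_of_lt hRx) (Real.sqrt_nonneg _))
  exact (hanti (left_mem_Icc.2 hs.1.le) (right_mem_Icc.2 hs.1.le) hs.1.le).trans hE0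

lemma neg_of_nonpos_of_lt (hE : IsProfile P R T E) (hP : IsDownCrossing P s₀ T)
    (hR : ContinuousAt R s₀) (hs : 0 < s) (hst : s < t) (htT : t ≤ T) (hEs : E s ≤ 0) :
    E t < 0 := by
  rcases lt_trichotomy s s₀ with hlt | rfl | hlt
  · exact absurd (hE.pos_of_lt hP ⟨hs, hlt⟩) hEs.not_gt
  · obtain ⟨y, hEy, hy⟩ := ((hE.eventually_nonpos_right hP hR hEs).and (Ioo_mem_nhdsGT hst)).exists
    exact hE.neg_of_nonpos_of_crossing_lt hP hy.1 hy.2 htT hEy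
  · exact hE.neg_of_nonpos_of_crossing_lt hP hlt hst htT hEs

lemma sqrt_lt_sqrt_of_lt (h₁ : IsProfile P R₁ T E₁) (h₂ : IsProfile P R₂ T E₂)
    (hP : IsDownCrossing P s₀ T) (hlt : ∀ s ∈ Ioo 0 s₀, R₁ s < R₂ s) (hs : s ∈ Ioo 0 s₀) :
    √(E₁ s) < √(E₂ s) := by
  have hsT : s < T := hs.2.trans hP.lt_right
  refine sub_pos.1 <| pos_of_deriv_pos_of_nonpos
    ((h₁.continuousOn_sqrt_sub h₂).mono (Icc_subset_Icc_right hsT.le))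
    (by simp only [h₁.zero, h₂.zero, sub_self, le_refl]) ?_ s ⟨hs.1, le_rfl⟩
  intro x hx hD
  have hx' : x ∈ Ioo 0 s₀ := ⟨hx.1, hx.2.trans_lt hs.2⟩
  have hE₂ := h₂.pos_of_lt hP hx'
  refine ⟨_, ?_, h₁.hasDerivAt_sqrt_sub h₂ (hP.Ioo_subset hx') (h₁.pos_of_lt hP hx') hE₂⟩
  have : P x / (2 * √(E₁ x)) ≤ P x / (2 * √(E₂ x)) :=
    div_le_div_of_nonneg_left (hP.pos x hx').le (by positivity) (by linarith)
  linarith [hlt x hx']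

lemma le_crossing_of_lt (h₁ : IsProfile P R₁ T E₁) (h₂ : IsProfile P R₂ T E₂)
    (hP : IsDownCrossing P s₀ T) (hlt : ∀ s ∈ Ioo 0 s₀, R₁ s < R₂ s) : E₁ s₀ ≤ E₂ s₀ := by
  refine le_of_tendsto_of_tendsto
    ((h₁.hasDerivAt s₀ hP.mem_Ioo).continuousAt.tendsto.mono_left
      (nhdsWithin_le_nhds (s := Iio s₀)))
    ((h₂.hasDerivAt s₀ hP.mem_Ioo).continuousAt.tendsto.mono_left nhdsWithin_le_nhds) ?_
  filter_upwards [Ioo_mem_nhdsLT hP.zero_lt] with y hy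
  exact (Real.sqrt_le_sqrt_iff (h₂.pos_of_lt hP hy).le).1 (h₁.sqrt_lt_sqrt_of_lt h₂ hP hlt hy).le

lemma le_of_lt_of_crossing_le (h₁ : IsProfile P R₁ T E₁) (h₂ : IsProfile P R₂ T E₂)
    (hP : IsDownCrossing P s₀ T) (hlt : ∀ s ∈ Ioo 0 T, R₁ s < R₂ s)
    (hpos : ∀ s ∈ Ioo 0 T, 0 < E₁ s) (hs : s ∈ Icc s₀ T) : E₁ s ≤ E₂ s := by
  have hsub : Icc s₀ T ⊆ Icc 0 T := Icc_subset_Icc_left hP.zero_lt.le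
  have hmem : ∀ x ∈ Ico s₀ T, x ∈ Ioo 0 T := fun x hx => ⟨hP.zero_lt.trans_le hx.1, hx.2⟩
  refine sub_nonneg.1 <| nonneg_of_deriv_pos_of_eq_zero (f := fun x => E₂ x - E₁ x)
    ((h₂.continuousOn.mono hsub).sub (h₁.continuousOn.mono hsub))
    (sub_nonneg.2 (h₁.le_crossing_of_lt h₂ hP fun s hs => hlt s (hP.Ioo_subset hs)))
    (fun x hx => (h₂.hasDerivAt x (hmem x hx)).sub (h₁.hasDerivAt x (hmem x hx))) ?_ s hs
  intro x hx h0
  rw [sub_eq_zero.1 h0]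
  linarith [mul_lt_mul_of_pos_right (hlt x (hmem x hx)) (Real.sqrt_pos.2 (hpos x (hmem x hx)))]

/-- Beyond `s₀`, where `P < 0`, even the gap `√E₂ - √E₁` increases. -/
lemma pos_right_of_lt (h₁ : IsProfile P R₁ T E₁) (h₂ : IsProfile P R₂ T E₂)
    (hP : IsDownCrossing P s₀ T) (hlt : ∀ s ∈ Ioo 0 T, R₁ s < R₂ s)
    (hpos : ∀ s ∈ Ioo 0 T, 0 < E₁ s) : 0 < E₂ T := by
  have hle : ∀ s ∈ Icc s₀ T, E₁ s ≤ E₂ s := fun s hs =>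
    h₁.le_of_lt_of_crossing_le h₂ hP hlt hpos hs
  have hgap : StrictMonoOn (fun s => √(E₂ s) - √(E₁ s)) (Icc s₀ T) := by
    refine strictMonoOn_of_hasDerivWithinAt_pos (convex_Icc _ _)
      (f' := fun s => P s / (2 * √(E₂ s)) - P s / (2 * √(E₁ s)) + (R₂ s - R₁ s) / 2)
      ((h₁.continuousOn_sqrt_sub h₂).mono (Icc_subset_Icc_left hP.zero_lt.le)) ?_ ?_ <;>
      rw [interior_Icc] <;> intro x hx <;>
      have hx' : x ∈ Ioo 0 T := ⟨hP.zero_lt.trans hx.1, hx.2⟩ <;>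
      have hE₁ := hpos x hx' <;> have hx₁₂ := hle x (Ioo_subset_Icc_self hx)
    · exact (h₁.hasDerivAt_sqrt_sub h₂ hx' hE₁ (hE₁.trans_le hx₁₂)).hasDerivWithinAt
    · have : -P x / (2 * √(E₂ x)) ≤ -P x / (2 * √(E₁ x)) :=
        div_le_div_of_nonneg_left (neg_nonneg.2 (hP.neg x hx).le) (by positivity)
          (by linarith [Real.sqrt_le_sqrt hx₁₂])
      rw [neg_div, neg_div] at this
      linarith [hlt x hx']
  have hT := hgap (left_mem_Icc.2 hP.lt_right.le) (right_mem_Icc.2 hP.lt_right.le) hP.lt_right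
  have hs₀ := Real.sqrt_le_sqrt (hle s₀ (left_mem_Icc.2 hP.lt_right.le))
  exact Real.sqrt_pos.1 (by linarith [Real.sqrt_nonneg (E₁ T)])

end IsProfile

end Profile

lemma abs_sqrt_sub_sqrt_le {x y δ : ℝ} (hδ : 0 < δ) (hx : δ ≤ x) :
    |√y - √x| ≤ 1 / √δ * |y - x| := by
  have hx0 : 0 < x := hδ.trans_le hx
  have hsqrt : √δ ≤ √x := Real.sqrt_le_sqrt hx
  have hsqrtδ : 0 < √δ := Real.sqrt_pos.2 hδ
  rw [one_div, ← div_eq_inv_mul, le_div_iff₀ hsqrtδ]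
  rcases le_total y 0 with hy | hy
  · rw [Real.sqrt_eq_zero_of_nonpos hy, zero_sub, abs_neg, abs_of_pos (hsqrtδ.trans_le hsqrt),
      abs_of_nonpos (by linarith)]
    nlinarith [Real.mul_self_sqrt hx0.le]
  · have hfactor : y - x = (√y - √x) * (√y + √x) := by
      linear_combination Real.mul_self_sqrt hx0.le - Real.mul_self_sqrt hy
    rw [hfactor, abs_mul, abs_of_pos (by positivity : 0 < √y + √x)]
    exact mul_le_mul_of_nonneg_left (by linarith [Real.sqrt_nonneg y]) (abs_nonneg _)

lemma exists_first_nonpos {f : ℝ → ℝ} {a b : ℝ} (hab : a ≤ b) (hf : ContinuousOn f (Icc a b))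
    (hb : f b ≤ 0) : ∃ t ∈ Icc a b, f t ≤ 0 ∧ ∀ s ∈ Ico a t, 0 < f s := by
  have hclosed : IsClosed (Icc a b ∩ f ⁻¹' Iic 0) :=
    hf.preimage_isClosed_of_isClosed isClosed_Icc isClosed_Iic
  obtain ⟨t, ⟨htI, hft⟩, hleast⟩ :=
    (isCompact_Icc.of_isClosed_subset hclosed inter_subset_left).exists_isLeast
      ⟨b, right_mem_Icc.2 hab, hb⟩
  refine ⟨t, htI, hft, fun s hs => not_le.1 fun hfs => hs.2.not_ge (hleast ⟨?_, hfs⟩)⟩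
  exact ⟨hs.1, hs.2.le.trans htI.2⟩

section Uniqueness

variable {P R E E₁ E₂ : ℝ → ℝ} {s₀ s t T : ℝ}

namespace IsProfile

lemma le_of_lt_crossing (h₁ : IsProfile P R T E₁) (h₂ : IsProfile P R T E₂)
    (hP : IsDownCrossing P s₀ T) (hs : s ∈ Ioo 0 s₀) : E₁ s ≤ E₂ s := by
  have hsT : s < T := hs.2.trans hP.lt_right
  refine (Real.sqrt_le_sqrt_iff (h₂.pos_of_lt hP hs).le).1 <| sub_nonneg.1 <|
    nonneg_of_deriv_pos_of_neg
      ((h₁.continuousOn_sqrt_sub h₂).mono (Icc_subset_Icc_right hsT.le))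
      (by simp only [h₁.zero, h₂.zero, sub_self, le_refl]) ?_ s ⟨hs.1.le, le_rfl⟩
  intro x hx hD
  have hx' : x ∈ Ioo 0 s₀ := ⟨hx.1, hx.2.trans_lt hs.2⟩
  have hE₂ := h₂.pos_of_lt hP hx'
  refine ⟨_, ?_, h₁.hasDerivAt_sqrt_sub h₂ (hP.Ioo_subset hx') (h₁.pos_of_lt hP hx') hE₂⟩
  have : P x / (2 * √(E₁ x)) < P x / (2 * √(E₂ x)) :=
    div_lt_div_of_pos_left (hP.pos x hx') (by positivity) (by linarith)
  linarith

lemma eq_right_of_pos_of_eq_left (h₁ : IsProfile P R T E₁) (h₂ : IsProfile P R T E₂)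
    (hR : ContinuousOn R (Icc 0 T)) (hs : 0 < s) (hst : s ≤ t) (htT : t < T)
    (hpos : ∀ x ∈ Icc s t, 0 < E₁ x) (heq : E₁ s = E₂ s) : E₁ t = E₂ t := by
  have hsub : Icc s t ⊆ Icc 0 T := Icc_subset_Icc hs.le htT.le
  have hmem : ∀ x ∈ Ico s t, x ∈ Ioo 0 T := fun x hx => ⟨hs.trans_le hx.1, hx.2.trans htT⟩
  obtain ⟨m, hm, hmin⟩ := isCompact_Icc.exists_isMinOn (nonempty_Icc.2 hst)
    (h₁.continuousOn.mono hsub)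
  obtain ⟨B, hB⟩ := isCompact_Icc.exists_bound_of_continuousOn (hR.mono hsub)
  refine (sub_eq_zero.1 <| eq_zero_of_abs_deriv_le_mul_abs_self_of_eq_zero_right
    (f := fun x => E₂ x - E₁ x) (K := B * (1 / √(E₁ m)))
    ((h₂.continuousOn.mono hsub).sub (h₁.continuousOn.mono hsub))
    (fun x hx => ((h₂.hasDerivAt x (hmem x hx)).sub
      (h₁.hasDerivAt x (hmem x hx))).hasDerivWithinAt)
    (sub_eq_zero.2 heq.symm) ?_ t (right_mem_Icc.2 hst)).symm
  intro x hx
  have hx' : x ∈ Icc s t := Ico_subset_Icc_self hx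
  rw [add_sub_add_left_eq_sub, ← mul_sub, norm_mul, mul_assoc]
  exact mul_le_mul (hB x hx') (abs_sqrt_sub_sqrt_le (hpos m hm) (hmin hx')) (abs_nonneg _)
    ((norm_nonneg _).trans (hB x hx'))

lemma eqOn_of_pos (h₁ : IsProfile P R T E₁) (h₂ : IsProfile P R T E₂)
    (hP : IsDownCrossing P s₀ T) (hR : ContinuousOn R (Icc 0 T)) (ht : 0 < t) (htT : t ≤ T)
    (hpos : ∀ s ∈ Ioo 0 t, 0 < E₁ s) : EqOn E₁ E₂ (Icc 0 t) := by
  have hsub : Icc 0 t ⊆ Icc 0 T := Icc_subset_Icc_right htT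
  refine EqOn.of_subset_closure (s := Ioo 0 t) ?_ (h₁.continuousOn.mono hsub)
    (h₂.continuousOn.mono hsub) Ioo_subset_Icc_self (closure_Ioo ht.ne).ge
  intro s hs
  obtain ⟨a, ha0, ha⟩ := exists_between (lt_min hs.1 hP.zero_lt)
  have ha' : a ∈ Ioo 0 s₀ := ⟨ha0, ha.trans_le (min_le_right _ _)⟩
  exact h₁.eq_right_of_pos_of_eq_left h₂ hR ha0 (ha.trans_le (min_le_left _ _)).le
    (hs.2.trans_le htT) (fun x hx => hpos x ⟨ha0.trans_le hx.1, hx.2.trans_lt hs.2⟩)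
    (le_antisymm (h₁.le_of_lt_crossing h₂ hP ha') (h₂.le_of_lt_crossing h₁ hP ha'))

lemma nonpos_of_nonpos_of_le (hE : IsProfile P R T E) (hP : IsDownCrossing P s₀ T)
    (hR : ContinuousAt R s₀) (hs : 0 < s) (hst : s ≤ t) (htT : t ≤ T) (hEs : E s ≤ 0) :
    E t ≤ 0 := by
  rcases hst.eq_or_lt with rfl | hlt
  · exact hEs
  · exact (hE.neg_of_nonpos_of_lt hP hR hs hlt htT hEs).le

lemma exists_first_nonpos (hE : IsProfile P R T E) (hP : IsDownCrossing P s₀ T)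
    (hs : s ∈ Ioc 0 T) (hEs : E s ≤ 0) :
    ∃ t ∈ Icc s₀ s, E t ≤ 0 ∧ ∀ x ∈ Ioo 0 t, 0 < E x := by
  have hs₀ : s₀ ≤ s := not_lt.1 fun h => hEs.not_gt (hE.pos_of_lt hP ⟨hs.1, h⟩)
  obtain ⟨t, ht, hEt, hpos⟩ := TrafficTW.exists_first_nonpos hs₀
    (hE.continuousOn.mono (Icc_subset_Icc hP.zero_lt.le hs.2)) hEs
  refine ⟨t, ht, hEt, fun x hx => ?_⟩
  rcases lt_or_ge x s₀ with hlt | hge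
  · exact hE.pos_of_lt hP ⟨hx.1, hlt⟩
  · exact hpos x ⟨hge, hx.2⟩

theorem eqOn (h₁ : IsProfile P R T E₁) (h₂ : IsProfile P R T E₂) (hP : IsDownCrossing P s₀ T)
    (hR : ContinuousOn R (Icc 0 T)) : EqOn E₁ E₂ (Icc 0 T) := by
  have hT : 0 < T := hP.zero_lt.trans hP.lt_right
  by_cases hall : ∀ s ∈ Ioo 0 T, 0 < E₁ s
  · exact h₁.eqOn_of_pos h₂ hP hR hT le_rfl hall
  push Not at hall
  obtain ⟨p, hp, hEp⟩ := hall
  obtain ⟨t, ht, hEt, hpos⟩ := h₁.exists_first_nonpos hP (Ioo_subset_Ioc_self hp) hEp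
  have ht0 : 0 < t := hP.zero_lt.trans_le ht.1
  have htT : t < T := ht.2.trans_lt hp.2
  have heq := h₁.eqOn_of_pos h₂ hP hR ht0 htT.le hpos
  have hEt' : E₁ t = E₂ t := heq (right_mem_Icc.2 ht0.le)
  have hR₀ : ContinuousAt R s₀ := hR.continuousAt (Icc_mem_nhds hP.zero_lt hP.lt_right)
  have hsub : Icc t T ⊆ Icc 0 T := Icc_subset_Icc_left ht0.le
  have hconst := constant_of_has_deriv_right_zero (f := fun x => E₁ x - E₂ x)
    ((h₁.continuousOn.mono hsub).sub (h₂.continuousOn.mono hsub)) fun x hx => by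
      have hx' : x ∈ Ioo 0 T := ⟨ht0.trans_le hx.1, hx.2⟩
      refine (((h₁.hasDerivAt x hx').sub (h₂.hasDerivAt x hx')).congr_deriv ?_).hasDerivWithinAt
      rw [Real.sqrt_eq_zero_of_nonpos (h₁.nonpos_of_nonpos_of_le hP hR₀ ht0 hx.1 hx.2.le hEt),
        Real.sqrt_eq_zero_of_nonpos
          (h₂.nonpos_of_nonpos_of_le hP hR₀ ht0 hx.1 hx.2.le (hEt' ▸ hEt)), sub_self]
  intro s hs
  rcases le_total s t with hst | hts
  · exact heq ⟨hs.1, hst⟩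
  · exact sub_eq_zero.1 ((hconst s ⟨hts, hs.2⟩).trans (sub_eq_zero.2 hEt'))

end IsProfile

end Uniqueness

section Compactness

variable {ι : Type*} {l : Filter ι} {E : ι → ℝ → ℝ} {F : ℝ → ℝ} {Φ : ℝ → ℝ → ℝ} {ε : ι → ℝ}
  {a b L s : ℝ}

lemma exists_ball_eventually_abs_deriv_sub_le (hs : s ∈ Ioo a b)
    (hdiff : ∀ᶠ i in l, ∀ x ∈ Ioo a b, DifferentiableAt ℝ (E i) x)
    (hL : ∀ᶠ i in l, ∀ x ∈ Ioo a b, |deriv (E i) x| ≤ L)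
    (happrox : ∀ᶠ i in l, ∀ x ∈ Ioo a b, |deriv (E i) x - Φ x (E i x)| ≤ ε i)
    (hlim : Tendsto (fun i => E i s) l (𝓝 (F s)))
    (hΦ : ContinuousAt (Function.uncurry Φ) (s, F s)) {η : ℝ} (hη : 0 < η) :
    ∃ δ > 0, Metric.ball s δ ⊆ Ioo a b ∧
      ∀ᶠ i in l, ∀ y ∈ Metric.ball s δ, |deriv (E i) y - Φ s (F s)| ≤ ε i + η := by
  obtain ⟨r, hr, hΦr⟩ := Metric.continuousAt_iff.1 hΦ η hη
  obtain ⟨ρ, hρ, hball⟩ := Metric.isOpen_iff.1 isOpen_Ioo s hs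
  have hclose : ∀ᶠ i in l, |E i s - F s| < r / 2 := by
    simpa only [Real.dist_eq] using Metric.tendsto_nhds.1 hlim _ (half_pos hr)
  have hL1 : 0 < |L| + 1 := by positivity
  refine ⟨min ρ (r / (2 * (|L| + 1))), lt_min hρ (by positivity),
    (Metric.ball_subset_ball (min_le_left _ _)).trans hball, ?_⟩
  filter_upwards [hdiff, hL, happrox, hclose] with i hi hLi happ hclosei y hy
  rw [Metric.mem_ball, Real.dist_eq, lt_min_iff, lt_div_iff₀ (by positivity)] at hy
  have hyI : y ∈ Ioo a b := hball (by rw [Metric.mem_ball, Real.dist_eq]; exact hy.1)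
  have hlip : |E i y - E i s| ≤ L * |y - s| :=
    (convex_Ioo a b).norm_image_sub_le_of_norm_deriv_le hi hLi hs hyI
  have hy₁ : |y - s| < r := by nlinarith [abs_nonneg L, abs_nonneg (y - s)]
  have hy₂ : |E i y - F s| < r := by
    have := mul_le_mul_of_nonneg_right (le_abs_self L) (abs_nonneg (y - s))
    linarith [abs_sub_le (E i y) (E i s) (F s), abs_nonneg (y - s)]
  have hΦy : |Φ y (E i y) - Φ s (F s)| < η :=
    hΦr (x := (y, E i y)) (by rw [Prod.dist_eq]; exact max_lt hy₁ hy₂)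
  exact (abs_sub_le _ (Φ y (E i y)) _).trans (add_le_add (happ y hyI) hΦy.le)

lemma hasDerivAt_of_tendsto_of_approx [l.NeBot] (hs : s ∈ Ioo a b)
    (hdiff : ∀ᶠ i in l, ∀ x ∈ Ioo a b, DifferentiableAt ℝ (E i) x)
    (hL : ∀ᶠ i in l, ∀ x ∈ Ioo a b, |deriv (E i) x| ≤ L)
    (happrox : ∀ᶠ i in l, ∀ x ∈ Ioo a b, |deriv (E i) x - Φ x (E i x)| ≤ ε i)
    (hε : Tendsto ε l (𝓝 0)) (hlim : ∀ x ∈ Ioo a b, Tendsto (fun i => E i x) l (𝓝 (F x)))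
    (hΦ : ContinuousAt (Function.uncurry Φ) (s, F s)) : HasDerivAt F (Φ s (F s)) s := by
  rw [hasDerivAt_iff_isLittleO, Asymptotics.isLittleO_iff]
  intro η hη
  obtain ⟨δ, hδ, hsub, hball⟩ :=
    exists_ball_eventually_abs_deriv_sub_le hs hdiff hL happrox (hlim s hs) hΦ hη
  filter_upwards [Metric.ball_mem_nhds s hδ] with x hx
  have hslope : ∀ᶠ i in l, |E i x - E i s - (x - s) * Φ s (F s)| ≤ (ε i + η) * |x - s| := by
    filter_upwards [hdiff, hball] with i hi hbi
    have hderiv : ∀ y ∈ Metric.ball s δ, HasDerivWithinAt (fun y => E i y - y * Φ s (F s))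
        (deriv (E i) y - Φ s (F s)) (Metric.ball s δ) y := fun y hy =>
      ((hi y (hsub hy)).hasDerivAt.sub
        (hasDerivAt_mul_const (Φ s (F s)))).hasDerivWithinAt
    have := (convex_ball s _).norm_image_sub_le_of_norm_hasDerivWithin_le hderiv hbi
      (Metric.mem_ball_self hδ) hx
    simp only [Real.norm_eq_abs] at this
    convert this using 2
    ring
  have hlimit := le_of_tendsto_of_tendsto
    (((hlim x (hsub hx)).sub (hlim s hs)).sub_const _).abs
    ((hε.add_const η).mul_const |x - s|) hslope
  rwa [zero_add] at hlimit

lemma sqrt_le_of_le_add_sqrt_mul {A B T e : ℝ} (hA : 0 ≤ A) (hB : 0 ≤ B) (hT : 0 ≤ T) (he : 0 ≤ e)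
    (h : e ≤ (A + B * √e) * T) : √e ≤ (A + B) * T + 1 := by
  have hsq := Real.mul_self_sqrt he
  by_contra! hlt
  have hAB : 0 ≤ (A + B) * T := by positivity
  have h1 : 1 < √e := by linarith
  have : (A + B * √e) * T ≤ (A + B) * T * √e := by
    nlinarith [mul_le_mul_of_nonneg_left h1.le (mul_nonneg hA hT)]
  nlinarith

lemma abs_deriv_le_of_sqrt_growth {E : ℝ → ℝ} {A B T : ℝ} (hA : 0 ≤ A) (hB : 0 ≤ B)
    (hc : ContinuousOn E (Icc 0 T)) (h0 : E 0 = 0)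
    (hd : ∀ s ∈ Ioo 0 T, DifferentiableAt ℝ E s)
    (hgrowth : ∀ s ∈ Ioo 0 T, |deriv E s| ≤ A + B * √|E s|) (hs : s ∈ Ioo 0 T) :
    |deriv E s| ≤ A + B * ((A + B) * T + 1) := by
  have hT : 0 < T := hs.1.trans hs.2
  obtain ⟨m, hm, hmax⟩ := isCompact_Icc.exists_isMaxOn (nonempty_Icc.2 hT.le) hc.abs
  have hderiv : ∀ x ∈ Ioo 0 T, |deriv E x| ≤ A + B * √|E m| := fun x hx =>
    (hgrowth x hx).trans <| add_le_add_right (mul_le_mul_of_nonneg_left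
      (Real.sqrt_le_sqrt (hmax (Ioo_subset_Icc_self hx))) hB) A
  refine (hderiv s hs).trans (add_le_add_right (mul_le_mul_of_nonneg_left ?_ hB) A)
  refine sqrt_le_of_le_add_sqrt_mul hA hB hT.le (abs_nonneg _) ?_
  rcases hm.1.eq_or_lt with rfl | hm0
  · rw [h0, abs_zero]; positivity
  obtain ⟨x, hx, hslope⟩ := exists_deriv_eq_slope E hm0 (hc.mono (Icc_subset_Icc_right hm.2))
    fun y hy => (hd y ⟨hy.1, hy.2.trans_le hm.2⟩).differentiableWithinAt
  have hxT : x ∈ Ioo 0 T := ⟨hx.1, hx.2.trans_le hm.2⟩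
  rw [h0, sub_zero, sub_zero, eq_div_iff hm0.ne'] at hslope
  calc |E m| = |deriv E x| * m := by rw [← hslope, abs_mul, abs_of_pos hm0]
    _ ≤ (A + B * √|E m|) * T := mul_le_mul (hderiv x hxT) hm.2 hm0.le (by positivity)

end Compactness

/-- An approximate solution, with error `ε`, of the problem of which `IsProfile P R T` is the exact
version. Both the regularized problem used to construct profiles and a small perturbation of `R`
produce errors of this form. -/
structure IsApproxProfile (P R : ℝ → ℝ) (T ε : ℝ) (E : ℝ → ℝ) : Prop where
  continuousOn : ContinuousOn E (Icc 0 T)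
  zero : E 0 = 0
  differentiableAt : ∀ s ∈ Ioo 0 T, DifferentiableAt ℝ E s
  approx : ∀ s ∈ Ioo 0 T, |deriv E s - (P s + R s * √(E s))| ≤ ε * (1 + √|E s|)

section ApproxProfile

variable {P R E : ℝ → ℝ} {A B ε s T : ℝ}

namespace IsApproxProfile

lemma abs_deriv_le (hE : IsApproxProfile P R T ε E) (hA : ∀ s ∈ Ioo 0 T, |P s| ≤ A)
    (hB : ∀ s ∈ Ioo 0 T, |R s| ≤ B) (hε : ε ≤ 1) (hs : s ∈ Ioo 0 T) :
    |deriv E s| ≤ A + 1 + (B + 1) * ((A + 1 + (B + 1)) * T + 1) := by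
  have hA0 : 0 ≤ A := (abs_nonneg _).trans (hA s hs)
  have hB0 : 0 ≤ B := (abs_nonneg _).trans (hB s hs)
  refine abs_deriv_le_of_sqrt_growth (by positivity) (by positivity) hE.continuousOn hE.zero
    hE.differentiableAt (fun x hx => ?_) hs
  have happrox : |deriv E x - (P x + R x * √(E x))| ≤ 1 + √|E x| :=
    (hE.approx x hx).trans (mul_le_of_le_one_left (by positivity) hε)
  have hR : |R x * √(E x)| ≤ B * √|E x| := by
    rw [abs_mul, abs_of_nonneg (Real.sqrt_nonneg _)]
    exact mul_le_mul (hB x hx) (Real.sqrt_le_sqrt (le_abs_self _)) (Real.sqrt_nonneg _) hB0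
  linarith [hA x hx, abs_add_le (P x) (R x * √(E x)),
    abs_sub_abs_le_abs_sub (deriv E x) (P x + R x * √(E x))]

lemma lipschitzOnWith (hE : IsApproxProfile P R T ε E) {L : ℝ} (hT : 0 < T) (hL0 : 0 ≤ L)
    (hL : ∀ x ∈ Ioo 0 T, |deriv E x| ≤ L) : LipschitzOnWith L.toNNReal E (Icc 0 T) := by
  rw [← closure_Ioo hT.ne]
  refine LipschitzOnWith.closure (by rw [closure_Ioo hT.ne]; exact hE.continuousOn) ?_
  refine (convex_Ioo 0 T).lipschitzOnWith_of_nnnorm_deriv_le (𝕜 := ℝ) hE.differentiableAt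
    fun x hx => ?_
  rw [← NNReal.coe_le_coe, coe_nnnorm, Real.coe_toNNReal _ hL0]
  exact hL x hx

end IsApproxProfile

lemma exists_tendsto_of_lipschitzOnWith {ι : Type*} {U : Ultrafilter ι} {E : ι → ℝ → ℝ} {L : NNReal}
    (hT : 0 ≤ T) (hE : ∀ᶠ i in U, LipschitzOnWith L (E i) (Icc 0 T))
    (h0 : ∀ᶠ i in U, E i 0 = 0) :
    ∃ F, LipschitzOnWith L F (Icc 0 T) ∧ ∀ s ∈ Icc 0 T, Tendsto (fun i => E i s) U (𝓝 (F s)) := by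
  have hbound : ∀ s ∈ Icc 0 T, ∀ᶠ i in U, E i s ∈ Metric.closedBall 0 (L * T) := by
    intro s hs
    filter_upwards [hE, h0] with i hi hi0
    have := hi.dist_le_mul s hs 0 (left_mem_Icc.2 hT)
    rw [hi0, dist_zero_right s, Real.norm_of_nonneg hs.1] at this
    exact this.trans (mul_le_mul_of_nonneg_left hs.2 L.2)
  have hlim : ∀ s ∈ Icc 0 T, ∃ y, Tendsto (fun i => E i s) U (𝓝 y) := fun s hs =>
    let ⟨y, _, hy⟩ := (isCompact_closedBall (0 : ℝ) (L * T)).ultrafilter_le_nhds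
      (U.map fun i => E i s) (le_principal_iff.2 (hbound s hs))
    ⟨y, hy⟩
  choose! F hF using hlim
  refine ⟨F, LipschitzOnWith.of_dist_le_mul fun s hs t ht => ?_, hF⟩
  exact le_of_tendsto ((hF s hs).dist (hF t ht))
    (hE.mono fun i hi => hi.dist_le_mul s hs t ht)

theorem exists_isProfile_tendsto {ι : Type*} {U : Ultrafilter ι} {E : ι → ℝ → ℝ} {ε : ι → ℝ}
    (hT : 0 < T) (hP : ContinuousOn P (Icc 0 T)) (hR : ContinuousOn R (Icc 0 T))
    (hE : ∀ᶠ i in U, IsApproxProfile P R T (ε i) (E i)) (hε : Tendsto ε U (𝓝 0)) :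
    ∃ F, IsProfile P R T F ∧ ∀ s ∈ Icc 0 T, Tendsto (fun i => E i s) U (𝓝 (F s)) := by
  obtain ⟨A, hA⟩ := isCompact_Icc.exists_bound_of_continuousOn hP
  obtain ⟨B, hB⟩ := isCompact_Icc.exists_bound_of_continuousOn hR
  have hA0 : 0 ≤ A := (norm_nonneg _).trans (hA 0 (left_mem_Icc.2 hT.le))
  have hB0 : 0 ≤ B := (norm_nonneg _).trans (hB 0 (left_mem_Icc.2 hT.le))
  obtain ⟨L, hL0, hL⟩ : ∃ L, 0 ≤ L ∧ ∀ᶠ i in U, ∀ s ∈ Ioo 0 T, |deriv (E i) s| ≤ L := by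
    refine ⟨A + 1 + (B + 1) * ((A + 1 + (B + 1)) * T + 1), by positivity, ?_⟩
    filter_upwards [hE, hε.eventually (ge_mem_nhds one_pos)] with i hi hεi s hs
    exact hi.abs_deriv_le (fun s hs => hA s (Ioo_subset_Icc_self hs))
      (fun s hs => hB s (Ioo_subset_Icc_self hs)) hεi hs
  have hlip : ∀ᶠ i in U, LipschitzOnWith L.toNNReal (E i) (Icc 0 T) := by
    filter_upwards [hE, hL] with i hi hLi using hi.lipschitzOnWith hT hL0 hLi
  obtain ⟨F, hF, hlim⟩ :=
    exists_tendsto_of_lipschitzOnWith hT.le hlip (hE.mono fun i hi => hi.zero)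
  have hFc : ContinuousOn F (Icc 0 T) := hF.continuousOn
  refine ⟨F, ⟨hFc, ?_, fun s hs => ?_⟩, hlim⟩
  · exact tendsto_nhds_unique (hlim 0 (left_mem_Icc.2 hT.le))
      (tendsto_const_nhds.congr' (hE.mono fun i hi => hi.zero.symm))
  have hbound : ∀ᶠ i in U, ∀ x ∈ Ioo 0 T, |E i x| ≤ L * T := by
    filter_upwards [hE, hlip] with i hi hlipi x hx
    have := hlipi.dist_le_mul x (Ioo_subset_Icc_self hx) 0 (left_mem_Icc.2 hT.le)
    rw [hi.zero, dist_zero_right, dist_zero_right, Real.norm_of_nonneg hx.1.le,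
      Real.coe_toNNReal _ hL0] at this
    exact this.trans (mul_le_mul_of_nonneg_left hx.2.le hL0)
  refine hasDerivAt_of_tendsto_of_approx (l := (U : Filter ι)) (E := E)
    (Φ := fun s e => P s + R s * √e) (ε := fun i => |ε i| * (1 + √(L * T))) hs
    (hE.mono fun i hi => hi.differentiableAt) hL ?_ ?_
    (fun x hx => hlim x (Ioo_subset_Icc_self hx)) ?_
  · filter_upwards [hE, hbound] with i hi hbi x hx
    refine (hi.approx x hx).trans (mul_le_mul (le_abs_self _) ?_ (by positivity) (abs_nonneg _))
    exact add_le_add_right (Real.sqrt_le_sqrt (hbi x hx)) 1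
  · simpa only [abs_zero, zero_mul] using hε.abs.mul_const (1 + √(L * T))
  · have hnhds := Icc_mem_nhds hs.1 hs.2
    exact ((hP.continuousAt hnhds).comp continuousAt_fst).add
      (((hR.continuousAt hnhds).comp continuousAt_fst).mul continuousAt_snd.sqrt)

end ApproxProfile

section Existence

variable {P R k E : ℝ → ℝ} {A B e M s₀ s t δ T : ℝ}

lemma abs_sqrt_max_add_sub_sqrt_le (x : ℝ) (hδ : 0 ≤ δ) : |√(max x 0 + δ) - √x| ≤ √δ := by
  have hx : √x = √(max x 0) := by
    rcases le_total x 0 with h | h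
    · rw [max_eq_right h, Real.sqrt_zero, Real.sqrt_eq_zero_of_nonpos h]
    · rw [max_eq_left h]
  have hmono : √(max x 0) ≤ √(max x 0 + δ) := Real.sqrt_le_sqrt (by linarith)
  rw [hx, abs_of_nonneg (sub_nonneg.2 hmono), sub_le_iff_le_add']
  refine (Real.sqrt_le_left (by positivity)).2 ?_
  nlinarith [Real.sq_sqrt (le_max_right x 0), Real.sq_sqrt hδ,
    mul_nonneg (Real.sqrt_nonneg (max x 0)) (Real.sqrt_nonneg δ)]

lemma abs_sqrt_max_add_sub_le (x y : ℝ) (hδ : 0 < δ) :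
    |√(max x 0 + δ) - √(max y 0 + δ)| ≤ 1 / √δ * |x - y| := by
  refine (abs_sqrt_sub_sqrt_le hδ (by linarith [le_max_right y 0])).trans ?_
  rw [add_sub_add_right_eq_sub]
  exact mul_le_mul_of_nonneg_left (abs_max_sub_max_le_abs x y 0) (by positivity)

lemma exists_regularized (hT : 0 < T) (hP : ContinuousOn P (Icc 0 T))
    (hR : ContinuousOn R (Icc 0 T)) (hA : ∀ s ∈ Icc 0 T, |P s| ≤ A)
    (hB : ∀ s ∈ Icc 0 T, |R s| ≤ B) (hδ : 0 < δ) (hδ1 : δ ≤ 1) :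
    ∃ E : ℝ → ℝ, E 0 = 0 ∧ ContinuousOn E (Icc 0 T) ∧
      ∀ s ∈ Ioo 0 T, HasDerivAt E (P s + R s * √(max (E s) 0 + δ)) s := by
  have hA0 : 0 ≤ A := (abs_nonneg _).trans (hA 0 (left_mem_Icc.2 hT.le))
  have hB0 : 0 ≤ B := (abs_nonneg _).trans (hB 0 (left_mem_Icc.2 hT.le))
  obtain ⟨q, hq1, hq⟩ : ∃ q : ℝ, 1 ≤ q ∧ (A + 2 * B) * T ≤ q :=
    ⟨(A + 2 * B) * T + 1, le_add_of_nonneg_left (by positivity), by linarith⟩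
  have hPL : IsPicardLindelof (fun t x => P t + R t * √(max x 0 + δ))
      (tmin := 0) (tmax := T) ⟨0, left_mem_Icc.2 hT.le⟩ (0 : ℝ)
      (NNReal.mk (q ^ 2) (by positivity)) 0 (NNReal.mk ((A + 2 * B) * q) (by positivity))
      (NNReal.mk (B * (1 / √δ)) (by positivity)) := by
    refine ⟨fun t ht => LipschitzOnWith.of_dist_le_mul fun x _ y _ => ?_,
      fun x _ => hP.add (hR.mul continuousOn_const), fun t ht x hx => ?_, ?_⟩
    · rw [Real.dist_eq, Real.dist_eq, add_sub_add_left_eq_sub, ← mul_sub, abs_mul, NNReal.coe_mk,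
        mul_assoc]
      exact mul_le_mul (hB t ht) (abs_sqrt_max_add_sub_le x y hδ) (abs_nonneg _) hB0
    · rw [Metric.mem_closedBall, Real.dist_eq, sub_zero, NNReal.coe_mk] at hx
      have hsqrt : √(max x 0 + δ) ≤ 2 * q := by
        rw [Real.sqrt_le_left (by positivity)]
        nlinarith [max_le ((le_abs_self x).trans hx) (by positivity)]
      calc |P t + R t * √(max x 0 + δ)| ≤ |P t| + |R t| * √(max x 0 + δ) := by
            refine (abs_add_le _ _).trans_eq ?_
            rw [abs_mul, abs_of_nonneg (Real.sqrt_nonneg _)]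
        _ ≤ A * q + B * (2 * q) := add_le_add ((hA t ht).trans (le_mul_of_one_le_right hA0 hq1))
            (mul_le_mul (hB t ht) hsqrt (Real.sqrt_nonneg _) hB0)
        _ = (A + 2 * B) * q := by ring
    · simp only [NNReal.coe_mk, NNReal.coe_zero, sub_zero, sub_self, max_eq_left hT.le]
      nlinarith
  obtain ⟨E, hE0, hE⟩ := hPL.exists_eq_forall_mem_Icc_hasDerivWithinAt₀
  exact ⟨E, hE0, fun s hs => (hE s hs).continuousWithinAt, fun s hs =>
    (hE s (Ioo_subset_Icc_self hs)).hasDerivAt (Icc_mem_nhds hs.1 hs.2)⟩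

theorem exists_isProfile (hT : 0 < T) (hP : ContinuousOn P (Icc 0 T))
    (hR : ContinuousOn R (Icc 0 T)) : ∃ E, IsProfile P R T E := by
  obtain ⟨A, hA⟩ := isCompact_Icc.exists_bound_of_continuousOn hP
  obtain ⟨B, hB⟩ := isCompact_Icc.exists_bound_of_continuousOn hR
  have hB0 : 0 ≤ B := (norm_nonneg _).trans (hB 0 (left_mem_Icc.2 hT.le))
  choose! E hE0 hEc hE using
    fun δ (hδ : δ ∈ Ioc (0 : ℝ) 1) => exists_regularized hT hP hR hA hB hδ.1 hδ.2
  have happrox : ∀ δ ∈ Ioc (0 : ℝ) 1, IsApproxProfile P R T (B * √δ) (E δ) := by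
    refine fun δ hδ => ⟨hEc δ hδ, hE0 δ hδ, fun s hs => (hE δ hδ s hs).differentiableAt,
      fun s hs => ?_⟩
    rw [(hE δ hδ s hs).deriv, add_sub_add_left_eq_sub, ← mul_sub, abs_mul]
    exact (mul_le_mul (hB s (Ioo_subset_Icc_self hs)) (abs_sqrt_max_add_sub_sqrt_le _ hδ.1.le)
      (abs_nonneg _) hB0).trans (le_mul_of_one_le_right (by positivity)
        (le_add_of_nonneg_right (Real.sqrt_nonneg _)))
  have hlim : Tendsto (fun δ : ℝ => B * √δ) (𝓝[>] 0) (𝓝 0) := by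
    have : Continuous fun δ : ℝ => B * √δ := by fun_prop
    simpa only [Real.sqrt_zero, mul_zero] using (this.tendsto 0).mono_left nhdsWithin_le_nhds
  have hU : (Ultrafilter.of (𝓝[>] (0 : ℝ)) : Filter ℝ) ≤ 𝓝[>] 0 := Ultrafilter.of_le _
  obtain ⟨F, hF, -⟩ := exists_isProfile_tendsto hT hP hR
    (hU (mem_of_superset (Ioc_mem_nhdsGT one_pos) happrox)) (hlim.mono_left hU)
  exact ⟨F, hF⟩

lemma IsProfile.isApproxProfile_of_add {ν K : ℝ} (hE : IsProfile P (fun s => R s + ν * k s) T E)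
    (hK : ∀ s ∈ Icc 0 T, |k s| ≤ K) : IsApproxProfile P R T (|ν| * K) E where
  continuousOn := hE.continuousOn
  zero := hE.zero
  differentiableAt s hs := (hE.hasDerivAt s hs).differentiableAt
  approx s hs := by
    have hk := hK s (Ioo_subset_Icc_self hs)
    have hK0 : 0 ≤ K := (abs_nonneg _).trans hk
    rw [(hE.hasDerivAt s hs).deriv, add_sub_add_left_eq_sub, ← sub_mul, add_sub_cancel_left,
      abs_mul, abs_mul, abs_of_nonneg (Real.sqrt_nonneg _)]
    refine mul_le_mul (mul_le_mul_of_nonneg_left hk (abs_nonneg ν)) ?_ (Real.sqrt_nonneg _)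
      (by positivity)
    linarith [Real.sqrt_le_sqrt (le_abs_self (E s))]

theorem IsProfile.tendsto_endpoint {E : ℝ → ℝ → ℝ} (hP : IsDownCrossing P s₀ T)
    (hR : ContinuousOn R (Icc 0 T)) (hk : ContinuousOn k (Icc 0 T))
    (hE : ∀ μ, IsProfile P (fun s => R s + μ * k s) T (E μ)) (μ : ℝ) :
    Tendsto (fun ν => E ν T) (𝓝 μ) (𝓝 (E μ T)) := by
  have hT : 0 < T := hP.zero_lt.trans hP.lt_right
  obtain ⟨K, hK⟩ := isCompact_Icc.exists_bound_of_continuousOn hk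
  have hRμ : ContinuousOn (fun s => R s + μ * k s) (Icc 0 T) := hR.add (hk.const_mul μ)
  have hshift : ∀ ν, IsProfile P (fun s => (R s + μ * k s) + (ν - μ) * k s) T (E ν) := fun ν => by
    convert hE ν using 2
    ring
  have hlim : Tendsto (fun ν => |ν - μ| * K) (𝓝 μ) (𝓝 0) := by
    have : Continuous fun ν : ℝ => |ν - μ| * K := by fun_prop
    simpa only [sub_self, abs_zero, zero_mul] using this.tendsto μ
  refine (tendsto_iff_ultrafilter _ _ _).2 fun U hU => ?_
  obtain ⟨F, hF, hEF⟩ := exists_isProfile_tendsto hT hP.continuousOn hRμ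
    (Eventually.of_forall fun ν => (hshift ν).isApproxProfile_of_add hK) (hlim.mono_left hU)
  have hTmem : T ∈ Icc 0 T := right_mem_Icc.2 hT.le
  rw [← hF.eqOn (hE μ) hP hRμ hTmem]
  exact hEF T hTmem

namespace IsProfile

lemma le_right_of_barrier_le (hE : IsProfile P R T E) (hM : ∀ s ∈ Ioo 0 T, |P s| ≤ M) (he : 0 < e)
    (hR : ∀ s ∈ Ioo 0 T, (M + 1) / √e ≤ R s) (hs : 0 < s) (hst : s ≤ T) (hEs : e ≤ E s) :
    e ≤ E T := by
  refine sub_nonneg.1 <| nonneg_of_deriv_pos_of_eq_zero (f := fun x => E x - e)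
    ((hE.continuousOn.mono (Icc_subset_Icc_left hs.le)).sub continuousOn_const)
    (sub_nonneg.2 hEs)
    (fun x hx => (hE.hasDerivAt x ⟨hs.trans_le hx.1, hx.2⟩).sub_const e) ?_ T ⟨hst, le_rfl⟩
  intro x hx hEx
  have hx' : x ∈ Ioo 0 T := ⟨hs.trans_le hx.1, hx.2⟩
  have hdrift := (div_le_iff₀ (Real.sqrt_pos.2 he)).1 (hR x hx')
  rw [sub_eq_zero.1 hEx]
  linarith [neg_le_of_abs_le (hM x hx')]

lemma le_of_le_neg_barrier (hE : IsProfile P R T E) (hM : ∀ s ∈ Ioo 0 T, |P s| ≤ M) (he : 0 < e)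
    (hM0 : 0 ≤ M) (hR : ∀ s ∈ Ioo 0 T, R s ≤ -((M + 1) / √e)) (hs : s ∈ Ioo 0 T) : E s ≤ e := by
  refine sub_nonneg.1 <| nonneg_of_deriv_pos_of_neg (f := fun x => e - E x)
    (continuousOn_const.sub (hE.continuousOn.mono (Icc_subset_Icc_right hs.2.le)))
    (by rw [hE.zero, sub_zero]; exact he.le) ?_ s ⟨hs.1.le, le_rfl⟩
  intro x hx hEx
  have hx' : x ∈ Ioo 0 T := ⟨hx.1, hx.2.trans_lt hs.2⟩
  refine ⟨_, ?_, (hE.hasDerivAt x hx').const_sub e⟩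
  have hsqrt : √e ≤ √(E x) := Real.sqrt_le_sqrt (sub_neg.1 hEx).le
  have hdrift : (M + 1) ≤ -R x * √(E x) :=
    ((div_le_iff₀ (Real.sqrt_pos.2 he)).1 (le_neg_of_le_neg (hR x hx'))).trans
      (mul_le_mul_of_nonneg_left hsqrt (le_trans (by positivity) (le_neg_of_le_neg (hR x hx'))))
  linarith [le_of_abs_le (hM x hx')]

lemma sqrt_lt_mul_self (hE : IsProfile P R T E) {g : ℝ} (ht : t < T) (hg : 0 ≤ g) (hM : 0 ≤ M)
    (hP : ∀ s ∈ Ioc 0 t, P s ≤ g * s) (hR : ∀ s ∈ Ioc 0 t, R s ≤ M) (hs : s ∈ Ioc 0 t) :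
    √(E s) < (g + M + 1) * s := by
  refine sub_pos.1 <| pos_of_deriv_pos_of_nonpos (f := fun x => (g + M + 1) * x - √(E x))
    ((by fun_prop : Continuous fun x : ℝ => (g + M + 1) * x).continuousOn.sub
      (hE.continuousOn.mono (Icc_subset_Icc_right ht.le)).sqrt)
    (by simp only [hE.zero, mul_zero, Real.sqrt_zero, sub_zero, le_refl]) ?_ s hs
  intro x hx hle
  have hx0 : 0 < (g + M + 1) * x := by have := hx.1; positivity
  have hroot : (g + M + 1) * x ≤ √(E x) := sub_nonpos.1 hle
  have hroot0 : 0 < √(E x) := hx0.trans_le hroot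
  refine ⟨_, ?_, ((hasDerivAt_id x).const_mul (g + M + 1)).sub
    (hE.hasDerivAt_sqrt ⟨hx.1, hx.2.trans_lt ht⟩ (Real.sqrt_pos.1 hroot0))⟩
  have hdrift : P x / (2 * √(E x)) < g + 1 / 2 := by
    rw [div_lt_iff₀ (by positivity)]
    nlinarith [hP x hx, hx.1, mul_nonneg hM hx.1.le, mul_nonneg hg hx.1.le]
  linarith [hR x hx]

end IsProfile

theorem exists_pos_of_le (hP : IsDownCrossing P s₀ T) :
    ∃ N, ∀ R E, IsProfile P R T E → (∀ s ∈ Ioo 0 T, N ≤ R s) → 0 < E T := by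
  obtain ⟨M, hM⟩ := isCompact_Icc.exists_bound_of_continuousOn hP.continuousOn
  have hM0 : 0 ≤ M := (norm_nonneg _).trans
    (hM 0 (left_mem_Icc.2 (hP.zero_lt.trans hP.lt_right).le))
  obtain ⟨E₀, hE₀⟩ := exists_isProfile (R := fun _ => 0) (hP.zero_lt.trans hP.lt_right)
    hP.continuousOn continuousOn_const
  have hhalf : s₀ / 2 ∈ Ioo 0 s₀ := ⟨half_pos hP.zero_lt, half_lt_self hP.zero_lt⟩
  have he : 0 < E₀ (s₀ / 2) := hE₀.pos_of_lt hP hhalf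
  refine ⟨(M + 1) / √(E₀ (s₀ / 2)), fun R E hE hR => ?_⟩
  have hlt : √(E₀ (s₀ / 2)) < √(E (s₀ / 2)) := hE₀.sqrt_lt_sqrt_of_lt hE hP
    (fun s hs => lt_of_lt_of_le (by positivity) (hR s (hP.Ioo_subset hs))) hhalf
  exact he.trans_le <| hE.le_right_of_barrier_le (fun s hs => hM s (Ioo_subset_Icc_self hs)) he hR
    hhalf.1 (hhalf.2.trans hP.lt_right).le ((Real.sqrt_lt_sqrt_iff he.le).1 hlt).le

lemma IsDownCrossing.exists_le_neg (hP : IsDownCrossing P s₀ T) (hPT : P T < 0) :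
    ∃ m > 0, ∀ s ∈ Icc ((s₀ + T) / 2) T, P s ≤ -m := by
  have hlt := hP.lt_right
  obtain ⟨x, hx, hmax⟩ := isCompact_Icc.exists_isMaxOn
    (nonempty_Icc.2 (by linarith : (s₀ + T) / 2 ≤ T))
    (hP.continuousOn.mono (Icc_subset_Icc_left (by linarith [hP.zero_lt])))
  refine ⟨-P x, neg_pos.2 ?_, fun s hs => (hmax hs).trans (neg_neg _).ge⟩
  rcases hx.2.eq_or_lt with rfl | h
  · exact hPT
  · exact hP.neg x ⟨by linarith [hx.1], h⟩

theorem exists_neg_of_le_neg (hP : IsDownCrossing P s₀ T) (hPT : P T < 0) :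
    ∃ N, ∀ R E, IsProfile P R T E → (∀ s ∈ Ioo 0 T, R s ≤ -N) → E T < 0 := by
  have hs₀ := hP.zero_lt
  have hlt := hP.lt_right
  obtain ⟨M, hM⟩ := isCompact_Icc.exists_bound_of_continuousOn hP.continuousOn
  have hM0 : 0 ≤ M := (norm_nonneg _).trans (hM 0 (left_mem_Icc.2 (hs₀.trans hlt).le))
  obtain ⟨m, hm, hPm⟩ := hP.exists_le_neg hPT
  have he : 0 < m * (T - s₀) / 4 := by have := sub_pos.2 hlt; positivity
  refine ⟨(M + 1) / √(m * (T - s₀) / 4), fun R E hE hR => ?_⟩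
  have hmid := hE.le_of_le_neg_barrier (fun s hs => hM s (Ioo_subset_Icc_self hs)) he hM0 hR
    (s := (s₀ + T) / 2) ⟨by linarith, by linarith⟩
  have hanti : AntitoneOn (fun x => E x + m * x) (Icc ((s₀ + T) / 2) T) := by
    refine antitoneOn_of_hasDerivWithinAt_nonpos (convex_Icc _ _)
      (f' := fun x => P x + R x * √(E x) + m * 1)
      ((hE.continuousOn.mono (Icc_subset_Icc_left (by linarith))).add (by fun_prop)) ?_ ?_ <;>
      rw [interior_Icc] <;> intro x hx <;>
      have hx' : x ∈ Ioo 0 T := ⟨by linarith [hx.1], hx.2⟩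
    · exact ((hE.hasDerivAt x hx').add ((hasDerivAt_id x).const_mul m)).hasDerivWithinAt
    · have hR0 : R x ≤ 0 := (hR x hx').trans (neg_nonpos.2 (by positivity))
      linarith [hPm x (Ioo_subset_Icc_self hx),
        mul_nonpos_of_nonpos_of_nonneg hR0 (Real.sqrt_nonneg (E x))]
  have := hanti (left_mem_Icc.2 (by linarith)) (right_mem_Icc.2 (by linarith))
    (by linarith : (s₀ + T) / 2 ≤ T)
  simp only at this
  linarith

end Existence

/-- A profile that is positive inside `[0, p]` and returns to zero at `p`: an arc of an orbit from
`u = u₂` to the next crossing of the axis `w = 0`. -/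
structure IsArch (P R : ℝ → ℝ) (p : ℝ) (E : ℝ → ℝ) : Prop extends IsProfile P R p E where
  pos : ∀ s ∈ Ioo 0 p, 0 < E s
  right : E p = 0

/-- The arcs below and above the axis `w = 0`, whose profiles have the coefficients `R` and `-R`,
close up at the same abscissa `p`: the scalar form of a homoclinic orbit. -/
def HasLoop (P R : ℝ → ℝ) (p : ℝ) : Prop :=
  (∃ E, IsArch P R p E) ∧ ∃ E, IsArch P (-R) p E

/-- The branch with coefficient `R` dies before `L` while the branch with coefficient `-R` is still
alive: the scalar form of a split homoclinic connection. -/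
def BranchGap (P R : ℝ → ℝ) (s₀ L : ℝ) : Prop :=
  ∃ T ∈ Ioo s₀ L, ∃ E F, IsProfile P R T E ∧ IsProfile P (-R) T F ∧ E T < 0 ∧ 0 < F T

section Shooting

variable {P R R₁ R₂ r k E F E₁ E₂ W W' : ℝ → ℝ} {p p₁ p₂ s s₀ s₁ t L T : ℝ}

lemma IsArch.lt_of_lt (h₁ : IsArch P R₁ p₁ E₁) (h₂ : IsArch P R₂ p₂ E₂)
    (hP : IsDownCrossing P s₀ p₂) (hlt : ∀ s ∈ Ioo 0 p₂, R₁ s < R₂ s) : p₁ < p₂ := by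
  by_contra! hle
  exact ((h₁.mono hle).pos_right_of_lt h₂.toIsProfile hP hlt
    fun s hs => h₁.pos s ⟨hs.1, hs.2.trans_le hle⟩).ne' h₂.right

theorem HasLoop.not_lt {μ₁ μ₂ : ℝ} (hP : ∀ T ∈ Ioo s₀ L, IsDownCrossing P s₀ T)
    (hk : ∀ s ∈ Ioo 0 L, 0 < k s) (hp₁ : p₁ ∈ Ioo s₀ L) (hp₂ : p₂ ∈ Ioo s₀ L)
    (h₁ : HasLoop P (fun s => r s + μ₁ * k s) p₁) (h₂ : HasLoop P (fun s => r s + μ₂ * k s) p₂) :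
    ¬ μ₁ < μ₂ := by
  intro hμ
  obtain ⟨⟨E₁, hE₁⟩, ⟨F₁, hF₁⟩⟩ := h₁
  obtain ⟨⟨E₂, hE₂⟩, ⟨F₂, hF₂⟩⟩ := h₂
  have hlt : ∀ s ∈ Ioo 0 L, r s + μ₁ * k s < r s + μ₂ * k s := fun s hs =>
    add_lt_add_right (mul_lt_mul_of_pos_right hμ (hk s hs)) _
  have h12 := hE₁.lt_of_lt hE₂ (hP p₂ hp₂) fun s hs => hlt s ⟨hs.1, hs.2.trans hp₂.2⟩
  have h21 := hF₂.lt_of_lt hF₁ (hP p₁ hp₁)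
    fun s hs => neg_lt_neg (hlt s ⟨hs.1, hs.2.trans hp₁.2⟩)
  exact h12.asymm h21

lemma IsProfile.exists_neg_of_lt_arch (h₁ : IsProfile P R₁ L E₁) (h₂ : IsArch P R₂ L E₂)
    (hP : IsDownCrossing P s₀ L) (hR : ContinuousAt R₁ s₀) (hlt : ∀ s ∈ Ioo 0 L, R₁ s < R₂ s) :
    ∃ T ∈ Ioo s₀ L, E₁ T < 0 := by
  by_contra! hnonneg
  refine (h₁.pos_right_of_lt h₂.toIsProfile hP hlt fun s hs => ?_).ne' h₂.right
  by_contra! hEs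
  obtain ⟨t, hst, htL⟩ := exists_between (max_lt hs.2 hP.lt_right)
  exact (h₁.neg_of_nonpos_of_lt hP hR hs.1 ((le_max_left _ _).trans_lt hst) htL.le hEs).not_ge
    (hnonneg t ⟨(le_max_right _ _).trans_lt hst, htL⟩)

lemma IsProfile.pos_of_pos_right (hE : IsProfile P R T E) (hP : IsDownCrossing P s₀ T)
    (hR : ContinuousAt R s₀) (hET : 0 < E T) (hs : s ∈ Ioc 0 T) : 0 < E s := by
  by_contra! hEs
  rcases hs.2.eq_or_lt with rfl | hlt
  · exact hEs.not_gt hET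
  · exact (hE.neg_of_nonpos_of_lt hP hR hs.1 hlt le_rfl hEs).not_gt hET

lemma IsProfile.not_neg_of_pos {T' : ℝ} (hE : IsProfile P R T E) (hF : IsProfile P R T' F)
    (hP : IsDownCrossing P s₀ T) (hP' : IsDownCrossing P s₀ T') (hR : ContinuousOn R (Icc 0 T'))
    (hT : T ≤ T') (hET : E T < 0) : ¬ 0 < F T' := by
  intro hFT
  have hTmem : T ∈ Ioc 0 T := ⟨hP.zero_lt.trans hP.lt_right, le_rfl⟩
  have heq := hE.eqOn (hF.mono hT) hP (hR.mono (Icc_subset_Icc_right hT))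
    (Ioc_subset_Icc_self hTmem)
  have hpos := hF.pos_of_pos_right hP' (hR.continuousAt (Icc_mem_nhds hP'.zero_lt hP'.lt_right))
    hFT ⟨hTmem.1, hT⟩
  exact (heq ▸ hpos).not_gt hET

lemma Icc_subset_Ico_right {a b c : ℝ} (h : b < c) : Icc a b ⊆ Ico a c :=
  fun _ hx => ⟨hx.1, hx.2.trans_lt h⟩

namespace BranchGap

lemma not_neg (hP : ∀ T ∈ Ioo s₀ L, IsDownCrossing P s₀ T) (hR : ContinuousOn R (Ico 0 L))
    (h : BranchGap P R s₀ L) : ¬ BranchGap P (-R) s₀ L := by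
  rintro ⟨T', hT', E', F', hE', hF', hE'neg, hF'pos⟩
  obtain ⟨T, hT, E, F, hE, hF, hEneg, hFpos⟩ := h
  rw [neg_neg] at hF'
  rcases le_total T T' with hle | hle
  · exact hE.not_neg_of_pos hF' (hP T hT) (hP T' hT') (hR.mono (Icc_subset_Ico_right hT'.2)) hle
      hEneg hF'pos
  · exact hE'.not_neg_of_pos hF (hP T' hT') (hP T hT) (hR.neg.mono (Icc_subset_Ico_right hT.2)) hle
      hE'neg hFpos

lemma isOpen_setOf (hP : ∀ T ∈ Ioo s₀ L, IsDownCrossing P s₀ T) (hr : ContinuousOn r (Ico 0 L))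
    (hk : ContinuousOn k (Ico 0 L)) :
    IsOpen {μ : ℝ | BranchGap P (fun s => r s + μ * k s) s₀ L} := by
  refine isOpen_iff_mem_nhds.2 fun μ ⟨T, hT, E, F, hE, hF, hEneg, hFpos⟩ => ?_
  have hT0 : 0 < T := (hP T hT).zero_lt.trans hT.1
  have hTmem : T ∈ Icc 0 T := right_mem_Icc.2 hT0.le
  have hrT := hr.mono (Icc_subset_Ico_right hT.2)
  have hkT := hk.mono (Icc_subset_Ico_right hT.2)
  have hR : ∀ ν, ContinuousOn (fun s => r s + ν * k s) (Icc 0 T) := fun ν =>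
    hrT.add (hkT.const_mul ν)
  have hneg : ∀ ν, -(fun s => r s + ν * k s) = fun s => (-r) s + ν * (-k) s := fun ν => by
    ext s; simp only [Pi.neg_apply]; ring
  choose E' hE' using fun ν => exists_isProfile hT0 (hP T hT).continuousOn (hR ν)
  choose F' hF' using fun ν => exists_isProfile hT0 (hP T hT).continuousOn (hR ν).neg
  have hElim := IsProfile.tendsto_endpoint (hP T hT) hrT hkT hE' μ
  have hFlim := IsProfile.tendsto_endpoint (hP T hT) hrT.neg hkT.neg
    (fun ν => hneg ν ▸ hF' ν) μ
  rw [← hE.eqOn (hE' μ) (hP T hT) (hR μ) hTmem] at hElim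
  rw [← hF.eqOn (hF' μ) (hP T hT) (hR μ).neg hTmem] at hFlim
  filter_upwards [hElim.eventually_lt_const hEneg, hFlim.eventually_const_lt hFpos] with ν hEν hFν
  exact ⟨T, hT, E' ν, F' ν, hE' ν, hF' ν, hEν, hFν⟩

lemma isOpen_setOf_neg (hP : ∀ T ∈ Ioo s₀ L, IsDownCrossing P s₀ T)
    (hr : ContinuousOn r (Ico 0 L)) (hk : ContinuousOn k (Ico 0 L)) :
    IsOpen {μ : ℝ | BranchGap P (-fun s => r s + μ * k s) s₀ L} := by
  convert isOpen_setOf hP hr.neg hk.neg using 5 with μ s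
  simp only [Pi.neg_apply]
  ring

-- Both sets of parameters are open and they are disjoint, so they cannot cover `M`.
theorem exists_not_and_not_neg {M : Set ℝ} {a b : ℝ} (hP : ∀ T ∈ Ioo s₀ L, IsDownCrossing P s₀ T)
    (hr : ContinuousOn r (Ico 0 L)) (hk : ContinuousOn k (Ico 0 L)) (hM : IsPreconnected M)
    (haM : a ∈ M) (hbM : b ∈ M) (ha : BranchGap P (fun s => r s + a * k s) s₀ L)
    (hb : BranchGap P (-fun s => r s + b * k s) s₀ L) :
    ∃ μ ∈ M, ¬ BranchGap P (fun s => r s + μ * k s) s₀ L ∧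
      ¬ BranchGap P (-fun s => r s + μ * k s) s₀ L := by
  by_contra! hcover
  obtain ⟨μ, -, h, hneg⟩ := hM _ _ (isOpen_setOf hP hr hk) (isOpen_setOf_neg hP hr hk)
    (fun μ hμ => or_iff_not_imp_left.2 (hcover μ hμ)) ⟨a, haM, ha⟩ ⟨b, hbM, hb⟩
  exact h.not_neg hP (hr.add (hk.const_mul μ)) hneg

lemma of_nonpos_of_pos (hP : IsDownCrossing P s₀ T) (hR : ContinuousAt R s₀) (hTL : T < L)
    (hE : IsProfile P R T E) (hF : IsProfile P (-R) T F) (hp : p ∈ Ico s₀ T) (hEp : E p ≤ 0)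
    (hFp : 0 < F p) : BranchGap P R s₀ L := by
  have hp0 : 0 < p := hP.zero_lt.trans_le hp.1
  have hpos : ∀ᶠ t in 𝓝[>] p, 0 < F t :=
    ((hF.hasDerivAt p ⟨hp0, hp.2⟩).continuousAt.mono_left nhdsWithin_le_nhds).eventually_const_lt
      hFp
  obtain ⟨t, hFt, ht⟩ := (hpos.and (Ioo_mem_nhdsGT hp.2)).exists
  exact ⟨t, ⟨hp.1.trans_lt ht.1, ht.2.trans hTL⟩, E, F, hE.mono ht.2.le, hF.mono ht.2.le,
    hE.neg_of_nonpos_of_lt hP hR hp0 ht.1 ht.2.le hEp, hFt⟩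

lemma of_neg_of_forall_pos (hTL : T < L) (hs₀ : 0 < s₀) (hE : IsProfile P R T E)
    (hF : IsProfile P (-R) T F) (hp : p ∈ Ioo s₀ T) (hEp : E p < 0)
    (hFpos : ∀ s ∈ Ioo 0 p, 0 < F s) : BranchGap P R s₀ L := by
  have hneg : ∀ᶠ t in 𝓝[<] p, E t < 0 :=
    ((hE.hasDerivAt p ⟨hs₀.trans hp.1, hp.2⟩).continuousAt.mono_left
      nhdsWithin_le_nhds).eventually_lt_const hEp
  obtain ⟨t, hEt, ht⟩ := (hneg.and (Ioo_mem_nhdsLT hp.1)).exists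
  have htT : t < T := ht.2.trans hp.2
  exact ⟨t, ⟨ht.1, htT.trans hTL⟩, E, F, hE.mono htT.le, hF.mono htT.le, hEt,
    hFpos t ⟨hs₀.trans ht.1, ht.2⟩⟩

end BranchGap

lemma IsProfile.exists_first_zero (hE : IsProfile P R T E) (hP : IsDownCrossing P s₀ T)
    (hs : s ∈ Ioo 0 T) (hEs : E s ≤ 0) :
    ∃ p ∈ Icc s₀ s, E p = 0 ∧ ∀ x ∈ Ioo 0 p, 0 < E x := by
  obtain ⟨p, hp, hEp, hpos⟩ := hE.exists_first_nonpos hP (Ioo_subset_Ioc_self hs) hEs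
  have hp0 : 0 < p := hP.zero_lt.trans_le hp.1
  refine ⟨p, hp, hEp.antisymm ?_, hpos⟩
  exact ge_of_tendsto
    ((hE.hasDerivAt p ⟨hp0, hp.2.trans_lt hs.2⟩).continuousAt.mono_left nhdsWithin_le_nhds)
    (mem_of_superset (Ioo_mem_nhdsLT hp0) fun x hx => (hpos x hx).le)

lemma exists_hasLoop_of_nonpos (hP : ∀ T ∈ Ioo s₀ L, IsDownCrossing P s₀ T)
    (hR : ContinuousOn R (Ico 0 L)) (hgap : ¬ BranchGap P R s₀ L)
    (hgap' : ¬ BranchGap P (-R) s₀ L) (hT : T ∈ Ioo s₀ L) (hE : IsProfile P R T E)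
    (hET : E T ≤ 0) : ∃ p ∈ Ioo s₀ L, HasLoop P R p := by
  obtain ⟨T', hTT', hT'L⟩ := exists_between hT.2
  have hP' := hP T' ⟨hT.1.trans hTT', hT'L⟩
  have hT0 : 0 < T := hP'.zero_lt.trans hT.1
  have hR' := hR.mono (Icc_subset_Ico_right hT'L)
  have hR₀ : ContinuousAt R s₀ := hR'.continuousAt (Icc_mem_nhds hP'.zero_lt hP'.lt_right)
  obtain ⟨G, hG⟩ := exists_isProfile (hT0.trans hTT') hP'.continuousOn hR'
  obtain ⟨F, hF⟩ := exists_isProfile (hT0.trans hTT') hP'.continuousOn hR'.neg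
  rw [hE.eqOn (hG.mono hTT'.le) (hP T hT) (hR'.mono (Icc_subset_Icc_right hTT'.le))
    (right_mem_Icc.2 hT0.le)] at hET
  obtain ⟨p, hp, hGp, hGpos⟩ := hG.exists_first_zero hP' ⟨hT0, hTT'⟩ hET
  have hpT' : p < T' := hp.2.trans_lt hTT'
  have hFle : F p ≤ 0 := not_lt.1 fun hFp =>
    hgap (.of_nonpos_of_pos hP' hR₀ hT'L hG hF ⟨hp.1, hpT'⟩ hGp.le hFp)
  have hlt : s₀ < p := by
    refine hp.1.lt_of_ne ?_
    rintro rfl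
    rcases le_total 0 (R s₀) with h | h
    · exact (hG.pos_crossing hP' hR₀ h).ne' hGp
    · exact (hF.pos_crossing hP' hR₀.neg (neg_nonneg.2 h)).not_ge hFle
  have hFp : F p = 0 := hFle.antisymm <| not_lt.1 fun hFp => hgap' <|
    .of_neg_of_forall_pos hT'L hP'.zero_lt hF (by rwa [neg_neg]) ⟨hlt, hpT'⟩ hFp hGpos
  refine ⟨p, ⟨hlt, hpT'.trans hT'L⟩, ⟨G, hG.mono hpT'.le, hGpos, hGp⟩, F, hF.mono hpT'.le,
    fun s hs => not_le.1 fun hFs => ?_, hFp⟩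
  exact (hF.neg_of_nonpos_of_lt hP' hR₀.neg hs.1 hs.2 hpT'.le hFs).ne hFp

theorem exists_hasLoop_of_not_branchGap (hP : ∀ T ∈ Ioo s₀ L, IsDownCrossing P s₀ T)
    (hR : ContinuousOn R (Ico 0 L)) (hgap : ¬ BranchGap P R s₀ L)
    (hgap' : ¬ BranchGap P (-R) s₀ L)
    (h : ∃ T ∈ Ioo s₀ L, ∃ E, (IsProfile P R T E ∨ IsProfile P (-R) T E) ∧ E T ≤ 0) :
    ∃ p ∈ Ioo s₀ L, HasLoop P R p := by
  obtain ⟨T, hT, E, hE | hE, hET⟩ := h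
  · exact exists_hasLoop_of_nonpos hP hR hgap hgap' hT hE hET
  · obtain ⟨p, hp, hE, hF⟩ :=
      exists_hasLoop_of_nonpos hP hR.neg hgap' (by rwa [neg_neg]) hT hE hET
    exact ⟨p, hp, by rwa [neg_neg] at hF, hE⟩

lemma BranchGap.of_arch_neg (hP : IsDownCrossing P s₀ L) (hR : ContinuousOn R₁ (Icc 0 L))
    (h₂ : IsArch P R₂ L E₂) (hF : IsArch P (-R₁) L F) (hlt : ∀ s ∈ Ioo 0 L, R₁ s < R₂ s) :
    BranchGap P R₁ s₀ L := by
  obtain ⟨E, hE⟩ := exists_isProfile (hP.zero_lt.trans hP.lt_right) hP.continuousOn hR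
  obtain ⟨T, hT, hET⟩ := hE.exists_neg_of_lt_arch h₂ hP
    (hR.continuousAt (Icc_mem_nhds hP.zero_lt hP.lt_right)) hlt
  exact ⟨T, hT, E, F, hE.mono hT.2.le, hF.toIsProfile.mono hT.2.le, hET,
    hF.pos T ⟨hP.zero_lt.trans hT.1, hT.2⟩⟩

theorem exists_hasLoop_of_isArch {μb μf : ℝ} (hP : IsDownCrossing P s₀ L)
    (hr : ContinuousOn r (Icc 0 L)) (hk : ContinuousOn k (Icc 0 L)) (hk0 : ∀ s ∈ Ioo 0 L, 0 < k s)
    (hlt : μb < μf) (hb : IsArch P (-fun s => r s + μb * k s) L F)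
    (hf : IsArch P (fun s => r s + μf * k s) L E) :
    ∃ μ, ∃ p ∈ Ioo s₀ L, HasLoop P (fun s => r s + μ * k s) p := by
  have hPT : ∀ T ∈ Ioo s₀ L, IsDownCrossing P s₀ T := fun T hT => hP.mono hT.1 hT.2.le
  have hR : ∀ μ, ContinuousOn (fun s => r s + μ * k s) (Icc 0 L) := fun μ =>
    hr.add (hk.const_mul μ)
  have hmono : ∀ {μ ν : ℝ}, μ < ν → ∀ s ∈ Ioo 0 L, r s + μ * k s < r s + ν * k s :=
    fun h s hs => add_lt_add_right (mul_lt_mul_of_pos_right h (hk0 s hs)) _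
  have hgapb : BranchGap P (fun s => r s + μb * k s) s₀ L :=
    .of_arch_neg hP (hR μb) hf hb (hmono hlt)
  have hgapf : BranchGap P (-fun s => r s + μf * k s) s₀ L :=
    .of_arch_neg hP (hR μf).neg hb (by rwa [neg_neg]) fun s hs => neg_lt_neg (hmono hlt s hs)
  obtain ⟨μ, hμ, hgap, hgap'⟩ := BranchGap.exists_not_and_not_neg hPT (hr.mono Ico_subset_Icc_self)
    (hk.mono Ico_subset_Icc_self) isPreconnected_Icc (left_mem_Icc.2 hlt.le)
    (right_mem_Icc.2 hlt.le) hgapb hgapf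
  have hμb : μb < μ := hμ.1.lt_of_ne fun h => hgap (h ▸ hgapb)
  obtain ⟨G, hG⟩ := exists_isProfile (hP.zero_lt.trans hP.lt_right) hP.continuousOn (hR μ).neg
  obtain ⟨T, hT, hGT⟩ := hG.exists_neg_of_lt_arch hb hP
    ((hR μ).neg.continuousAt (Icc_mem_nhds hP.zero_lt hP.lt_right))
    fun s hs => neg_lt_neg (hmono hμb s hs)
  exact ⟨μ, exists_hasLoop_of_not_branchGap hPT ((hR μ).mono Ico_subset_Icc_self) hgap hgap'
    ⟨T, hT, G, .inr (hG.mono hT.2.le), hGT.le⟩⟩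

lemma IsProfile.hasDerivAt_sq_sqrt_add_sqrt (hE : IsProfile P R T E) (hF : IsProfile P (-R) T F)
    (hs : s ∈ Ioo 0 T) (hEs : 0 < E s) (hFs : 0 < F s) :
    HasDerivAt (fun x => (√(E x) + √(F x)) ^ 2)
      (P s * ((√(E s) + √(F s)) ^ 2 / (√(E s) * √(F s)))) s := by
  refine (((hE.hasDerivAt_sqrt hs hEs).add (hF.hasDerivAt_sqrt hs hFs)).pow 2).congr_deriv ?_
  have hE0 := (Real.sqrt_pos.2 hEs).ne'
  have hF0 := (Real.sqrt_pos.2 hFs).ne'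
  simp only [Pi.add_apply, Pi.neg_apply]
  field_simp [hE0, hF0]
  ring

-- `(√E + √F)² ≥ √E √F`, so `(√E + √F)²` decreases at least as fast as `∫ -P` increases.
lemma IsProfile.le_add_sq_sqrt_add_sqrt (hE : IsProfile P R T E) (hF : IsProfile P (-R) T F)
    (hs : 0 < s) (hst : s ≤ t) (htT : t < T) (hEpos : ∀ x ∈ Icc s t, 0 < E x)
    (hFpos : ∀ x ∈ Icc s t, 0 < F x) (hPneg : ∀ x ∈ Icc s t, P x ≤ 0)
    (hW : ∀ x ∈ Icc s t, HasDerivAt W (W' x) x) (hWP : ∀ x ∈ Icc s t, W' x ≤ -P x) :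
    W t ≤ W s + (√(E s) + √(F s)) ^ 2 := by
  have hderiv : ∀ x ∈ Icc s t, HasDerivAt (fun x => W x + (√(E x) + √(F x)) ^ 2)
      (W' x + P x * ((√(E x) + √(F x)) ^ 2 / (√(E x) * √(F x)))) x := fun x hx =>
    (hW x hx).add <| hE.hasDerivAt_sq_sqrt_add_sqrt hF ⟨hs.trans_le hx.1, hx.2.trans_lt htT⟩
      (hEpos x hx) (hFpos x hx)
  have hanti : AntitoneOn (fun x => W x + (√(E x) + √(F x)) ^ 2) (Icc s t) := by
    refine antitoneOn_of_hasDerivWithinAt_nonpos (convex_Icc _ _)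
      (fun x hx => (hderiv x hx).continuousAt.continuousWithinAt)
      (fun x hx => (hderiv x (interior_subset hx)).hasDerivWithinAt) fun x hx => ?_
    have hx' := interior_subset hx
    have hE0 := Real.sqrt_pos.2 (hEpos x hx')
    have hF0 := Real.sqrt_pos.2 (hFpos x hx')
    have hratio : 1 ≤ (√(E x) + √(F x)) ^ 2 / (√(E x) * √(F x)) := by
      rw [one_le_div (by positivity)]
      nlinarith
    nlinarith [hWP x hx', hPneg x hx']
  have hle : W t + (√(E t) + √(F t)) ^ 2 ≤ W s + (√(E s) + √(F s)) ^ 2 :=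
    hanti (left_mem_Icc.2 hst) (right_mem_Icc.2 hst) hst
  linarith [sq_nonneg (√(E t) + √(F t))]

theorem exists_isProfile_nonpos_of_not_bddAbove (hP : ∀ T ∈ Ioo s₀ L, IsDownCrossing P s₀ T)
    (hR : ContinuousOn R (Ico 0 L)) (hs₁ : s₁ ∈ Ioo s₀ L)
    (hW : ∀ s ∈ Ico s₁ L, HasDerivAt W (W' s) s) (hWP : ∀ s ∈ Ico s₁ L, W' s ≤ -P s)
    (hunb : ¬ BddAbove (W '' Ioo s₁ L)) :
    ∃ T ∈ Ioo s₀ L, ∃ E, (IsProfile P R T E ∨ IsProfile P (-R) T E) ∧ E T ≤ 0 := by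
  by_contra! hpos
  have hs₁0 : 0 < s₁ := (hP s₁ hs₁).zero_lt.trans hs₁.1
  have hRT : ∀ {T}, T < L → ContinuousOn R (Icc 0 T) := fun hT => hR.mono (Icc_subset_Ico_right hT)
  obtain ⟨E₁, hE₁⟩ := exists_isProfile hs₁0 (hP s₁ hs₁).continuousOn (hRT hs₁.2)
  obtain ⟨F₁, hF₁⟩ := exists_isProfile hs₁0 (hP s₁ hs₁).continuousOn (hRT hs₁.2).neg
  refine hunb ⟨W s₁ + (√(E₁ s₁) + √(F₁ s₁)) ^ 2, ?_⟩
  rintro _ ⟨t, ht, rfl⟩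
  obtain ⟨T, htT, hTL⟩ := exists_between ht.2
  have hs₁T : s₁ < T := ht.1.trans htT
  have hPT := hP T ⟨hs₁.1.trans hs₁T, hTL⟩
  obtain ⟨E, hE⟩ := exists_isProfile (hs₁0.trans hs₁T) hPT.continuousOn (hRT hTL)
  obtain ⟨F, hF⟩ := exists_isProfile (hs₁0.trans hs₁T) hPT.continuousOn (hRT hTL).neg
  have hs₁mem : s₁ ∈ Icc 0 s₁ := right_mem_Icc.2 hs₁0.le
  have hsub : ∀ {x}, x ∈ Icc s₁ t → x ∈ Ioo s₀ L ∧ x ≤ T ∧ x ∈ Ico s₁ L := fun hx =>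
    ⟨⟨hs₁.1.trans_le hx.1, hx.2.trans_lt ht.2⟩, hx.2.trans htT.le, hx.1, hx.2.trans_lt ht.2⟩
  rw [hE₁.eqOn (hE.mono hs₁T.le) (hP s₁ hs₁) (hRT hs₁.2) hs₁mem,
    hF₁.eqOn (hF.mono hs₁T.le) (hP s₁ hs₁) (hRT hs₁.2).neg hs₁mem]
  exact hE.le_add_sq_sqrt_add_sqrt hF hs₁0 ht.1.le htT
    (fun x hx => hpos x (hsub hx).1 E (.inl (hE.mono (hsub hx).2.1)))
    (fun x hx => hpos x (hsub hx).1 F (.inr (hF.mono (hsub hx).2.1)))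
    (fun x hx => (hPT.neg x ⟨(hsub hx).1.1, hx.2.trans_lt htT⟩).le)
    (fun x hx => hW x (hsub hx).2.2) fun x hx => hWP x (hsub hx).2.2

lemma exists_forall_le_mul_of_isCompact {X : Type*} [TopologicalSpace X] {S : Set X} {f g : X → ℝ}
    (hS : IsCompact S) (hf : ContinuousOn f S) (hg : ContinuousOn g S) (hg0 : ∀ x ∈ S, 0 < g x) :
    ∃ a, ∀ x ∈ S, f x ≤ a * g x := by
  obtain ⟨a, ha⟩ := hS.bddAbove_image (hf.div hg fun x hx => (hg0 x hx).ne')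
  exact ⟨a, fun x hx => (div_le_iff₀ (hg0 x hx)).1 (ha (mem_image_of_mem _ hx))⟩

lemma BranchGap.exists_param (hP : IsDownCrossing P s₀ T) (hTL : T < L) (hPT : P T < 0)
    (hr : ContinuousOn r (Icc 0 T)) (hk : ContinuousOn k (Icc 0 T))
    (hk0 : ∀ s ∈ Icc 0 T, 0 < k s) : ∃ a, BranchGap P (fun s => r s + a * k s) s₀ L := by
  have hT : 0 < T := hP.zero_lt.trans hP.lt_right
  obtain ⟨N₁, hN₁⟩ := exists_pos_of_le hP
  obtain ⟨N₂, hN₂⟩ := exists_neg_of_le_neg hP hPT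
  obtain ⟨a, ha⟩ := exists_forall_le_mul_of_isCompact isCompact_Icc
    (hr.add (continuousOn_const (c := max N₁ N₂))) hk hk0
  have hle : ∀ s ∈ Ioo 0 T, r s + -a * k s ≤ -max N₁ N₂ := fun s hs => by
    have has : r s + max N₁ N₂ ≤ a * k s := ha s (Ioo_subset_Icc_self hs)
    linarith
  have hR : ContinuousOn (fun s => r s + -a * k s) (Icc 0 T) := hr.add (hk.const_mul _)
  obtain ⟨E, hE⟩ := exists_isProfile hT hP.continuousOn hR
  obtain ⟨F, hF⟩ := exists_isProfile hT hP.continuousOn hR.neg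
  exact ⟨-a, T, ⟨hP.lt_right, hTL⟩, E, F, hE, hF,
    hN₂ _ E hE fun s hs => (hle s hs).trans (neg_le_neg (le_max_right _ _)),
    hN₁ _ F hF fun s hs => le_neg_of_le_neg ((hle s hs).trans (neg_le_neg (le_max_left _ _)))⟩

theorem exists_hasLoop_of_not_bddAbove (hP : ∀ T ∈ Ioo s₀ L, IsDownCrossing P s₀ T)
    (hr : ContinuousOn r (Ico 0 L)) (hk : ContinuousOn k (Ico 0 L))
    (hk0 : ∀ s ∈ Ico 0 L, 0 < k s) (hs₁ : s₁ ∈ Ioo s₀ L)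
    (hW : ∀ s ∈ Ico s₁ L, HasDerivAt W (W' s) s) (hWP : ∀ s ∈ Ico s₁ L, W' s ≤ -P s)
    (hunb : ¬ BddAbove (W '' Ioo s₁ L)) :
    ∃ μ, ∃ p ∈ Ioo s₀ L, HasLoop P (fun s => r s + μ * k s) p := by
  obtain ⟨T, hT, hTs₁⟩ := exists_between hs₁.1
  have hTL : T < L := hTs₁.trans hs₁.2
  have hsub : Icc 0 T ⊆ Ico 0 L := Icc_subset_Ico_right hTL
  have hPT := hP T ⟨hT, hTL⟩
  have hPneg : P T < 0 := (hP s₁ hs₁).neg T ⟨hT, hTs₁⟩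
  have hk0' : ∀ s ∈ Icc 0 T, 0 < k s := fun s hs => hk0 s (hsub hs)
  obtain ⟨a, ha⟩ := BranchGap.exists_param hPT hTL hPneg (hr.mono hsub) (hk.mono hsub) hk0'
  obtain ⟨b, hb⟩ := BranchGap.exists_param hPT hTL hPneg (hr.mono hsub).neg (hk.mono hsub) hk0'
  have hb' : BranchGap P (-fun s => r s + -b * k s) s₀ L := by
    convert hb using 2 with s
    simp only [Pi.neg_apply]
    ring
  obtain ⟨μ, -, hgap, hgap'⟩ := BranchGap.exists_not_and_not_neg hP hr hk isPreconnected_univ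
    (mem_univ a) (mem_univ (-b)) ha hb'
  have hR : ContinuousOn (fun s => r s + μ * k s) (Ico 0 L) := hr.add (hk.const_mul μ)
  exact ⟨μ, exists_hasLoop_of_not_branchGap hP hR hgap hgap'
    (exists_isProfile_nonpos_of_not_bddAbove hP hR hs₁ hW hWP hunb)⟩

end Shooting

section ScalarFlow

variable {f f' φ Z : ℝ → ℝ} {a b p q m D : ℝ}

lemma exists_hasDerivAt_of_continuousOn_Ioo (hf : ContinuousOn f (Ioo a b)) :
    ∃ F : ℝ → ℝ, ∀ x ∈ Ioo a b, HasDerivAt F (f x) x := by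
  rcases (Ioo a b).eq_empty_or_nonempty with hab | ⟨c, hc⟩
  · simp only [hab, mem_empty_iff_false, false_imp_iff, implies_true, exists_const]
  · exact ⟨fun x => ∫ y in c..x, f y, fun x hx => intervalIntegral.integral_hasDerivAt_right
      (hf.mono (ordConnected_Ioo.uIcc_subset hc hx)).intervalIntegrable
      (hf.stronglyMeasurableAtFilter isOpen_Ioo x hx) (hf.continuousAt (isOpen_Ioo.mem_nhds hx))⟩

lemma strictMonoOn_of_hasDerivAt_pos {I : Set ℝ} (hI : Convex ℝ I)
    (hf : ∀ x ∈ I, HasDerivAt f (f' x) x) (hf' : ∀ x ∈ I, 0 < f' x) : StrictMonoOn f I :=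
  strictMonoOn_of_hasDerivWithinAt_pos hI (HasDerivAt.continuousOn hf)
    (fun x hx => (hf x (interior_subset hx)).hasDerivWithinAt)
    fun x hx => hf' x (interior_subset hx)

lemma hasDerivWithinAt_Ici_of_hasDerivAt_Ioi (hf : ContinuousOn f (Ici a))
    (hf' : ContinuousOn f' (Ici a)) (h : ∀ x ∈ Ioi a, HasDerivAt f (f' x) x) :
    ∀ x ∈ Ici a, HasDerivWithinAt f (f' x) (Ici a) x := by
  intro x hx
  rcases eq_or_lt_of_le (mem_Ici.1 hx) with rfl | hax
  · refine hasDerivWithinAt_Ici_of_tendsto_deriv (s := Ioi a)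
      (fun x hx => (h x hx).differentiableAt.differentiableWithinAt)
      ((hf a hx).mono Ioi_subset_Ici_self) self_mem_nhdsWithin ?_
    exact ((hf' a hx).mono Ioi_subset_Ici_self).tendsto.congr'
      (eventually_mem_nhdsWithin.mono fun x hx => (h x hx).deriv.symm)
  · exact (h x hax).hasDerivWithinAt

lemma tendsto_sub_left_nhdsGT (q p : ℝ) : Tendsto (fun x => q - x) (𝓝[>] p) (𝓝[<] (q - p)) :=
  tendsto_nhdsWithin_iff.2 ⟨((continuous_sub_left q).tendsto p).mono_left nhdsWithin_le_nhds,
    eventually_mem_nhdsWithin.mono fun _ hx => mem_Iio.2 (sub_lt_sub_left hx q)⟩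

lemma tendsto_sub_left_nhdsLT (q p : ℝ) : Tendsto (fun x => q - x) (𝓝[<] p) (𝓝[>] (q - p)) :=
  tendsto_nhdsWithin_iff.2 ⟨((continuous_sub_left q).tendsto p).mono_left nhdsWithin_le_nhds,
    eventually_mem_nhdsWithin.mono fun _ hx => mem_Ioi.2 (sub_lt_sub_left hx q)⟩

lemma bddBelow_image_of_mul_sqrt_le (hφ : ∀ x ∈ Ioo p q, 0 < φ x)
    (hZ : ∀ x ∈ Ioo p q, HasDerivAt Z (φ x)⁻¹ x) (hm : 0 < m)
    (hlow : ∀ᶠ x in 𝓝[>] p, m * √(x - p) ≤ φ x) : BddBelow (Z '' Ioo p q) := by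
  rcases le_or_gt q p with hpq | hpq
  · simp only [Ioo_eq_empty hpq.not_gt, image_empty, bddBelow_empty]
  obtain ⟨b, hb, hlow⟩ := (mem_nhdsGT_iff_exists_Ioo_subset' hpq).1
    (inter_mem hlow (Ioo_mem_nhdsGT hpq))
  obtain ⟨c, hpc, hcb⟩ := exists_between (mem_Ioi.1 hb)
  have hsub : Ioc p c ⊆ Ioo p q := fun x hx => (hlow ⟨hx.1, hx.2.trans_lt hcb⟩).2
  have hderiv : ∀ x ∈ Ioc p c, HasDerivAt (fun x => Z x - 2 / m * √(x - p))
      ((φ x)⁻¹ - 2 / m * (1 / (2 * √(x - p)))) x := fun x hx =>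
    (hZ x (hsub hx)).sub
      ((((hasDerivAt_id x).sub_const p).sqrt (sub_pos.2 hx.1).ne').const_mul (2 / m))
  have hanti : AntitoneOn (fun x => Z x - 2 / m * √(x - p)) (Ioc p c) := by
    refine antitoneOn_of_hasDerivWithinAt_nonpos (convex_Ioc _ _) (HasDerivAt.continuousOn hderiv)
      (fun x hx => (hderiv x (interior_subset hx)).hasDerivWithinAt) fun x hx => ?_
    replace hx := interior_subset hx
    have hsqrt : 0 < √(x - p) := Real.sqrt_pos.2 (sub_pos.2 hx.1)
    have heq : 2 / m * (1 / (2 * √(x - p))) = (m * √(x - p))⁻¹ := by field_simp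
    rw [heq, sub_nonpos]
    exact inv_anti₀ (mul_pos hm hsqrt) (hlow ⟨hx.1, hx.2.trans_lt hcb⟩).1
  have hmono := strictMonoOn_of_hasDerivAt_pos (convex_Ioo p q) hZ fun x hx => inv_pos.2 (hφ x hx)
  refine ⟨Z c - 2 / m * √(c - p), ?_⟩
  rintro _ ⟨x, hx, rfl⟩
  rcases le_total x c with hxc | hcx
  · exact (hanti ⟨hx.1, hxc⟩ ⟨hpc, le_rfl⟩ hxc).trans (sub_le_self _ (by positivity))
  · exact (sub_le_self _ (by positivity)).trans
      (hmono.monotoneOn (hsub ⟨hpc, le_rfl⟩) hx hcx)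

lemma tendsto_atTop_of_le_mul_sub (hpq : p < q) (hφ : ∀ x ∈ Ioo p q, 0 < φ x)
    (hZ : ∀ x ∈ Ioo p q, HasDerivAt Z (φ x)⁻¹ x) (hD : 0 < D)
    (hup : ∀ᶠ x in 𝓝[<] q, φ x ≤ D * (q - x)) : Tendsto Z (𝓝[<] q) atTop := by
  obtain ⟨b, hb, hup⟩ := (mem_nhdsLT_iff_exists_Ioo_subset' hpq).1
    (inter_mem hup (Ioo_mem_nhdsLT hpq))
  obtain ⟨c, hbc, hcq⟩ := exists_between (mem_Iio.1 hb)
  have hsub : Ico c q ⊆ Ioo p q := fun x hx => (hup ⟨hbc.trans_le hx.1, hx.2⟩).2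
  have hderiv : ∀ x ∈ Ico c q, HasDerivAt (fun x => Z x + D⁻¹ * Real.log (q - x))
      ((φ x)⁻¹ + D⁻¹ * (-1 / (q - x))) x := fun x hx =>
    (hZ x (hsub hx)).add
      ((((hasDerivAt_id x).const_sub q).log (sub_pos.2 hx.2).ne').const_mul D⁻¹)
  have hmono : MonotoneOn (fun x => Z x + D⁻¹ * Real.log (q - x)) (Ico c q) := by
    refine monotoneOn_of_hasDerivWithinAt_nonneg (convex_Ico _ _) (HasDerivAt.continuousOn hderiv)
      (fun x hx => (hderiv x (interior_subset hx)).hasDerivWithinAt) fun x hx => ?_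
    replace hx := interior_subset hx
    have heq : D⁻¹ * (-1 / (q - x)) = -(D * (q - x))⁻¹ := by
      rw [mul_inv, neg_div, mul_neg, one_div]
    rw [heq, ← sub_eq_add_neg, sub_nonneg]
    exact inv_anti₀ (hφ x (hsub hx)) (hup ⟨hbc.trans_le hx.1, hx.2⟩).1
  have hlog : Tendsto (fun x => Real.log (q - x)) (𝓝[<] q) atBot :=
    Real.tendsto_log_nhdsGT_zero.comp (sub_self q ▸ tendsto_sub_left_nhdsLT q q)
  refine tendsto_atTop_mono' _ ?_ (tendsto_atTop_add_const_left _
    (Z c + D⁻¹ * Real.log (q - c)) (tendsto_neg_atBot_atTop.comp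
      (hlog.const_mul_atBot (inv_pos.2 hD))))
  filter_upwards [Ioo_mem_nhdsLT hcq] with x hx
  exact (sub_le_iff_le_add.2 (hmono ⟨le_rfl, hcq⟩ ⟨hx.1.le, hx.2⟩ hx.1.le) :)

lemma exists_image_eq_Ioi (hpq : p < q) (hφc : ContinuousOn φ (Ioo p q))
    (hφ : ∀ x ∈ Ioo p q, 0 < φ x) (hm : 0 < m) (hlow : ∀ᶠ x in 𝓝[>] p, m * √(x - p) ≤ φ x)
    (hD : 0 < D) (hup : ∀ᶠ x in 𝓝[<] q, φ x ≤ D * (q - x)) :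
    ∃ Z : ℝ → ℝ, (∀ x ∈ Ioo p q, HasDerivAt Z (φ x)⁻¹ x) ∧ Z '' Ioo p q = Ioi 0 := by
  obtain ⟨Z, hZ⟩ := exists_hasDerivAt_of_continuousOn_Ioo (hφc.inv₀ fun x hx => (hφ x hx).ne')
  have hmono := strictMonoOn_of_hasDerivAt_pos (convex_Ioo p q) hZ fun x hx => inv_pos.2 (hφ x hx)
  have hbdd := bddBelow_image_of_mul_sqrt_le hφ hZ hm hlow
  set α := sInf (Z '' Ioo p q)
  have himg : Z '' Ioo p q = Ioi α := by
    refine Subset.antisymm ?_ ?_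
    · rintro _ ⟨x, hx, rfl⟩
      obtain ⟨y, hpy, hyx⟩ := exists_between hx.1
      exact (csInf_le hbdd (mem_image_of_mem Z ⟨hpy, hyx.trans hx.2⟩)).trans_lt
        (hmono ⟨hpy, hyx.trans hx.2⟩ hx hyx)
    · have := nhdsGT_neBot_of_exists_gt ⟨q, hpq⟩
      have := nhdsLT_neBot_of_exists_lt ⟨p, hpq⟩
      exact isPreconnected_Ioo.intermediate_value_Ioi (le_principal_iff.2 (Ioo_mem_nhdsGT hpq))
        (le_principal_iff.2 (Ioo_mem_nhdsLT hpq)) (HasDerivAt.continuousOn hZ)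
        (hmono.monotoneOn.tendsto_nhdsWithin_Ioo_right (nonempty_Ioo.2 hpq) hbdd)
        (tendsto_atTop_of_le_mul_sub hpq hφ hZ hD hup)
  refine ⟨fun x => Z x - α, fun x hx => (hZ x hx).sub_const α, ?_⟩
  rw [← image_image (fun z => z - α), himg, image_sub_const_Ioi, sub_self]

lemma exists_inverse_of_hasDerivAt_inv {I J : Set ℝ} (hI : IsOpen I) (hIc : Convex ℝ I)
    (hJ : IsOpen J) (hφ : ∀ x ∈ I, 0 < φ x) (hZ : ∀ x ∈ I, HasDerivAt Z (φ x)⁻¹ x)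
    (himg : Z '' I = J) :
    ∃ U : ℝ → ℝ, (∀ z ∈ J, HasDerivAt U (φ (U z)) z) ∧ StrictMonoOn U J ∧ U '' J = I ∧
      RightInvOn U Z J := by
  have hmono := strictMonoOn_of_hasDerivAt_pos hIc hZ fun x hx => inv_pos.2 (hφ x hx)
  have hbij : BijOn Z I J := himg ▸ hmono.injOn.bijOn_image
  have hinv := hbij.invOn_invFunOn
  set U := Function.invFunOn Z I
  have hU : BijOn U J I := hbij.symm hinv.symm
  have hUmono : StrictMonoOn U J := fun x hx y hy hxy => by
    rwa [← hmono.lt_iff_lt (hU.mapsTo hx) (hU.mapsTo hy), hinv.2 hx, hinv.2 hy]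
  refine ⟨U, fun z hz => ?_, hUmono, hU.image_eq, hinv.2⟩
  have hcont : ContinuousAt U z := hUmono.continuousAt_of_image_mem_nhds (hJ.mem_nhds hz)
    (hU.image_eq ▸ hI.mem_nhds (hU.mapsTo hz))
  simpa only [inv_inv] using HasDerivAt.of_local_left_inverse hcont (hZ _ (hU.mapsTo hz))
    (inv_pos.2 (hφ _ (hU.mapsTo hz))).ne' (mem_of_superset (hJ.mem_nhds hz) fun y hy => hinv.2 hy)

lemma tendsto_atTop_of_image_eq_Ioo {U : ℝ → ℝ} (hU : MonotoneOn U (Ioi a))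
    (himg : U '' Ioi a = Ioo p q) : Tendsto U atTop (𝓝 q) := by
  have hpq : (Ioo p q).Nonempty := himg ▸ nonempty_Ioi.image U
  refine tendsto_order.2 ⟨fun y hy => ?_, fun y hy => ?_⟩
  · obtain ⟨x, hx, hxq⟩ := exists_between (max_lt hy (nonempty_Ioo.1 hpq))
    obtain ⟨z, hz, rfl⟩ : x ∈ U '' Ioi a := himg ▸ ⟨(le_max_right _ _).trans_lt hx, hxq⟩
    filter_upwards [eventually_ge_atTop z] with t ht
    exact ((le_max_left _ _).trans_lt hx).trans_le (hU hz (lt_of_lt_of_le hz ht) ht)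
  · filter_upwards [eventually_gt_atTop a] with t ht
    exact (himg.subset (mem_image_of_mem U ht)).2.trans hy

theorem exists_scalar_flow (hpq : p < q) (hφc : ContinuousOn φ (Ioo p q))
    (hφ : ∀ x ∈ Ioo p q, 0 < φ x) (hm : 0 < m) (hlow : ∀ᶠ x in 𝓝[>] p, m * √(x - p) ≤ φ x)
    (hD : 0 < D) (hup : ∀ᶠ x in 𝓝[<] q, φ x ≤ D * (q - x)) :
    ∃ U : ℝ → ℝ, U 0 = p ∧ ContinuousOn U (Ici 0) ∧ MapsTo U (Ioi 0) (Ioo p q) ∧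
      (∀ z ∈ Ioi 0, HasDerivAt U (φ (U z)) z) ∧ Tendsto U atTop (𝓝 q) := by
  obtain ⟨Z, hZ, himg⟩ := exists_image_eq_Ioi hpq hφc hφ hm hlow hD hup
  obtain ⟨U, hU, hmono, hUimg, -⟩ :=
    exists_inverse_of_hasDerivAt_inv isOpen_Ioo (convex_Ioo p q) isOpen_Ioi hφ hZ himg
  have hlim : Tendsto U (𝓝[>] 0) (𝓝 p) := by
    simpa only [hUimg, csInf_Ioo hpq] using
      hmono.monotoneOn.tendsto_nhdsGT (hUimg ▸ bddBelow_Ioo)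
  have heq : ∀ z ∈ Ioi (0 : ℝ), Function.update U 0 p z = U z := fun z hz =>
    Function.update_of_ne (ne_of_gt hz) _ _
  have hderiv : ∀ z ∈ Ioi (0 : ℝ),
      HasDerivAt (Function.update U 0 p) (φ (Function.update U 0 p z)) z := fun z hz => by
    rw [heq z hz]
    exact (hU z hz).congr_of_eventuallyEq (mem_of_superset (Ioi_mem_nhds hz) heq)
  refine ⟨Function.update U 0 p, Function.update_self .., fun z hz => ?_,
    fun z hz => (heq z hz).symm ▸ hUimg.subset (mem_image_of_mem U hz), hderiv,
    (tendsto_atTop_of_image_eq_Ioo hmono.monotoneOn hUimg).congr'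
      ((eventually_gt_atTop 0).mono fun z hz => (heq z hz).symm)⟩
  rcases eq_or_lt_of_le (mem_Ici.1 hz) with rfl | hz
  · rwa [continuousWithinAt_update_same, Ici_sdiff_left]
  · exact (hderiv z hz).continuousAt.continuousWithinAt

end ScalarFlow

/-- Solutions of the planar system `u' = w`, `w' = G u + H u * w`; for (TV), `G = g₁ f` and
`H = g₂ h`. -/
structure IsSolution (G H u w : ℝ → ℝ) : Prop where
  hasDerivAt_fst : ∀ z, HasDerivAt u (w z) z
  hasDerivAt_snd : ∀ z, HasDerivAt w (G (u z) + H (u z) * w z) z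

/-- Nontrivial solutions of the planar system `u' = w`, `w' = G u + H u * w` which converge to
`(q, 0)` as `z → ±∞`: condition (HO) with level `q`. -/
structure IsHomoclinic (G H : ℝ → ℝ) (q : ℝ) (u w : ℝ → ℝ) : Prop extends IsSolution G H u w where
  tendsto_fst_atBot : Tendsto u atBot (𝓝 q)
  tendsto_fst_atTop : Tendsto u atTop (𝓝 q)
  tendsto_snd_atBot : Tendsto w atBot (𝓝 0)
  tendsto_snd_atTop : Tendsto w atTop (𝓝 0)
  nontrivial : ¬ ∀ z, u z = q ∧ w z = 0

/-- Solutions on `[0, ∞)` of the planar system `u' = w`, `w' = G u + H u * w` which start at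
`(p, 0)` and converge to `(q, 0)` within `p ≤ u`. -/
structure IsHalfOrbit (G H : ℝ → ℝ) (p q : ℝ) (u w : ℝ → ℝ) : Prop where
  fst_zero : u 0 = p
  snd_zero : w 0 = 0
  hasDerivWithinAt_fst : ∀ z ∈ Ici 0, HasDerivWithinAt u (w z) (Ici 0) z
  hasDerivWithinAt_snd : ∀ z ∈ Ici 0, HasDerivWithinAt w (G (u z) + H (u z) * w z) (Ici 0) z
  tendsto_fst : Tendsto u atTop (𝓝 q)
  tendsto_snd : Tendsto w atTop (𝓝 0)
  le_fst : ∀ z ∈ Ici 0, p ≤ u z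

section HalfOrbit

variable {P R E F G H u w a b : ℝ → ℝ} {p q g r T : ℝ}

lemma IsArch.eventually_mul_sub_le (hE : IsArch P R T E) (hT : 0 < T)
    (hP : ContinuousOn P (Icc 0 T)) (hR : ContinuousOn R (Icc 0 T)) (hg : P T < -g) :
    ∀ᶠ s in 𝓝[<] T, g * (T - s) ≤ E s := by
  have hIoo : Ioo 0 T ∈ 𝓝[<] T := Ioo_mem_nhdsLT hT
  have hT' : T ∈ Icc 0 T := right_mem_Icc.2 hT.le
  have hlim : Tendsto (fun s => P s + R s * √(E s)) (𝓝[<] T) (𝓝 (P T)) := by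
    have h : ContinuousWithinAt (fun s => P s + R s * √(E s)) (Icc 0 T) T :=
      (hP T hT').add ((hR T hT').mul (hE.continuousOn T hT').sqrt)
    simpa only [hE.right, Real.sqrt_zero, mul_zero, add_zero] using
      h.tendsto.mono_left (nhdsWithin_le_of_mem (mem_of_superset hIoo Ioo_subset_Icc_self))
  have hderiv : HasDerivWithinAt E (P T) (Iio T) T :=
    (hasDerivWithinAt_Iic_of_tendsto_deriv (s := Ioo 0 T)
      (fun s hs => (hE.hasDerivAt s hs).differentiableAt.differentiableWithinAt)
      ((hE.continuousOn T hT').mono Ioo_subset_Icc_self) hIoo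
      (hlim.congr' (mem_of_superset hIoo fun s hs => (hE.hasDerivAt s hs).deriv.symm))).mono
        Iio_subset_Iic_self
  rw [hasDerivWithinAt_iff_tendsto_slope' self_notMem_Iio] at hderiv
  filter_upwards [hderiv.eventually_lt_const hg, self_mem_nhdsWithin] with s hs hsT
  rw [slope_def_field, hE.right, sub_zero, div_lt_iff_of_neg (sub_neg.2 hsT)] at hs
  linarith

lemma IsProfile.eventually_sqrt_le_mul_self (hE : IsProfile P R T E) (hT : 0 < T)
    (hR : ContinuousOn R (Icc 0 T)) (hg : 0 ≤ g) (hr : 0 < r) (hP : ∀ s ∈ Ioc 0 r, P s ≤ g * s) :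
    ∃ D > 0, ∀ᶠ s in 𝓝[>] 0, √(E s) ≤ D * s := by
  obtain ⟨M, hM⟩ := isCompact_Icc.exists_bound_of_continuousOn hR
  have hM0 : 0 ≤ M := (norm_nonneg _).trans (hM 0 (left_mem_Icc.2 hT.le))
  obtain ⟨t, ht0, ht⟩ := exists_between (lt_min hr hT)
  have htT : t < T := ht.trans_le (min_le_right _ _)
  refine ⟨g + M + 1, by positivity, mem_of_superset (Ioo_mem_nhdsGT ht0) fun s hs => ?_⟩
  exact (hE.sqrt_lt_mul_self htT hg hM0
    (fun x hx => hP x ⟨hx.1, hx.2.trans (ht.le.trans (min_le_left _ _))⟩)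
    (fun x hx => (le_abs_self _).trans (hM x ⟨hx.1.le, hx.2.trans htT.le⟩))
    (Ioo_subset_Ioc_self hs)).le

lemma IsArch.hasDerivAt_sqrt_comp_sub {x : ℝ}
    (hE : IsArch (fun s => -2 * G (q - s)) (fun s => -2 * H (q - s)) (q - p) E)
    (hx : x ∈ Ioo p q) :
    HasDerivAt (fun x => √(E (q - x))) (G x / √(E (q - x)) + H x) x := by
  have hs : q - x ∈ Ioo 0 (q - p) := ⟨by linarith [hx.2], by linarith [hx.1]⟩
  refine ((hE.hasDerivAt_sqrt hs (hE.pos _ hs)).comp x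
    ((hasDerivAt_id' x).const_sub q)).congr_deriv ?_
  have hsqrt : √(E (q - x)) ≠ 0 := (Real.sqrt_pos.2 (hE.pos _ hs)).ne'
  rw [sub_sub_cancel]
  field_simp
  ring

lemma continuousOn_comp_sub_left {f : ℝ → ℝ} (hf : ContinuousOn f (Icc p q)) :
    ContinuousOn (fun s => f (q - s)) (Icc 0 (q - p)) :=
  hf.comp (by fun_prop) fun s hs => ⟨by linarith [hs.2], by linarith [hs.1]⟩

lemma IsArch.eventually_sqrt_mul_sqrt_sub_le (hpq : p < q) (hG : ContinuousOn G (Icc p q))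
    (hH : ContinuousOn H (Icc p q)) (hGp : 0 < G p)
    (hE : IsArch (fun s => -2 * G (q - s)) (fun s => -2 * H (q - s)) (q - p) E) :
    ∀ᶠ x in 𝓝[>] p, √(G p) * √(x - p) ≤ √(E (q - x)) := by
  have h := hE.eventually_mul_sub_le (g := G p) (sub_pos.2 hpq)
    (continuousOn_const.mul (continuousOn_comp_sub_left hG))
    (continuousOn_const.mul (continuousOn_comp_sub_left hH))
    (by rw [sub_sub_cancel]; linarith)
  filter_upwards [(tendsto_sub_left_nhdsGT q p).eventually h] with x hx
  rw [← Real.sqrt_mul hGp.le, ← sub_sub_sub_cancel_left p x q]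
  exact Real.sqrt_le_sqrt hx

lemma IsArch.exists_sqrt_le_mul_sub (hpq : p < q) (hH : ContinuousOn H (Icc p q)) (hg : 0 ≤ g)
    (hr : 0 < r) (hPg : ∀ s ∈ Ioc 0 r, -2 * G (q - s) ≤ g * s)
    (hE : IsArch (fun s => -2 * G (q - s)) (fun s => -2 * H (q - s)) (q - p) E) :
    ∃ D > 0, ∀ᶠ x in 𝓝[<] q, √(E (q - x)) ≤ D * (q - x) := by
  obtain ⟨D, hD, h⟩ := hE.toIsProfile.eventually_sqrt_le_mul_self (sub_pos.2 hpq)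
    (continuousOn_const.mul (continuousOn_comp_sub_left hH)) hg hr hPg
  rw [← sub_self q] at h
  exact ⟨D, hD, (tendsto_sub_left_nhdsLT q q).eventually h⟩

lemma IsArch.isHalfOrbit (hpq : p < q) (hG : ContinuousOn G (Icc p q))
    (hH : ContinuousOn H (Icc p q))
    (hE : IsArch (fun s => -2 * G (q - s)) (fun s => -2 * H (q - s)) (q - p) E) (hu0 : u 0 = p)
    (huc : ContinuousOn u (Ici 0)) (hmaps : MapsTo u (Ioi 0) (Ioo p q))
    (hu : ∀ z ∈ Ioi 0, HasDerivAt u (√(E (q - u z))) z) (hulim : Tendsto u atTop (𝓝 q)) :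
    IsHalfOrbit G H p q u fun z => √(E (q - u z)) := by
  have hmaps' : MapsTo u (Ici 0) (Icc p q) := fun z hz => by
    rcases eq_or_lt_of_le (mem_Ici.1 hz) with rfl | hz
    · rw [hu0]
      exact left_mem_Icc.2 hpq.le
    · exact Ioo_subset_Icc_self (hmaps hz)
  have hφc : ContinuousOn (fun x => √(E (q - x))) (Icc p q) :=
    (hE.continuousOn.comp (by fun_prop)
      fun x hx => ⟨by linarith [hx.2], by linarith [hx.1]⟩).sqrt
  have hwc : ContinuousOn (fun z => √(E (q - u z))) (Ici 0) := hφc.comp huc hmaps'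
  refine
    { fst_zero := hu0
      snd_zero := by rw [hu0, hE.right, Real.sqrt_zero]
      hasDerivWithinAt_fst := hasDerivWithinAt_Ici_of_hasDerivAt_Ioi huc hwc hu
      hasDerivWithinAt_snd := hasDerivWithinAt_Ici_of_hasDerivAt_Ioi hwc
        ((hG.comp huc hmaps').add ((hH.comp huc hmaps').mul hwc)) fun z hz => ?_
      tendsto_fst := hulim
      tendsto_snd := ?_
      le_fst := fun z hz => (hmaps' hz).1 }
  · refine ((hE.hasDerivAt_sqrt_comp_sub (hmaps hz)).comp z (hu z hz)).congr_deriv ?_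
    have hEz := hE.pos (q - u z) ⟨by linarith [(hmaps hz).2], by linarith [(hmaps hz).1]⟩
    have hsqrt : √(E (q - u z)) ≠ 0 := (Real.sqrt_pos.2 hEz).ne'
    field_simp
  · have h := (hφc q (right_mem_Icc.2 hpq.le)).tendsto.comp (tendsto_nhdsWithin_iff.2
      ⟨hulim, (eventually_ge_atTop 0).mono fun z hz => hmaps' hz⟩)
    rwa [sub_self, hE.zero, Real.sqrt_zero] at h

theorem exists_isHalfOrbit (hpq : p < q) (hG : ContinuousOn G (Icc p q))
    (hH : ContinuousOn H (Icc p q)) (hGp : 0 < G p) (hg : 0 ≤ g) (hr : 0 < r)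
    (hPg : ∀ s ∈ Ioc 0 r, -2 * G (q - s) ≤ g * s)
    (hE : IsArch (fun s => -2 * G (q - s)) (fun s => -2 * H (q - s)) (q - p) E) :
    ∃ u w, IsHalfOrbit G H p q u w := by
  have hlow := hE.eventually_sqrt_mul_sqrt_sub_le hpq hG hH hGp
  obtain ⟨D, hD, hup⟩ := hE.exists_sqrt_le_mul_sub hpq hH hg hr hPg
  obtain ⟨u, hu0, huc, hmaps, hu, hulim⟩ := exists_scalar_flow hpq
    (HasDerivAt.continuousOn fun x hx => hE.hasDerivAt_sqrt_comp_sub hx)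
    (fun x hx => Real.sqrt_pos.2 (hE.pos _ ⟨by linarith [hx.2], by linarith [hx.1]⟩))
    (Real.sqrt_pos.2 hGp) hlow hD hup
  exact ⟨u, _, hE.isHalfOrbit hpq hG hH hu0 huc hmaps hu hulim⟩

lemma hasDerivAt_piecewise_Ici {f g f' g' : ℝ → ℝ} {c : ℝ} (hfg : f c = g c) (hfg' : f' c = g' c)
    (hf : ∀ z ∈ Ici c, HasDerivWithinAt f (f' z) (Ici c) z)
    (hg : ∀ z ∈ Iic c, HasDerivWithinAt g (g' z) (Iic c) z) (z : ℝ) :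
    HasDerivAt ((Ici c).piecewise f g) ((Ici c).piecewise f' g' z) z := by
  have hright : ∀ h k : ℝ → ℝ, EqOn ((Ici c).piecewise h k) h (Ici c) := piecewise_eqOn _
  have hleft : ∀ h k : ℝ → ℝ, h c = k c → EqOn ((Ici c).piecewise h k) k (Iic c) :=
    fun h k hc x hx => by
      rcases eq_or_lt_of_le (mem_Iic.1 hx) with rfl | hx
      · exact (hright h k self_mem_Ici).trans hc
      · exact piecewise_eq_of_notMem _ _ _ (notMem_Ici.2 hx)
  rw [← hasDerivWithinAt_univ, ← Ici_union_Iic (a := c)]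
  refine HasDerivWithinAt.union ?_ ?_
  · by_cases hz : z ∈ Ici c
    · exact ((hf z hz).congr (hright f g) (hright f g hz)).congr_deriv (hright f' g' hz).symm
    · exact HasFDerivWithinAt.of_notMem_closure (by rwa [closure_Ici])
  · by_cases hz : z ∈ Iic c
    · exact ((hg z hz).congr (hleft f g hfg) (hleft f g hfg hz)).congr_deriv
        (hleft f' g' hfg' hz).symm
    · exact HasFDerivWithinAt.of_notMem_closure (by rwa [closure_Iic])

lemma tendsto_piecewise_Ici_atTop {f g : ℝ → ℝ} {c : ℝ} {l : Filter ℝ} (hf : Tendsto f atTop l) :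
    Tendsto ((Ici c).piecewise f g) atTop l :=
  hf.congr' ((eventually_ge_atTop c).mono fun z hz => by
    rw [piecewise_eq_of_mem _ _ _ (mem_Ici.2 hz)])

lemma tendsto_piecewise_Ici_atBot {f g : ℝ → ℝ} {c : ℝ} {l : Filter ℝ} (hg : Tendsto g atBot l) :
    Tendsto ((Ici c).piecewise f g) atBot l :=
  hg.congr' ((eventually_lt_atBot c).mono fun z hz => by
    rw [piecewise_eq_of_notMem _ _ _ (notMem_Ici.2 hz)])

namespace IsHalfOrbit

lemma hasDerivWithinAt_reflect_fst (h : IsHalfOrbit G (-H) p q u w) :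
    ∀ z ∈ Iic 0, HasDerivWithinAt (fun z => u (-z)) (-w (-z)) (Iic 0) z := fun z hz =>
  ((h.hasDerivWithinAt_fst (-z) (mem_Ici.2 (neg_nonneg.2 hz))).comp z
    (hasDerivAt_neg z).hasDerivWithinAt fun _ hx => mem_Ici.2 (neg_nonneg.2 hx)).congr_deriv
      (mul_neg_one _)

lemma hasDerivWithinAt_reflect_snd (h : IsHalfOrbit G (-H) p q u w) :
    ∀ z ∈ Iic 0, HasDerivWithinAt (fun z => -w (-z)) (G (u (-z)) + H (u (-z)) * -w (-z))
      (Iic 0) z := fun z hz =>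
  ((h.hasDerivWithinAt_snd (-z) (mem_Ici.2 (neg_nonneg.2 hz))).comp z
    (hasDerivAt_neg z).hasDerivWithinAt fun _ hx => mem_Ici.2 (neg_nonneg.2 hx)).neg.congr_deriv
      (by simp only [Pi.neg_apply]; ring)

theorem exists_isHomoclinic (hpq : p ≠ q) (h : IsHalfOrbit G H p q a b)
    (h' : IsHalfOrbit G (-H) p q u w) :
    ∃ x y, IsHomoclinic G H q x y ∧ ∀ z, p ≤ x z := by
  set x : ℝ → ℝ := (Ici 0).piecewise a fun z => u (-z)
  set y : ℝ → ℝ := (Ici 0).piecewise b fun z => -w (-z)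
  have hfst : a 0 = u (-0) := by rw [neg_zero, h.fst_zero, h'.fst_zero]
  have hsnd : b 0 = -w (-0) := by rw [neg_zero, h.snd_zero, h'.snd_zero, neg_zero]
  have hx0 : x 0 = p := (piecewise_eq_of_mem _ _ _ self_mem_Ici).trans h.fst_zero
  have hderiv : ∀ z, HasDerivAt y (G (x z) + H (x z) * y z) z := fun z => by
    refine (hasDerivAt_piecewise_Ici hsnd (by rw [hfst, hsnd]) h.hasDerivWithinAt_snd
      h'.hasDerivWithinAt_reflect_snd z).congr_deriv ?_
    by_cases hz : z ∈ Ici 0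
    · simp only [x, y, piecewise_eq_of_mem _ _ _ hz]
    · simp only [x, y, piecewise_eq_of_notMem _ _ _ hz]
  refine ⟨x, y,
    { hasDerivAt_fst := hasDerivAt_piecewise_Ici hfst hsnd h.hasDerivWithinAt_fst
        h'.hasDerivWithinAt_reflect_fst
      hasDerivAt_snd := hderiv
      tendsto_fst_atBot :=
        tendsto_piecewise_Ici_atBot (h'.tendsto_fst.comp tendsto_neg_atBot_atTop)
      tendsto_fst_atTop := tendsto_piecewise_Ici_atTop h.tendsto_fst
      tendsto_snd_atBot := tendsto_piecewise_Ici_atBot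
        (neg_zero (G := ℝ) ▸ (h'.tendsto_snd.comp tendsto_neg_atBot_atTop).neg)
      tendsto_snd_atTop := tendsto_piecewise_Ici_atTop h.tendsto_snd
      nontrivial := fun htriv => hpq (hx0.symm.trans (htriv 0).1) }, fun z => ?_⟩
  by_cases hz : z ∈ Ici 0
  · exact (h.le_fst z hz).trans_eq (piecewise_eq_of_mem _ _ _ hz).symm
  · exact (h'.le_fst (-z) (mem_Ici.2 (neg_nonneg.2 (notMem_Ici.1 hz).le))).trans_eq
      (piecewise_eq_of_notMem (Ici 0) a (fun z => u (-z)) hz).symm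

end IsHalfOrbit

end HalfOrbit

section ContinuousCurves

variable {f u w : ℝ → ℝ} {a b c d q : ℝ}

lemma exists_first_eq_zero (hf : Continuous f) (hab : a < b) (ha : ∀ᶠ x in 𝓝[>] a, 0 < f x)
    (hb : f b ≤ 0) : ∃ c ∈ Ioc a b, f c = 0 ∧ ∀ x ∈ Ioo a c, 0 < f x := by
  obtain ⟨e, he, hpos⟩ := (mem_nhdsGT_iff_exists_Ioo_subset' hab).1
    (inter_mem ha (Ioo_mem_nhdsGT hab))
  obtain ⟨a', haa', ha'e⟩ := exists_between (mem_Ioi.1 he)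
  obtain ⟨c, hc, hfc, hmin⟩ :=
    exists_first_nonpos (hpos ⟨haa', ha'e⟩).2.2.le hf.continuousOn hb
  have hac : a < c := haa'.trans_le hc.1
  have hposc : ∀ x ∈ Ioo a c, 0 < f x := fun x hx => by
    rcases le_or_gt a' x with h | h
    · exact hmin x ⟨h, hx.2⟩
    · exact (hpos ⟨hx.1, h.trans ha'e⟩).1
  exact ⟨c, ⟨hac, hc.2⟩, hfc.antisymm (ge_of_tendsto (hf.continuousWithinAt (s := Iio c))
    (mem_of_superset (Ioo_mem_nhdsLT hac) fun x hx => (hposc x hx).le)), hposc⟩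

lemma exists_forall_ge_of_tendsto (hf : Continuous f) (hbot : Tendsto f atBot (𝓝 q))
    (htop : Tendsto f atTop (𝓝 q)) (ha : f a ≤ q) : ∃ z, ∀ x, f z ≤ f x := by
  by_cases hlt : ∃ x, f x < q
  · obtain ⟨x, hx⟩ := hlt
    refine hf.exists_forall_le' x ?_
    rw [cocompact_eq_atBot_atTop, eventually_sup]
    exact ⟨hbot.eventually_const_le hx, htop.eventually_const_le hx⟩
  · push Not at hlt
    exact ⟨a, fun x => ha.trans (hlt x)⟩

lemma eq_of_periodic_of_tendsto (hf : Function.Periodic f c) (hc : 0 < c)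
    (hlim : Tendsto f atTop (𝓝 q)) (x : ℝ) : f x = q := by
  have hshift : Tendsto (fun n : ℕ => x + n * c) atTop atTop :=
    tendsto_atTop_add_const_left _ _ (tendsto_natCast_atTop_atTop.atTop_mul_const hc)
  exact tendsto_nhds_unique
    (tendsto_const_nhds.congr fun n => (hf.nat_mul n x).symm) (hlim.comp hshift)

/-- The points of `[c, d]` where the second arc lies above, respectively below, the graph formed by
the first arc are closed sets covering `[c, d]`, so they have a common point. -/
lemma exists_eq_of_graph_crossing (hu : Continuous u) (hw : Continuous w) (hab : a ≤ b)
    (hcd : c ≤ d) (hmono : StrictMonoOn u (Icc a b))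
    (hmaps : MapsTo u (Icc c d) (Icc (u a) (u b))) (hc : ∀ x ∈ Icc a b, w c ≤ w x)
    (hud : u d = u b) (hwd : w b ≤ w d) :
    ∃ x ∈ Icc a b, ∃ z ∈ Icc c d, u x = u z ∧ w x = w z := by
  have hlift : ∀ z ∈ Icc c d, ∃ x ∈ Icc a b, u x = u z := fun z hz =>
    intermediate_value_Icc hab hu.continuousOn (hmaps hz)
  have hclosed : ∀ S : Set (ℝ × ℝ), IsClosed S →
      IsClosed (Prod.snd '' ((Icc a b ×ˢ Icc c d) ∩ S)) := fun S hS =>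
    (((isCompact_Icc.prod isCompact_Icc).inter_right hS).image continuous_snd).isClosed
  have hu₂ : IsClosed {p : ℝ × ℝ | u p.1 = u p.2} := isClosed_eq (by fun_prop) (by fun_prop)
  have habove := hclosed _ (hu₂.inter
    (isClosed_le (f := fun p : ℝ × ℝ => w p.1) (g := fun p => w p.2) (by fun_prop) (by fun_prop)))
  have hbelow := hclosed _ (hu₂.inter
    (isClosed_le (f := fun p : ℝ × ℝ => w p.2) (g := fun p => w p.1) (by fun_prop) (by fun_prop)))
  have hcover : Icc c d ⊆
      Prod.snd '' ((Icc a b ×ˢ Icc c d) ∩ {p | u p.1 = u p.2 ∧ w p.1 ≤ w p.2}) ∪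
        Prod.snd '' ((Icc a b ×ˢ Icc c d) ∩ {p | u p.1 = u p.2 ∧ w p.2 ≤ w p.1}) := fun z hz => by
    obtain ⟨x, hx, hxz⟩ := hlift z hz
    exact (le_total (w x) (w z)).imp (fun hle => ⟨(x, z), ⟨⟨hx, hz⟩, hxz, hle⟩, rfl⟩)
      fun hle => ⟨(x, z), ⟨⟨hx, hz⟩, hxz, hle⟩, rfl⟩
  obtain ⟨x, hx, hxc⟩ := hlift c (left_mem_Icc.2 hcd)
  obtain ⟨_, -, ⟨⟨x, z⟩, ⟨⟨hx, hz⟩, hux, hwx⟩, rfl⟩, ⟨⟨y, _⟩, ⟨⟨hy, -⟩, huy, hwy⟩, rfl⟩⟩ :=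
    isPreconnected_closed_iff.1 isPreconnected_Icc _ _ habove hbelow hcover
      ⟨d, right_mem_Icc.2 hcd, (b, d), ⟨⟨right_mem_Icc.2 hab, right_mem_Icc.2 hcd⟩, hud.symm, hwd⟩,
        rfl⟩
      ⟨c, left_mem_Icc.2 hcd, (x, c), ⟨⟨hx, left_mem_Icc.2 hcd⟩, hxc, hc x hx⟩, rfl⟩
  obtain rfl : x = y := hmono.injOn hx hy (hux.trans huy.symm)
  exact ⟨x, hx, _, hz, hux, hwx.antisymm hwy⟩

lemma eventually_pos_right (hu : ∀ z, HasDerivAt u (w z) z) (hw : HasDerivAt w d a)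
    (hwa : w a = 0) (hd : 0 < d) : ∀ᶠ z in 𝓝[>] a, 0 < w z ∧ u a < u z := by
  have hslope := (hasDerivWithinAt_iff_tendsto_slope' self_notMem_Ioi).1
    (hw.hasDerivWithinAt (s := Ioi a))
  obtain ⟨b, hb, hpos⟩ := mem_nhdsGT_iff_exists_Ioo_subset.1
    (hslope.eventually_const_lt hd)
  have hwpos : ∀ z ∈ Ioo a b, 0 < w z := fun z hz => by
    have h : 0 < slope w a z := hpos hz
    rwa [slope_def_field, hwa, sub_zero, div_pos_iff_of_pos_right (sub_pos.2 hz.1)] at h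
  filter_upwards [Ioo_mem_nhdsGT hb] with z hz
  refine ⟨hwpos z hz, strictMonoOn_of_hasDerivWithinAt_pos (convex_Icc a z)
    (HasDerivAt.continuousOn fun x _ => hu x) (fun x _ => (hu x).hasDerivWithinAt) (fun x hx => ?_)
    (left_mem_Icc.2 hz.1.le) (right_mem_Icc.2 hz.1.le) hz.1⟩
  rw [interior_Icc] at hx
  exact hwpos x ⟨hx.1, hx.2.trans hz.2⟩

lemma eventually_neg_right (hu : ∀ z, HasDerivAt u (w z) z) (hw : HasDerivAt w d a)
    (hwa : w a = 0) (hd : d < 0) : ∀ᶠ z in 𝓝[>] a, w z < 0 ∧ u z < u a := by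
  filter_upwards [eventually_pos_right (fun z => (hu z).neg) hw.neg (neg_eq_zero.2 hwa)
    (neg_pos.2 hd)] with z hz
  exact ⟨neg_pos.1 hz.1, neg_lt_neg_iff.1 hz.2⟩

end ContinuousCurves

section PlanarSystem

variable {G H u w u' w' : ℝ → ℝ} {q z t : ℝ} {D : Set ℝ}

namespace IsSolution

lemma continuous_fst (h : IsSolution G H u w) : Continuous u :=
  continuous_iff_continuousAt.2 fun z => (h.hasDerivAt_fst z).continuousAt

lemma continuous_snd (h : IsSolution G H u w) : Continuous w :=
  continuous_iff_continuousAt.2 fun z => (h.hasDerivAt_snd z).continuousAt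

lemma hasDerivAt_snd_of_eq_zero (h : IsSolution G H u w) (hz : w z = 0) :
    HasDerivAt w (G (u z)) z := by
  simpa only [hz, mul_zero, add_zero] using h.hasDerivAt_snd z

lemma reflect (h : IsSolution G H u w) :
    IsSolution G (-H) (fun z => u (-z)) (fun z => -w (-z)) where
  hasDerivAt_fst z := ((h.hasDerivAt_fst (-z)).scomp z (hasDerivAt_neg z)).congr_deriv
    (neg_one_smul ℝ _)
  hasDerivAt_snd z := ((h.hasDerivAt_snd (-z)).scomp z (hasDerivAt_neg z)).neg.congr_deriv (by
    simp only [neg_one_smul, neg_neg, Pi.neg_apply, neg_mul_neg])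

lemma comp_add_const (h : IsSolution G H u w) (c : ℝ) :
    IsSolution G H (fun z => u (z + c)) (fun z => w (z + c)) where
  hasDerivAt_fst z := (h.hasDerivAt_fst (z + c)).comp_add_const z c
  hasDerivAt_snd z := (h.hasDerivAt_snd (z + c)).comp_add_const z c

lemma const (hq : G q = 0) : IsSolution G H (fun _ => q) fun _ => 0 where
  hasDerivAt_fst z := hasDerivAt_const z q
  hasDerivAt_snd z := (hasDerivAt_const z 0).congr_deriv (by rw [hq, mul_zero, add_zero])

lemma nonneg_of_forall_ge (h : IsSolution G H u w) (hmin : ∀ x, u z ≤ u x) :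
    w z = 0 ∧ 0 ≤ G (u z) := by
  have hw : w z = 0 :=
    IsLocalMin.hasDerivAt_eq_zero (Eventually.of_forall hmin) (h.hasDerivAt_fst z)
  refine ⟨hw, not_lt.1 fun hneg => ?_⟩
  obtain ⟨x, -, hx⟩ := (eventually_neg_right h.hasDerivAt_fst
    (h.hasDerivAt_snd_of_eq_zero hw) hw hneg).exists
  exact hx.not_ge (hmin x)

lemma nonpos_of_forall_le (h : IsSolution G H u w) (hmax : ∀ x, u x ≤ u z) :
    w z = 0 ∧ G (u z) ≤ 0 := by
  have hw : w z = 0 :=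
    IsLocalMax.hasDerivAt_eq_zero (Eventually.of_forall hmax) (h.hasDerivAt_fst z)
  refine ⟨hw, not_lt.1 fun hpos => ?_⟩
  obtain ⟨x, -, hx⟩ := (eventually_pos_right h.hasDerivAt_fst
    (h.hasDerivAt_snd_of_eq_zero hw) hw hpos).exists
  exact hx.not_ge (hmax x)

theorem eq_of_eq (h : IsSolution G H u w) (h' : IsSolution G H u' w') (hD : IsOpen D)
    (hG : ContDiffOn ℝ 1 G D) (hH : ContDiffOn ℝ 1 H D) (hu : ∀ z, u z ∈ D)
    (hfst : u t = u' t) (hsnd : w t = w' t) : u = u' ∧ w = w' := by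
  have hclopen : IsClopen {z | (u z, w z) = (u' z, w' z)} := by
    refine ⟨isClosed_eq (h.continuous_fst.prodMk h.continuous_snd)
      (h'.continuous_fst.prodMk h'.continuous_snd), isOpen_iff_mem_nhds.2 fun z hz => ?_⟩
    have hGz : ContDiffAt ℝ 1 G (u z) := hG.contDiffAt (hD.mem_nhds (hu z))
    have hHz : ContDiffAt ℝ 1 H (u z) := hH.contDiffAt (hD.mem_nhds (hu z))
    have hfield : ContDiffAt ℝ 1 (fun p : ℝ × ℝ => (p.2, G p.1 + H p.1 * p.2)) (u z, w z) :=
      contDiffAt_snd.prodMk ((hGz.comp (u z, w z) contDiffAt_fst).add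
        ((hHz.comp (u z, w z) contDiffAt_fst).mul contDiffAt_snd))
    obtain ⟨C, S, hS, hlip⟩ := hfield.exists_lipschitzOnWith
    have hmem : ∀ {x y : ℝ → ℝ}, IsSolution G H x y → (u z, w z) = (x z, y z) →
        ∀ᶠ t in 𝓝 z, HasDerivAt (fun t => (x t, y t)) (y t, G (x t) + H (x t) * y t) t ∧
          (x t, y t) ∈ S := fun {x y} hxy heq =>
      (((hxy.continuous_fst.prodMk hxy.continuous_snd).tendsto z).eventually_mem
        (heq ▸ hS)).mono fun t ht => ⟨(hxy.hasDerivAt_fst t).prodMk (hxy.hasDerivAt_snd t), ht⟩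
    exact ODE_solution_unique_of_eventually
      (v := fun _ (p : ℝ × ℝ) => (p.2, G p.1 + H p.1 * p.2))
      (Eventually.of_forall fun _ => hlip) (hmem h rfl) (hmem h' hz) hz
  have heq := eq_univ_iff_forall.1 (hclopen.eq_univ ⟨t, Prod.ext hfst hsnd⟩)
  exact ⟨funext fun z => congrArg Prod.fst (heq z), funext fun z => congrArg Prod.snd (heq z)⟩

end IsSolution

namespace IsHomoclinic

lemma reflect (h : IsHomoclinic G H q u w) :
    IsHomoclinic G (-H) q (fun z => u (-z)) (fun z => -w (-z)) where
  toIsSolution := h.toIsSolution.reflect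
  tendsto_fst_atBot := h.tendsto_fst_atTop.comp tendsto_neg_atBot_atTop
  tendsto_fst_atTop := h.tendsto_fst_atBot.comp tendsto_neg_atTop_atBot
  tendsto_snd_atBot := neg_zero (G := ℝ) ▸ (h.tendsto_snd_atTop.comp tendsto_neg_atBot_atTop).neg
  tendsto_snd_atTop := neg_zero (G := ℝ) ▸ (h.tendsto_snd_atBot.comp tendsto_neg_atTop_atBot).neg
  nontrivial htriv := h.nontrivial fun z => by
    simpa only [neg_neg, neg_eq_zero] using htriv (-z)

lemma injective (h : IsHomoclinic G H q u w) (hD : IsOpen D) (hG : ContDiffOn ℝ 1 G D)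
    (hH : ContDiffOn ℝ 1 H D) (hu : ∀ z, u z ∈ D) : Function.Injective fun z => (u z, w z) := by
  refine .of_lt_imp_ne fun x y hxy heq => h.nontrivial ?_
  obtain ⟨hfst, hsnd⟩ := (h.comp_add_const (y - x)).eq_of_eq h.toIsSolution hD hG hH
    (fun z => hu _) (t := x) (by simpa only [add_sub_cancel] using (congrArg Prod.fst heq).symm)
    (by simpa only [add_sub_cancel] using (congrArg Prod.snd heq).symm)
  exact fun z =>
    ⟨eq_of_periodic_of_tendsto (congrFun hfst) (sub_pos.2 hxy) h.tendsto_fst_atTop z,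
      eq_of_periodic_of_tendsto (congrFun hsnd) (sub_pos.2 hxy) h.tendsto_snd_atTop z⟩

lemma ne_zero_of_snd_eq_zero (h : IsHomoclinic G H q u w) (hD : IsOpen D)
    (hG : ContDiffOn ℝ 1 G D) (hH : ContDiffOn ℝ 1 H D) (hu : ∀ z, u z ∈ D) (hz : w z = 0) :
    G (u z) ≠ 0 := by
  intro hGz
  obtain ⟨hfst, hsnd⟩ :=
    h.toIsSolution.eq_of_eq (IsSolution.const hGz) hD hG hH hu (t := z) rfl hz
  exact one_ne_zero (h.injective hD hG hH hu (a₁ := 1) (a₂ := 0)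
    (Prod.ext ((congrFun hfst 1).trans (congrFun hfst 0).symm)
      ((congrFun hsnd 1).trans (congrFun hsnd 0).symm)))

lemma fst_lt (h : IsHomoclinic G H q u w) (hD : IsOpen D) (hG : ContDiffOn ℝ 1 G D)
    (hH : ContDiffOn ℝ 1 H D) (hu : ∀ z, u z ∈ D) (hGq : ∀ x, q ≤ x → 0 ≤ G x) (z : ℝ) :
    u z < q := by
  by_contra! hz
  obtain ⟨x, hmax⟩ := exists_forall_ge_of_tendsto h.continuous_fst.neg h.tendsto_fst_atBot.neg
    h.tendsto_fst_atTop.neg (neg_le_neg hz)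
  obtain ⟨hwx, hGx⟩ := h.nonpos_of_forall_le (z := x) fun y => neg_le_neg_iff.1 (hmax y)
  exact h.ne_zero_of_snd_eq_zero hD hG hH hu hwx
    (hGx.antisymm (hGq _ (hz.trans (neg_le_neg_iff.1 (hmax z)))))

lemma exists_turning_point (h : IsHomoclinic G H q u w) (hD : IsOpen D) (hG : ContDiffOn ℝ 1 G D)
    (hH : ContDiffOn ℝ 1 H D) (hu : ∀ z, u z ∈ D) (hGq : ∀ x, q ≤ x → 0 ≤ G x) :
    ∃ z, (∀ x, u z ≤ u x) ∧ w z = 0 ∧ 0 < G (u z) := by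
  obtain ⟨z, hmin⟩ := exists_forall_ge_of_tendsto h.continuous_fst h.tendsto_fst_atBot
    h.tendsto_fst_atTop (h.fst_lt hD hG hH hu hGq 0).le
  obtain ⟨hwz, hGz⟩ := h.nonneg_of_forall_ge hmin
  exact ⟨z, hmin, hwz, hGz.lt_of_ne' (h.ne_zero_of_snd_eq_zero hD hG hH hu hwz)⟩

lemma exists_return (h : IsHomoclinic G H q u w) (hz : u z < q) (hwz : w z = 0)
    (hGz : G (u z) < 0) :
    ∃ c d, z < c ∧ c < d ∧ w c < 0 ∧ u d = u z ∧ 0 ≤ w d ∧ ∀ x ∈ Ioo z d, u x < u z := by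
  have hleave := eventually_neg_right h.hasDerivAt_fst (h.hasDerivAt_snd_of_eq_zero hwz) hwz hGz
  obtain ⟨y, hy, hzy⟩ := ((h.tendsto_fst_atTop.eventually_const_le hz).and
    (eventually_gt_atTop z)).exists
  obtain ⟨d, hd, hud, hbelow⟩ := exists_first_eq_zero (f := fun x => u z - u x)
    (continuous_const.sub h.continuous_fst) hzy
    (hleave.mono fun x hx => sub_pos.2 hx.2) (sub_nonpos.2 hy)
  have hwd : 0 ≤ w d := neg_nonpos.1 (deriv_nonpos_of_forall_le_left
    ((h.hasDerivAt_fst d).const_sub _) hd.1 fun x hx => hud.trans_le (hbelow x hx).le)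
  obtain ⟨c, ⟨hwc, -⟩, hc⟩ := (hleave.and (Ioo_mem_nhdsGT hd.1)).exists
  exact ⟨c, d, hc.1, hc.2, hwc, (sub_eq_zero.1 hud).symm, hwd, fun x hx => sub_pos.1 (hbelow x hx)⟩

/-- If the orbit met the axis `w = 0` again at `y > z`, it would run down to the left of `u y` and
come back to the abscissa `u y` across its own arc over `[z, y]`. -/
lemma snd_pos_of_turning_point (h : IsHomoclinic G H q u w) (hD : IsOpen D)
    (hG : ContDiffOn ℝ 1 G D) (hH : ContDiffOn ℝ 1 H D) (hu : ∀ z, u z ∈ D)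
    (hlt : ∀ z, u z < q) (hmin : ∀ x, u z ≤ u x) (hwz : w z = 0) (hGz : 0 < G (u z)) {x : ℝ}
    (hx : z < x) : 0 < w x := by
  by_contra! hwx
  obtain ⟨y, hy, hwy, hpos⟩ := exists_first_eq_zero h.continuous_snd hx
    ((eventually_pos_right h.hasDerivAt_fst (h.hasDerivAt_snd_of_eq_zero hwz) hwz hGz).mono
      fun _ => And.left) hwx
  have hGy : G (u y) < 0 := lt_of_le_of_ne
    (deriv_nonpos_of_forall_le_left (h.hasDerivAt_snd_of_eq_zero hwy) hy.1
      fun t ht => hwy.trans_le (hpos t ht).le)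
    (h.ne_zero_of_snd_eq_zero hD hG hH hu hwy)
  obtain ⟨c, d, hyc, hcd, hwc, hud, hwd, hbelow⟩ := h.exists_return (hlt y) hwy hGy
  have hw_nonneg : ∀ t ∈ Icc z y, 0 ≤ w t := fun t ht => by
    rcases eq_or_lt_of_le ht.1 with rfl | hzt
    · exact hwz.ge
    rcases eq_or_lt_of_le ht.2 with rfl | hty
    · exact hwy.ge
    exact (hpos t ⟨hzt, hty⟩).le
  have hmaps : MapsTo u (Icc c d) (Icc (u z) (u y)) := fun t ht => by
    refine ⟨hmin t, ?_⟩
    rcases eq_or_lt_of_le ht.2 with rfl | htd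
    · exact hud.le
    · exact (hbelow t ⟨hyc.trans_le ht.1, htd⟩).le
  obtain ⟨s, hs, t, ht, hst⟩ := exists_eq_of_graph_crossing h.continuous_fst h.continuous_snd
    hy.1.le hcd.le
    (strictMonoOn_of_hasDerivWithinAt_pos (convex_Icc z y) h.continuous_fst.continuousOn
      (fun t _ => (h.hasDerivAt_fst t).hasDerivWithinAt)
      fun t ht => hpos t (interior_Icc.subset ht))
    hmaps (fun t ht => hwc.le.trans (hw_nonneg t ht)) hud (hwy.trans_le hwd)
  exact (hs.2.trans_lt (hyc.trans_le ht.1)).ne (h.injective hD hG hH hu (Prod.ext hst.1 hst.2))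

end IsHomoclinic

end PlanarSystem

section Arcs

variable {G H u w U : ℝ → ℝ} {a q : ℝ} {I : Set ℝ} {l : Filter ℝ}

/-- Here `l` is the filter of neighborhoods of the left end of the half-line `I`. -/
lemma image_eq_Ioo_of_tendsto [l.NeBot] (hI : IsUpperSet I)
    (hl : l.HasBasis (· ∈ I) fun x => I ∩ Iio x) (hu : ContinuousOn u I) (hmono : StrictMonoOn u I)
    (hbot : Tendsto u l (𝓝 a)) (htop : Tendsto u atTop (𝓝 q)) : u '' I = Ioo a q := by
  have hle : ∀ x ∈ I, a ≤ u x := fun x hx => le_of_tendsto hbot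
    (mem_of_superset (hl.mem_of_mem hx) fun y hy => (hmono hy.1 hx hy.2).le)
  have hge : ∀ x ∈ I, u x ≤ q := fun x hx => ge_of_tendsto htop
    ((eventually_ge_atTop x).mono fun y hy => hmono.monotoneOn hx (hI hy hx) hy)
  refine Subset.antisymm ?_ fun y hy => ?_
  · rintro _ ⟨x, hx, rfl⟩
    obtain ⟨y, hyI, hyx⟩ := Filter.nonempty_of_mem (hl.mem_of_mem hx)
    exact ⟨(hle y hyI).trans_lt (hmono hyI hx hyx),
      (hmono hx (hI (lt_add_one x).le hx) (lt_add_one x)).trans_le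
        (hge _ (hI (lt_add_one x).le hx))⟩
  · obtain ⟨x₀, hx₀⟩ := hl.ex_mem
    obtain ⟨b, hby, hbI, -⟩ := ((hbot.eventually_lt_const hy.1).and (hl.mem_of_mem hx₀)).exists
    obtain ⟨c, hyc, hbc⟩ := ((htop.eventually_const_lt hy.2).and (eventually_ge_atTop b)).exists
    have hsub : Icc b c ⊆ I := fun x hx => hI hx.1 hbI
    exact image_mono hsub
      (intermediate_value_Icc hbc (hu.mono hsub) ⟨hby.le, hyc.le⟩)

lemma tendsto_inverse_nhdsGT (hl : l.HasBasis (· ∈ I) fun x => I ∩ Iio x)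
    (hmono : StrictMonoOn u I) (himg : u '' I = Ioo a q) (hU : MapsTo U (Ioo a q) I)
    (hinv : RightInvOn U u (Ioo a q)) : Tendsto U (𝓝[>] a) l := by
  refine hl.tendsto_right_iff.2 fun x hx => ?_
  have hux : u x ∈ Ioo a q := himg.subset (mem_image_of_mem u hx)
  filter_upwards [Ioo_mem_nhdsGT hux.1] with y hy
  have hy' : y ∈ Ioo a q := ⟨hy.1, hy.2.trans hux.2⟩
  exact ⟨hU hy', (hmono.lt_iff_lt (hU hy') hx).1 ((hinv hy').trans_lt hy.2)⟩

lemma tendsto_inverse_nhdsLT (hI : IsUpperSet I) (hne : I.Nonempty) (hmono : StrictMonoOn u I)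
    (himg : u '' I = Ioo a q) (hU : MapsTo U (Ioo a q) I) (hinv : RightInvOn U u (Ioo a q)) :
    Tendsto U (𝓝[<] q) atTop := by
  obtain ⟨x₀, hx₀⟩ := hne
  refine tendsto_atTop.2 fun b => ?_
  have hx : max x₀ b ∈ I := hI (le_max_left x₀ b) hx₀
  have hux : u (max x₀ b) ∈ Ioo a q := himg.subset (mem_image_of_mem u hx)
  filter_upwards [Ioo_mem_nhdsLT hux.2] with y hy
  have hy' : y ∈ Ioo a q := ⟨hux.1.trans hy.1, hy.2⟩
  exact (le_max_right x₀ b).trans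
    ((hmono.lt_iff_lt hx (hU hy')).1 (hy.1.trans_eq (hinv hy').symm)).le

lemma exists_isArch_of_tendsto {P R F : ℝ → ℝ} {T : ℝ} (hT : 0 < T)
    (hpos : ∀ s ∈ Ioo 0 T, 0 < F s) (hF : ∀ s ∈ Ioo 0 T, HasDerivAt F (P s + R s * √(F s)) s)
    (h0 : Tendsto F (𝓝[>] 0) (𝓝 0)) (hFT : Tendsto F (𝓝[<] T) (𝓝 0)) : ∃ E, IsArch P R T E := by
  have hcont : ContinuousOn F (Ioo 0 T) := HasDerivAt.continuousOn hF
  have heq : EqOn (extendFrom (Ioo 0 T) F) F (Ioo 0 T) := fun s hs =>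
    extendFrom_extends hcont s hs
  exact ⟨extendFrom (Ioo 0 T) F,
    { continuousOn := continuousOn_Icc_extendFrom_Ioo hcont h0 hFT
      zero := eq_lim_at_left_extendFrom_Ioo hT h0
      right := eq_lim_at_right_extendFrom_Ioo hT hFT
      pos := fun s hs => (heq hs).symm ▸ hpos s hs
      hasDerivAt := fun s hs => by
        rw [heq hs]
        exact (hF s hs).congr_of_eventuallyEq (heq.eventuallyEq_of_mem (isOpen_Ioo.mem_nhds hs)) }⟩

theorem IsSolution.exists_isArch [l.NeBot] (h : IsSolution G H u w) (hIo : IsOpen I)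
    (hI : IsUpperSet I) (hl : l.HasBasis (· ∈ I) fun x => I ∩ Iio x) (hpos : ∀ z ∈ I, 0 < w z)
    (hua : Tendsto u l (𝓝 a)) (hwa : Tendsto w l (𝓝 0)) (huq : Tendsto u atTop (𝓝 q))
    (hwq : Tendsto w atTop (𝓝 0)) :
    ∃ E, IsArch (fun s => -2 * G (q - s)) (fun s => -2 * H (q - s)) (q - a) E := by
  have hmono := strictMonoOn_of_hasDerivAt_pos hI.ordConnected.convex
    (fun z _ => h.hasDerivAt_fst z) hpos
  have himg := image_eq_Ioo_of_tendsto hI hl h.continuous_fst.continuousOn hmono hua huq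
  obtain ⟨U, hderiv, -, hUimg, hinv⟩ := exists_inverse_of_hasDerivAt_inv
    (φ := fun z => (w z)⁻¹) hIo hI.ordConnected.convex isOpen_Ioo
    (fun z hz => inv_pos.2 (hpos z hz))
    (fun z _ => (h.hasDerivAt_fst z).congr_deriv (inv_inv _).symm) himg
  have hU : MapsTo U (Ioo a q) I := mapsTo_iff_image_subset.2 hUimg.subset
  obtain ⟨x₀, hx₀⟩ := hl.ex_mem
  have haq : a < q := nonempty_Ioo.1 (himg ▸ ⟨_, mem_image_of_mem u hx₀⟩)
  have hsub : ∀ s ∈ Ioo 0 (q - a), q - s ∈ Ioo a q := fun s hs =>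
    ⟨by linarith [hs.2], by linarith [hs.1]⟩
  have hw : ∀ s ∈ Ioo 0 (q - a), 0 < w (U (q - s)) := fun s hs => hpos _ (hU (hsub s hs))
  have hlim : ∀ {l₁ l₂ l₃ : Filter ℝ}, Tendsto w l₁ (𝓝 0) → Tendsto U l₂ l₁ →
      Tendsto (fun s => q - s) l₃ l₂ → Tendsto (fun s => w (U (q - s)) ^ 2) l₃ (𝓝 0) :=
    fun hw hU hq => zero_pow (M₀ := ℝ) two_ne_zero ▸ ((hw.comp (hU.comp hq)).pow 2)
  refine exists_isArch_of_tendsto (F := fun s => w (U (q - s)) ^ 2) (sub_pos.2 haq)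
    (fun s hs => pow_pos (hw s hs) 2) (fun s hs => ?_) ?_ ?_
  · have hE := ((h.hasDerivAt_snd _).comp s ((hderiv _ (hsub s hs)).comp s
      ((hasDerivAt_id' s).const_sub q))).pow 2
    refine hE.congr_deriv ?_
    have hne := (hw s hs).ne'
    rw [Real.sqrt_sq (hw s hs).le]
    simp only [Function.comp_apply, hinv (hsub s hs)]
    field_simp
    ring
  · exact hlim hwq (tendsto_inverse_nhdsLT hI ⟨x₀, hx₀⟩ hmono himg hU hinv)
      ((tendsto_sub_left_nhdsGT q 0).mono_right (by rw [sub_zero]))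
  · exact hlim hwa (tendsto_inverse_nhdsGT hl hmono himg hU hinv)
      ((tendsto_sub_left_nhdsLT q (q - a)).mono_right (by rw [sub_sub_cancel]))

theorem IsSolution.exists_isArch_of_front (h : IsSolution G H u w) (hpos : ∀ z, 0 < w z)
    (hua : Tendsto u atBot (𝓝 a)) (hwa : Tendsto w atBot (𝓝 0)) (huq : Tendsto u atTop (𝓝 q))
    (hwq : Tendsto w atTop (𝓝 0)) :
    ∃ E, IsArch (fun s => -2 * G (q - s)) (fun s => -2 * H (q - s)) (q - a) E :=
  h.exists_isArch isOpen_univ isUpperSet_univ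
    (by simpa only [univ_inter, mem_univ] using atBot_basis_Iio) (fun z _ => hpos z) hua hwa huq hwq

theorem IsSolution.exists_isArch_of_back (h : IsSolution G H u w) (hneg : ∀ z, w z < 0)
    (huq : Tendsto u atBot (𝓝 q)) (hwq : Tendsto w atBot (𝓝 0)) (hua : Tendsto u atTop (𝓝 a))
    (hwa : Tendsto w atTop (𝓝 0)) :
    ∃ E, IsArch (fun s => -2 * G (q - s)) (fun s => 2 * H (q - s)) (q - a) E := by
  simpa only [Pi.neg_apply, mul_neg, neg_mul, neg_neg] using
    h.reflect.exists_isArch_of_front (fun z => neg_pos.2 (hneg (-z)))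
      (hua.comp tendsto_neg_atBot_atTop)
      (neg_zero (G := ℝ) ▸ (hwa.comp tendsto_neg_atBot_atTop).neg)
      (huq.comp tendsto_neg_atTop_atBot)
      (neg_zero (G := ℝ) ▸ (hwq.comp tendsto_neg_atTop_atBot).neg)

namespace IsHomoclinic

variable {D : Set ℝ} {z : ℝ}

lemma exists_isArch_of_turning_point (h : IsHomoclinic G H q u w) (hD : IsOpen D)
    (hG : ContDiffOn ℝ 1 G D) (hH : ContDiffOn ℝ 1 H D) (hu : ∀ z, u z ∈ D) (hlt : ∀ z, u z < q)
    (hmin : ∀ x, u z ≤ u x) (hwz : w z = 0) (hGz : 0 < G (u z)) :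
    ∃ E, IsArch (fun s => -2 * G (q - s)) (fun s => -2 * H (q - s)) (q - u z) E :=
  h.exists_isArch (I := Ioi z) (l := 𝓝[>] z) isOpen_Ioi (isUpperSet_Ioi z)
    (by simpa only [Ioi_inter_Iio, mem_Ioi] using nhdsGT_basis z)
    (fun _ hx => h.snd_pos_of_turning_point hD hG hH hu hlt hmin hwz hGz hx)
    (h.continuous_fst.continuousWithinAt (s := Ioi z))
    (hwz ▸ h.continuous_snd.continuousWithinAt (s := Ioi z)) h.tendsto_fst_atTop h.tendsto_snd_atTop

theorem exists_hasLoop (h : IsHomoclinic G H q u w) (hD : IsOpen D) (hG : ContDiffOn ℝ 1 G D)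
    (hH : ContDiffOn ℝ 1 H D) (hu : ∀ z, u z ∈ D) (hGq : ∀ x, q ≤ x → 0 ≤ G x) :
    ∃ a ∈ D, a < q ∧ 0 < G a ∧
      HasLoop (fun s => -2 * G (q - s)) (fun s => 2 * H (q - s)) (q - a) := by
  obtain ⟨z, hmin, hwz, hGz⟩ := h.exists_turning_point hD hG hH hu hGq
  have hlt := h.fst_lt hD hG hH hu hGq
  have hupper := h.exists_isArch_of_turning_point hD hG hH hu hlt hmin hwz hGz
  have hlower := h.reflect.exists_isArch_of_turning_point (z := -z) hD hG hH.neg (fun _ => hu _)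
    (fun _ => hlt _) (fun x => by simpa only [neg_neg] using hmin (-x))
    (by simpa only [neg_neg, neg_eq_zero] using hwz) (by simpa only [neg_neg] using hGz)
  refine ⟨u z, hu z, hlt z, hGz, ?_, ?_⟩
  · simpa only [Pi.neg_apply, mul_neg, neg_mul, neg_neg] using hlower
  · rw [Pi.neg_def]
    simpa only [neg_mul] using hupper

end IsHomoclinic

end Arcs

section Force

lemma continuousOn_comp_const_sub {f : ℝ → ℝ} {q : ℝ} {I : Set ℝ} (hf : ContinuousOn f (Ioi 0))
    (hI : ∀ s ∈ I, s < q) : ContinuousOn (fun s => f (q - s)) I :=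
  hf.comp (by fun_prop) fun s hs => mem_Ioi.2 (sub_pos.2 (hI s hs))

/-- A force field on the half-line `u > 0` with a center `u₀` between the (possibly degenerate,
`ℓ = 0`) saddle `ℓ` and the saddle `q`; in the traffic model `G = g₁ f`, with `u₁`, `u₀`, `u₂`
for `ℓ`, `u₀`, `q`, and `ℓ = 0` when `f` has only two positive zeros. -/
structure IsForce (G : ℝ → ℝ) (ℓ u₀ q : ℝ) : Prop where
  left_nonneg : 0 ≤ ℓ
  left_lt_center : ℓ < u₀
  center_lt_right : u₀ < q
  contDiffOn : ContDiffOn ℝ 1 G (Ioi 0)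
  center : G u₀ = 0
  right : G q = 0
  nonpos : ∀ x ∈ Ioc 0 ℓ, G x ≤ 0
  pos : ∀ x ∈ Ioo ℓ u₀, 0 < G x
  neg : ∀ x ∈ Ioo u₀ q, G x < 0
  pos_of_right_lt : ∀ x, q < x → 0 < G x
  exists_deriv_neg : ∃ d < 0, HasDerivAt G d u₀

variable {G H₀ k : ℝ → ℝ} {ℓ u₀ q μb μf : ℝ}

namespace IsForce

lemma right_pos (hG : IsForce G ℓ u₀ q) : 0 < q :=
  (hG.left_nonneg.trans_lt hG.left_lt_center).trans hG.center_lt_right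

lemma mapsTo_reflect (hG : IsForce G ℓ u₀ q) : MapsTo (fun s => q - s) (Ico 0 (q - ℓ)) (Ioi 0) :=
  fun s hs => mem_Ioi.2 (by linarith [hs.2, hG.left_nonneg])

lemma isDownCrossing {T : ℝ} (hG : IsForce G ℓ u₀ q) (hT₀ : q - u₀ < T) (hTℓ : T ≤ q - ℓ)
    (hTq : T < q) : IsDownCrossing (fun s => -2 * G (q - s)) (q - u₀) T where
  zero_lt := sub_pos.2 hG.center_lt_right
  lt_right := hT₀
  continuousOn := continuousOn_const.mul
    (continuousOn_comp_const_sub hG.contDiffOn.continuousOn fun _ hs => hs.2.trans_lt hTq)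
  pos s hs := by linarith [hG.neg (q - s) ⟨by linarith [hs.2], by linarith [hs.1]⟩]
  neg s hs := by linarith [hG.pos (q - s) ⟨by linarith [hs.2], by linarith [hs.1]⟩]
  slope := by
    obtain ⟨d, hd, hderiv⟩ := hG.exists_deriv_neg
    have hslope : ∀ᶠ y in 𝓝[>] u₀, slope G u₀ y < d / 2 :=
      (hasDerivWithinAt_iff_tendsto_slope' self_notMem_Ioi).1 hderiv.hasDerivWithinAt
        |>.eventually_lt_const (by linarith)
    have hlim := tendsto_sub_left_nhdsLT q (q - u₀)
    rw [sub_sub_cancel] at hlim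
    refine ⟨-d, neg_pos.2 hd, ?_⟩
    filter_upwards [hlim.eventually hslope, self_mem_nhdsWithin] with s hs hsu
    have hpos : 0 < q - s - u₀ := by linarith [mem_Iio.1 hsu]
    rw [slope_def_field, hG.center, sub_zero, div_lt_iff₀ hpos] at hs
    linarith

lemma isDownCrossing_of_mem {T : ℝ} (hG : IsForce G ℓ u₀ q) (hT : T ∈ Ioo (q - u₀) (q - ℓ)) :
    IsDownCrossing (fun s => -2 * G (q - s)) (q - u₀) T :=
  hG.isDownCrossing hT.1 hT.2.le (by linarith [hT.2, hG.left_nonneg])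

lemma exists_neg_two_mul_le (hG : IsForce G ℓ u₀ q) :
    ∃ g ≥ 0, ∀ s ∈ Ioc 0 (q / 2), -2 * G (q - s) ≤ g * s := by
  have hq := hG.right_pos
  obtain ⟨C, hC⟩ := (hG.contDiffOn.mono fun x (hx : x ∈ Icc (q / 2) q) =>
    mem_Ioi.2 ((half_pos hq).trans_le hx.1)).exists_lipschitzOnWith one_ne_zero
      (convex_Icc _ _) isCompact_Icc
  refine ⟨2 * C, by positivity, fun s hs => ?_⟩
  have h := hC.dist_le_mul (q - s) ⟨by linarith [hs.2], by linarith [hs.1]⟩ q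
    ⟨by linarith, le_rfl⟩
  rw [hG.right, Real.dist_eq, Real.dist_eq, sub_zero, sub_sub_cancel_left, abs_neg,
    abs_of_pos hs.1] at h
  linarith [neg_abs_le (G (q - s))]

lemma exists_isHomoclinic {H : ℝ → ℝ} {r : ℝ} (hG : IsForce G ℓ u₀ q)
    (hH : ContinuousOn H (Ioi 0)) (hr : r ∈ Ioo (q - u₀) (q - ℓ))
    (h : HasLoop (fun s => -2 * G (q - s)) (fun s => 2 * H (q - s)) r) :
    ∃ u w, IsHomoclinic G H q u w ∧ ∀ z, 0 < u z := by
  obtain ⟨⟨E, hE⟩, F, hF⟩ := h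
  obtain ⟨g, hg, hPg⟩ := hG.exists_neg_two_mul_le
  have hp0 : 0 < q - r := by linarith [hr.2, hG.left_nonneg]
  have hpq : q - r < q := by linarith [hr.1, hG.center_lt_right]
  have hsub : Icc (q - r) q ⊆ Ioi 0 := fun x hx => mem_Ioi.2 (hp0.trans_le hx.1)
  have hGp : 0 < G (q - r) := hG.pos _ ⟨by linarith [hr.2], by linarith [hr.1]⟩
  have hGc := hG.contDiffOn.continuousOn.mono hsub
  have hHc := hH.mono hsub
  obtain ⟨a, b, hab⟩ := exists_isHalfOrbit hpq hGc hHc hGp hg (half_pos hG.right_pos) hPg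
    (E := F) (by simpa only [sub_sub_cancel, Pi.neg_def, neg_mul] using hF)
  obtain ⟨a', b', hab'⟩ := exists_isHalfOrbit hpq hGc hHc.neg hGp hg (half_pos hG.right_pos) hPg
    (E := E) (by simpa only [sub_sub_cancel, Pi.neg_apply, neg_mul, mul_neg, neg_neg] using hE)
  obtain ⟨u, w, huw, hle⟩ := hab.exists_isHomoclinic hpq.ne hab'
  exact ⟨u, w, huw, fun z => hp0.trans_le (hle z)⟩

lemma exists_hasLoop_of_isHomoclinic {H u w : ℝ → ℝ} (hG : IsForce G ℓ u₀ q)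
    (hH : ContDiffOn ℝ 1 H (Ioi 0)) (h : IsHomoclinic G H q u w) (hu : ∀ z, 0 < u z) :
    ∃ r ∈ Ioo (q - u₀) (q - ℓ), HasLoop (fun s => -2 * G (q - s)) (fun s => 2 * H (q - s)) r := by
  have hGq : ∀ x, q ≤ x → 0 ≤ G x := fun x hx => by
    rcases eq_or_lt_of_le hx with rfl | hx
    · exact hG.right.ge
    · exact (hG.pos_of_right_lt x hx).le
  obtain ⟨a, ha, haq, hGa, hloop⟩ := h.exists_hasLoop isOpen_Ioi hG.contDiffOn hH hu hGq
  have hℓa : ℓ < a := by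
    by_contra! hle
    exact (hG.nonpos a ⟨ha, hle⟩).not_gt hGa
  have hau₀ : a < u₀ := by
    by_contra! hle
    rcases eq_or_lt_of_le hle with rfl | hlt
    · exact hGa.ne' hG.center
    · exact (hG.neg a ⟨hlt, haq⟩).not_gt hGa
  exact ⟨q - a, ⟨by linarith, by linarith⟩, hloop⟩

theorem existsUnique_isHomoclinic (hG : IsForce G ℓ u₀ q) (hH₀ : ContDiffOn ℝ 1 H₀ (Ioi 0))
    (hk : ContDiffOn ℝ 1 k (Ioi 0)) (hk0 : ∀ x, 0 < x → 0 < k x)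
    (hex : ∃ μ, ∃ r ∈ Ioo (q - u₀) (q - ℓ), HasLoop (fun s => -2 * G (q - s))
      (fun s => 2 * H₀ (q - s) + μ * (2 * k (q - s))) r) :
    ∃ μp, ∀ μ, (∃ u w, IsHomoclinic G (fun x => H₀ x + μ * k x) q u w ∧ ∀ z, 0 < u z) ↔
      μ = μp := by
  have hfun : ∀ μ, (fun s => 2 * (H₀ (q - s) + μ * k (q - s))) =
      fun s => 2 * H₀ (q - s) + μ * (2 * k (q - s)) := fun μ => by
    funext s
    ring
  have hH : ∀ μ, ContDiffOn ℝ 1 (fun x => H₀ x + μ * k x) (Ioi 0) := fun μ =>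
    hH₀.add (contDiffOn_const.mul hk)
  have hk' : ∀ s ∈ Ioo 0 (q - ℓ), 0 < 2 * k (q - s) := fun s hs =>
    mul_pos two_pos (hk0 _ (hG.mapsTo_reflect (Ioo_subset_Ico_self hs)))
  have hnlt {μ₁ μ₂ r₁ r₂} := HasLoop.not_lt (μ₁ := μ₁) (μ₂ := μ₂) (p₁ := r₁) (p₂ := r₂)
    (r := fun s => 2 * H₀ (q - s)) (fun _ => hG.isDownCrossing_of_mem) hk'
  obtain ⟨μp, r, hr, hloop⟩ := hex
  refine ⟨μp, fun μ => ⟨fun ⟨u, w, h, hu⟩ => ?_, ?_⟩⟩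
  · obtain ⟨r', hr', hloop'⟩ := hG.exists_hasLoop_of_isHomoclinic (hH μ) h hu
    rw [hfun] at hloop'
    exact (not_lt.1 (hnlt hr hr' hloop hloop')).antisymm (not_lt.1 (hnlt hr' hr hloop' hloop))
  · rintro rfl
    rw [← hfun] at hloop
    exact hG.exists_isHomoclinic (hH μ).continuousOn hr hloop

theorem exists_hasLoop_of_heteroclinic {u w u' w' : ℝ → ℝ} (hG : IsForce G ℓ u₀ q) (hℓ : 0 < ℓ)
    (hH₀ : ContinuousOn H₀ (Ioi 0)) (hk : ContinuousOn k (Ioi 0)) (hk0 : ∀ x, 0 < x → 0 < k x)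
    (hlt : μb < μf)
    (h : IsSolution G (fun x => H₀ x + μb * k x) u w) (huw : HE1 ℓ q u w)
    (h' : IsSolution G (fun x => H₀ x + μf * k x) u' w') (huw' : HE2 ℓ q u' w') :
    ∃ μ, ∃ r ∈ Ioo (q - u₀) (q - ℓ), HasLoop (fun s => -2 * G (q - s))
      (fun s => 2 * H₀ (q - s) + μ * (2 * k (q - s))) r := by
  obtain ⟨huℓ, huq, hwℓ, hwq, hw⟩ := huw
  obtain ⟨huq', huℓ', hwq', hwℓ', hw'⟩ := huw'
  obtain ⟨F, hF⟩ := h.exists_isArch_of_front hw huℓ hwℓ huq hwq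
  obtain ⟨E, hE⟩ := h'.exists_isArch_of_back hw' huq' hwq' huℓ' hwℓ'
  have hlt_q : ∀ s ∈ Icc 0 (q - ℓ), s < q := fun s hs => by linarith [hs.2]
  refine exists_hasLoop_of_isArch (F := F) (E := E)
    (hG.isDownCrossing (by linarith [hG.left_lt_center]) le_rfl (by linarith))
    (continuousOn_const.mul (continuousOn_comp_const_sub hH₀ hlt_q))
    (continuousOn_const.mul (continuousOn_comp_const_sub hk hlt_q))
    (fun s hs => mul_pos two_pos (hk0 _ (hG.mapsTo_reflect (Ioo_subset_Ico_self hs)))) hlt ?_ ?_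
  · convert hF using 2 with s
    rw [Pi.neg_apply]
    ring
  · convert hE using 2 with s
    ring

theorem exists_hasLoop_of_degenerate {W W' : ℝ → ℝ} {x₁ : ℝ} (hG : IsForce G 0 u₀ q)
    (hH₀ : ContinuousOn H₀ (Ioi 0)) (hk : ContinuousOn k (Ioi 0)) (hk0 : ∀ x, 0 < x → 0 < k x)
    (hx₁ : x₁ ∈ Ioo 0 u₀) (hW : ∀ x ∈ Ioc 0 x₁, HasDerivAt W (W' x) x)
    (hWG : ∀ x ∈ Ioc 0 x₁, -2 * G x ≤ W' x) (hunb : ¬ BddAbove (W '' Ioo 0 x₁)) :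
    ∃ μ, ∃ r ∈ Ioo (q - u₀) (q - 0), HasLoop (fun s => -2 * G (q - s))
      (fun s => 2 * H₀ (q - s) + μ * (2 * k (q - s))) r := by
  have hlt_q : ∀ s ∈ Ico 0 (q - 0), s < q := fun s hs => by linarith [hs.2]
  have hmem : ∀ s ∈ Ico (q - x₁) (q - 0), q - s ∈ Ioc 0 x₁ := fun s hs =>
    ⟨by linarith [hs.2], by linarith [hs.1]⟩
  refine exists_hasLoop_of_not_bddAbove (W := fun s => W (q - s)) (W' := fun s => -W' (q - s))
    (s₁ := q - x₁) (fun T hT => hG.isDownCrossing_of_mem hT)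
    (continuousOn_const.mul (continuousOn_comp_const_sub hH₀ hlt_q))
    (continuousOn_const.mul (continuousOn_comp_const_sub hk hlt_q))
    (fun s hs => mul_pos two_pos (hk0 _ (hG.mapsTo_reflect hs)))
    ⟨by linarith [hx₁.2], by linarith [hx₁.1]⟩ (fun s hs => ?_) (fun s hs => ?_) ?_
  · exact (hW _ (hmem s hs)).comp_const_sub q s
  · linarith [hWG _ (hmem s hs)]
  · rwa [← Function.comp_def W, image_comp, image_const_sub_Ioo, sub_zero, sub_self,
      sub_sub_cancel]

end IsForce

end Force

section NShaped

variable {f f' g : ℝ → ℝ} {p q ℓ u₀ u₂ : ℝ}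

lemma contDiffOn_one_of_hasDerivAt {s : Set ℝ} (hs : IsOpen s)
    (hf : ∀ x ∈ s, HasDerivAt f (f' x) x) (hf' : ContinuousOn f' s) : ContDiffOn ℝ 1 f s := by
  rw [contDiffOn_one_iff_derivWithin hs.uniqueDiffOn]
  refine ⟨fun x hx => (hf x hx).differentiableAt.differentiableWithinAt, hf'.congr fun x hx => ?_⟩
  rw [derivWithin_of_isOpen hs hx, (hf x hx).deriv]

lemma strictMonoOn_or_strictAntiOn_of_hasDerivAt_ne_zero {s : Set ℝ} (hs : Convex ℝ s)
    (hf : ContinuousOn f s) (hf' : ∀ x ∈ interior s, HasDerivAt f (f' x) x)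
    (hne : ∀ x ∈ interior s, f' x ≠ 0) : StrictMonoOn f s ∨ StrictAntiOn f s := by
  have hderiv := fun x hx => (hf' x hx).hasDerivWithinAt (s := interior s)
  exact (hasDerivWithinAt_forall_lt_or_forall_gt_of_forall_ne hs.interior hderiv hne).symm.imp
    (strictMonoOn_of_hasDerivWithinAt_pos hs hf hderiv)
    (strictAntiOn_of_hasDerivWithinAt_neg hs hf hderiv)

lemma IsForce.mul_left (hf : IsForce f ℓ u₀ q) (hg : ContDiffOn ℝ 1 g (Ioi 0))
    (hg0 : ∀ x, 0 < x → 0 < g x) : IsForce (fun x => g x * f x) ℓ u₀ q where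
  left_nonneg := hf.left_nonneg
  left_lt_center := hf.left_lt_center
  center_lt_right := hf.center_lt_right
  contDiffOn := hg.mul hf.contDiffOn
  center := by simp only [hf.center, mul_zero]
  right := by simp only [hf.right, mul_zero]
  nonpos x hx := mul_nonpos_of_nonneg_of_nonpos (hg0 x hx.1).le (hf.nonpos x hx)
  pos x hx := mul_pos (hg0 x (hf.left_nonneg.trans_lt hx.1)) (hf.pos x hx)
  neg x hx := mul_neg_of_pos_of_neg
    (hg0 x ((hf.left_nonneg.trans_lt hf.left_lt_center).trans hx.1)) (hf.neg x hx)
  pos_of_right_lt x hx := mul_pos (hg0 x (hf.right_pos.trans hx)) (hf.pos_of_right_lt x hx)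
  exists_deriv_neg := by
    obtain ⟨d, hd, hfd⟩ := hf.exists_deriv_neg
    have hu₀ : 0 < u₀ := hf.left_nonneg.trans_lt hf.left_lt_center
    have hgd := ((hg.differentiableOn one_ne_zero).differentiableAt (Ioi_mem_nhds hu₀)).hasDerivAt
    refine ⟨g u₀ * d, mul_neg_of_pos_of_neg (hg0 _ hu₀) hd, (hgd.mul hfd).congr_deriv ?_⟩
    rw [hf.center, mul_zero, zero_add]

/-- An N-shaped nonlinearity on `u ≥ 0` with derivative `f'`: increasing up to `p`, decreasing
from `p` to `q`, increasing from `q` on. -/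
structure IsNShaped (f f' : ℝ → ℝ) (p q : ℝ) : Prop where
  left_pos : 0 < p
  left_lt_right : p < q
  continuousOn : ContinuousOn f (Ici 0)
  hasDerivAt : ∀ x ∈ Ioi 0, HasDerivAt f (f' x) x
  continuousOn_deriv : ContinuousOn f' (Ioi 0)
  deriv_pos_left : ∀ x ∈ Ioo 0 p, 0 < f' x
  deriv_neg : ∀ x ∈ Ioo p q, f' x < 0
  deriv_pos_right : ∀ x ∈ Ioi q, 0 < f' x

namespace IsNShaped

lemma strictMonoOn_left (hf : IsNShaped f f' p q) : StrictMonoOn f (Icc 0 p) := by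
  refine strictMonoOn_of_hasDerivWithinAt_pos (f' := f') (convex_Icc _ _)
    (hf.continuousOn.mono Icc_subset_Ici_self) ?_ ?_ <;> rw [interior_Icc]
  exacts [fun x hx => (hf.hasDerivAt x hx.1).hasDerivWithinAt, hf.deriv_pos_left]

lemma strictAntiOn (hf : IsNShaped f f' p q) : StrictAntiOn f (Icc p q) := by
  refine strictAntiOn_of_hasDerivWithinAt_neg (f' := f') (convex_Icc _ _)
    (hf.continuousOn.mono fun x hx => hf.left_pos.le.trans hx.1) ?_ ?_ <;> rw [interior_Icc]
  exacts [fun x hx => (hf.hasDerivAt x (hf.left_pos.trans hx.1)).hasDerivWithinAt, hf.deriv_neg]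

lemma strictMonoOn_right (hf : IsNShaped f f' p q) : StrictMonoOn f (Ici q) := by
  have hq : 0 < q := hf.left_pos.trans hf.left_lt_right
  refine strictMonoOn_of_hasDerivWithinAt_pos (f' := f') (convex_Ici _)
    (hf.continuousOn.mono fun x hx => hq.le.trans hx) ?_ ?_ <;> rw [interior_Ici]
  exacts [fun x hx => (hf.hasDerivAt x (hq.trans hx)).hasDerivWithinAt, hf.deriv_pos_right]

lemma left_lt (hf : IsNShaped f f' p q) (hℓ0 : 0 ≤ ℓ) (hℓ : ℓ < u₀) (hfℓ : 0 ≤ f ℓ)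
    (hfu₀ : f u₀ = 0) : p < u₀ := by
  by_contra! hle
  exact (hf.strictMonoOn_left ⟨hℓ0, hℓ.le.trans hle⟩ ⟨hℓ0.trans hℓ.le, hle⟩ hℓ).not_ge
    (hfu₀.trans_le hfℓ)

lemma lt_right (hf : IsNShaped f f' p q) (hu : u₀ < u₂) (hfu₀ : f u₀ = 0) (hfu₂ : f u₂ = 0) :
    u₀ < q := by
  by_contra! hle
  exact (hf.strictMonoOn_right hle (hle.trans hu.le) hu).ne (hfu₀.trans hfu₂.symm)

lemma right_lt (hf : IsNShaped f f' p q) (hp : p < u₀) (hu : u₀ < u₂) (hfu₀ : f u₀ = 0)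
    (hfu₂ : f u₂ = 0) : q < u₂ := by
  by_contra! hle
  exact (hf.strictAntiOn ⟨hp.le, hu.le.trans hle⟩ ⟨(hp.trans hu).le, hle⟩ hu).ne
    (hfu₂.trans hfu₀.symm)

theorem isForce (hf : IsNShaped f f' p q) (hℓ0 : 0 ≤ ℓ) (hℓ : ℓ < u₀) (hu : u₀ < u₂)
    (hfℓ : 0 ≤ f ℓ) (hfℓ' : 0 < ℓ → f ℓ ≤ 0) (hfu₀ : f u₀ = 0) (hfu₂ : f u₂ = 0) :
    IsForce f ℓ u₀ u₂ where
  left_nonneg := hℓ0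
  left_lt_center := hℓ
  center_lt_right := hu
  contDiffOn := contDiffOn_one_of_hasDerivAt isOpen_Ioi hf.hasDerivAt hf.continuousOn_deriv
  center := hfu₀
  right := hfu₂
  nonpos x hx := by
    have hp := hf.left_lt hℓ0 hℓ hfℓ hfu₀
    have hq := hf.lt_right hu hfu₀ hfu₂
    have hℓ' : 0 < ℓ := hx.1.trans_le hx.2
    have hℓp : ℓ ≤ p := by
      by_contra! hlt
      exact ((hf.strictAntiOn ⟨hlt.le, (hℓ.trans hq).le⟩ ⟨hp.le, hq.le⟩ hℓ).trans_le
        (hfℓ' hℓ')).ne hfu₀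
    exact (hf.strictMonoOn_left.monotoneOn ⟨hx.1.le, hx.2.trans hℓp⟩ ⟨hℓ0, hℓp⟩ hx.2).trans
      (hfℓ' hℓ')
  pos x hx := by
    have hp := hf.left_lt hℓ0 hℓ hfℓ hfu₀
    have hq := hf.lt_right hu hfu₀ hfu₂
    rcases le_total x p with hxp | hpx
    · exact hfℓ.trans_lt (hf.strictMonoOn_left ⟨hℓ0, hx.1.le.trans hxp⟩
        ⟨hℓ0.trans hx.1.le, hxp⟩ hx.1)
    · exact hfu₀.symm.trans_lt (hf.strictAntiOn ⟨hpx, (hx.2.trans hq).le⟩ ⟨hp.le, hq.le⟩ hx.2)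
  neg x hx := by
    have hp := hf.left_lt hℓ0 hℓ hfℓ hfu₀
    have hq := hf.lt_right hu hfu₀ hfu₂
    rcases le_total x q with hxq | hqx
    · exact (hf.strictAntiOn ⟨hp.le, hq.le⟩ ⟨(hp.trans hx.1).le, hxq⟩ hx.1).trans_eq hfu₀
    · exact (hf.strictMonoOn_right hqx (hqx.trans hx.2.le) hx.2).trans_eq hfu₂
  pos_of_right_lt x hx := by
    have hq := hf.right_lt (hf.left_lt hℓ0 hℓ hfℓ hfu₀) hu hfu₀ hfu₂
    exact hfu₂.symm.trans_lt (hf.strictMonoOn_right hq.le (hq.trans hx).le hx)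
  exists_deriv_neg := by
    have hp := hf.left_lt hℓ0 hℓ hfℓ hfu₀
    exact ⟨f' u₀, hf.deriv_neg u₀ ⟨hp, hf.lt_right hu hfu₀ hfu₂⟩,
      hf.hasDerivAt u₀ (hf.left_pos.trans hp)⟩

end IsNShaped

end NShaped

section OptimalVelocity

variable {V V' V'' κ : ℝ → ℝ} {UM K c τ u : ℝ}

namespace A1

lemma continuousOn (hA1 : A1 V V' V'' UM) : ContinuousOn V (Ici 0) := fun u hu =>
  (hA1.1 u hu).continuousWithinAt

lemma hasDerivAt (hA1 : A1 V V' V'' UM) (hu : 0 < u) : HasDerivAt V (V' u) u :=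
  (hA1.1 u hu.le).hasDerivAt (Ici_mem_nhds hu)

lemma deriv_zero_nonneg (hA1 : A1 V V' V'' UM) : 0 ≤ V' 0 := by
  obtain ⟨-, hc, -, -, hpos, -⟩ := hA1
  exact ge_of_tendsto ((hc 0 self_mem_Ici).mono Ioi_subset_Ici_self).tendsto
    (mem_of_superset self_mem_nhdsWithin fun u hu => (hpos u hu).le)

lemma strictMonoOn_deriv (hA1 : A1 V V' V'' UM) : StrictMonoOn V' (Icc 0 UM) := by
  obtain ⟨-, hc, hd, -, -, -, -, hUM, hmax, hz⟩ := hA1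
  refine (strictMonoOn_or_strictAntiOn_of_hasDerivAt_ne_zero (f' := V'') (convex_Icc 0 UM)
    (hc.mono Icc_subset_Ici_self) ?_ ?_).resolve_right fun hanti => ?_
  · rw [interior_Icc]
    exact fun x hx => hd x hx.1
  · rw [interior_Icc]
    exact fun x hx hx0 => hx.2.ne ((hz x hx.1).1 hx0)
  · exact (hanti ⟨(half_pos hUM).le, half_le_self hUM.le⟩ ⟨hUM.le, le_rfl⟩
      (half_lt_self hUM)).not_ge (hmax _ (half_pos hUM))

lemma strictAntiOn_deriv (hA1 : A1 V V' V'' UM) : StrictAntiOn V' (Ici UM) := by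
  obtain ⟨-, hc, hd, -, -, -, -, hUM, hmax, hz⟩ := hA1
  refine (strictMonoOn_or_strictAntiOn_of_hasDerivAt_ne_zero (f' := V'') (convex_Ici UM)
    (hc.mono (Ici_subset_Ici.2 hUM.le)) ?_ ?_).resolve_left fun hmono => ?_
  · rw [interior_Ici]
    exact fun x hx => hd x (hUM.trans hx)
  · rw [interior_Ici]
    exact fun x hx hx0 => (ne_of_gt hx) ((hz x (hUM.trans hx)).1 hx0)
  · exact (hmono self_mem_Ici (lt_add_one UM).le (lt_add_one UM)).not_ge
      (hmax _ (hUM.trans (lt_add_one UM)))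

lemma exists_deriv_eq_left (hA1 : A1 V V' V'' UM) (hK₀ : V' 0 < K) (hKM : K < V' UM) :
    ∃ p ∈ Ioo 0 UM, V' p = K := by
  obtain ⟨-, hc, -, -, -, -, -, hUM, -⟩ := hA1
  exact intermediate_value_Ioo hUM.le (hc.mono Icc_subset_Ici_self) ⟨hK₀, hKM⟩

lemma exists_deriv_eq_right (hA1 : A1 V V' V'' UM) (hK : 0 < K) (hKM : K < V' UM) :
    ∃ q ∈ Ioi UM, V' q = K := by
  obtain ⟨-, hc, -, -, -, -, hlim, hUM, -⟩ := hA1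
  obtain ⟨b, hbK, hb⟩ := ((hlim.eventually_lt_const hK).and (eventually_gt_atTop UM)).exists
  obtain ⟨q, hq, hqK⟩ := intermediate_value_Ioo' hb.le
    (hc.mono fun x hx => hUM.le.trans hx.1) ⟨hbK, hKM⟩
  exact ⟨q, hq.1, hqK⟩

lemma continuousOn_fdTV (hA1 : A1 V V' V'' UM) : ContinuousOn (fdTV V' K) (Ici 0) :=
  (continuousOn_const.sub hA1.2.1).div_const K

lemma contDiffOn_fdTV (hA1 : A1 V V' V'' UM) : ContDiffOn ℝ 1 (fdTV V' K) (Ioi 0) :=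
  (contDiffOn_const.sub
    (contDiffOn_one_of_hasDerivAt isOpen_Ioi hA1.2.2.1 hA1.2.2.2.1)).div_const K

lemma continuousOn_fTV (hA1 : A1 V V' V'' UM) : ContinuousOn (fTV V K c) (Ici 0) :=
  (((continuousOn_const.mul continuousOn_id).sub hA1.continuousOn).sub
    continuousOn_const).div_const K

lemma hasDerivAt_fTV (hA1 : A1 V V' V'' UM) (hu : 0 < u) :
    HasDerivAt (fTV V K c) (fdTV V' K u) u :=
  (((((hasDerivAt_id' u).const_mul K).sub (hA1.hasDerivAt hu)).sub_const c).div_const K).congr_deriv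
    (by rw [mul_one, fdTV])

theorem exists_isNShaped_fTV (hA1 : A1 V V' V'' UM) (hK₀ : V' 0 < K) (hKM : K < V' UM) :
    ∃ p q, IsNShaped (fTV V K c) (fdTV V' K) p q := by
  have hK : 0 < K := hA1.deriv_zero_nonneg.trans_lt hK₀
  have hmono := hA1.strictMonoOn_deriv
  have hanti := hA1.strictAntiOn_deriv
  obtain ⟨p, hp, hpK⟩ := hA1.exists_deriv_eq_left hK₀ hKM
  obtain ⟨q, hq, hqK⟩ := hA1.exists_deriv_eq_right hK hKM
  have hp' : p ∈ Icc 0 UM := Ioo_subset_Icc_self hp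
  have hq' : q ∈ Ici UM := Ioi_subset_Ici_self hq
  refine ⟨p, q, hp.1, hp.2.trans hq, hA1.continuousOn_fTV, fun _ => hA1.hasDerivAt_fTV,
    hA1.continuousOn_fdTV.mono Ioi_subset_Ici_self, fun x hx => ?_, fun x hx => ?_, fun x hx => ?_⟩
  · exact div_pos (sub_pos.2 (hpK ▸ hmono ⟨hx.1.le, (hx.2.trans hp.2).le⟩ hp' hx.2)) hK
  · refine div_neg_of_neg_of_pos (sub_neg.2 ?_) hK
    rcases le_total x UM with hxU | hUx
    · exact hpK ▸ hmono hp' ⟨(hp.1.trans hx.1).le, hxU⟩ hx.1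
    · exact hqK ▸ hanti hUx hq' hx.2
  · exact div_pos (sub_pos.2 (hqK ▸ hanti hq' (hq'.trans (mem_Ioi.1 hx).le) hx)) hK

lemma fTV_zero_nonneg (hA1 : A1 V V' V'' UM) (hK₀ : V' 0 < K) (hc : c ≤ c0v V) :
    0 ≤ fTV V K c 0 := by
  refine div_nonneg ?_ (hA1.deriv_zero_nonneg.trans_lt hK₀).le
  rw [c0v] at hc
  linarith

lemma exists_mul_le_fTV (hA1 : A1 V V' V'' UM) (hK₀ : V' 0 < K) (hc : c ≤ c0v V) :
    ∃ m > 0, ∃ δ > 0, ∀ x ∈ Ioc 0 δ, m * x ≤ fTV V K c x := by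
  have hK : 0 < K := hA1.deriv_zero_nonneg.trans_lt hK₀
  have hd0 : 0 < fdTV V' K 0 := div_pos (sub_pos.2 hK₀) hK
  have hf0 := hA1.fTV_zero_nonneg hK₀ hc
  have hnear : ∀ᶠ x in 𝓝[>] 0, fdTV V' K 0 / 2 < fdTV V' K x :=
    ((hA1.continuousOn_fdTV 0 self_mem_Ici).mono Ioi_subset_Ici_self).eventually_const_lt
      (half_lt_self hd0)
  obtain ⟨δ, hδ, hsub⟩ := (mem_nhdsGT_iff_exists_Ioo_subset' one_pos).1 hnear
  refine ⟨fdTV V' K 0 / 2, half_pos hd0, δ, hδ, fun x hx => ?_⟩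
  obtain ⟨ξ, hξ, hslope⟩ := exists_hasDerivAt_eq_slope (fTV V K c) (fdTV V' K) hx.1
    (hA1.continuousOn_fTV.mono Icc_subset_Ici_self) fun y hy => hA1.hasDerivAt_fTV hy.1
  have hlt : fdTV V' K 0 / 2 < fdTV V' K ξ := hsub ⟨hξ.1, hξ.2.trans_le hx.2⟩
  rw [hslope, sub_zero, lt_div_iff₀ hx.1] at hlt
  linarith

end A1

namespace A2

lemma comp_one_div_pos (hA2 : A2 κ) (hu : 0 < u) : 0 < κ (1 / u) :=
  hA2.2 _ (one_div_pos.2 hu)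

lemma contDiffOn_comp_one_div (hA2 : A2 κ) : ContDiffOn ℝ 1 (fun u => κ (1 / u)) (Ioi 0) :=
  hA2.1.comp (contDiffOn_const.div contDiffOn_id fun _ hx => ne_of_gt hx)
    fun _ hx => one_div_pos.2 (mem_Ioi.1 hx)

lemma g1TV_pos (hA2 : A2 κ) (hτ : 0 < τ) (hu : 0 < u) : 0 < g1TV κ τ u :=
  one_div_pos.2 (mul_pos hτ (hA2.comp_one_div_pos hu))

lemma g2TV_pos (hA2 : A2 κ) (hτ : 0 < τ) (hu : 0 < u) : 0 < g2TV κ τ u :=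
  div_pos hu (mul_pos (mul_pos two_pos hτ) (hA2.comp_one_div_pos hu))

lemma contDiffOn_g1TV (hA2 : A2 κ) (hτ : 0 < τ) : ContDiffOn ℝ 1 (g1TV κ τ) (Ioi 0) :=
  contDiffOn_const.div (contDiffOn_const.mul hA2.contDiffOn_comp_one_div)
    fun _ hu => (mul_pos hτ (hA2.comp_one_div_pos hu)).ne'

lemma contDiffOn_g2TV (hA2 : A2 κ) (hτ : 0 < τ) : ContDiffOn ℝ 1 (g2TV κ τ) (Ioi 0) :=
  contDiffOn_id.div (contDiffOn_const.mul hA2.contDiffOn_comp_one_div)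
    fun _ hu => (mul_pos (mul_pos two_pos hτ) (hA2.comp_one_div_pos hu)).ne'

end A2

end OptimalVelocity

section Comparison

lemma not_bddAbove_intervalIntegral {j : ℝ → ℝ} {a T : ℝ}
    (hint : ∀ b, a ≤ b → IntervalIntegrable j volume a b) (hj : ∀ x ∈ Ioi a, 0 ≤ j x)
    (hdiv : ¬ IntegrableOn j (Ioi a)) :
    ¬ BddAbove ((fun b => ∫ x in a..b, j x) '' Ioi T) := by
  rintro ⟨B, hB⟩
  refine hdiv (integrableOn_Ioi_of_intervalIntegral_norm_bounded (b := fun b => max a b)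
    (l := atTop) B a (fun b => ?_) (tendsto_atTop_mono (le_max_right a) tendsto_id) ?_)
  · exact (intervalIntegrable_iff_integrableOn_Ioc_of_le (le_max_left a b)).1
      (hint _ (le_max_left a b))
  · filter_upwards [eventually_ge_atTop a, eventually_gt_atTop T] with b hab hTb
    rw [max_eq_right hab]
    refine (intervalIntegral.integral_congr_ae (Eventually.of_forall fun x hx => ?_)).trans_le
      (hB (mem_image_of_mem _ hTb))
    rw [uIoc_of_le hab] at hx
    exact Real.norm_of_nonneg (hj x hx.1)

/-- The integral of condition (H) up to `ρ = 1/x`, used as a comparison function near `x = 0`. -/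
def truncatedCondH (κ : ℝ → ℝ) (x : ℝ) : ℝ := ∫ ρ in (1 : ℝ)..1 / x, 1 / (ρ ^ 3 * κ ρ)

variable {V V' V'' κ : ℝ → ℝ} {UM K c τ x : ℝ}

namespace A2

lemma continuousOn_integrand (hA2 : A2 κ) : ContinuousOn (fun ρ => 1 / (ρ ^ 3 * κ ρ)) (Ioi 0) :=
  continuousOn_const.div ((continuous_pow 3).continuousOn.mul hA2.1.continuousOn)
    fun _ hρ => (mul_pos (pow_pos hρ 3) (hA2.2 _ hρ)).ne'

lemma intervalIntegrable_integrand (hA2 : A2 κ) {b : ℝ} (hb : 0 < b) :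
    IntervalIntegrable (fun ρ => 1 / (ρ ^ 3 * κ ρ)) volume 1 b :=
  (hA2.continuousOn_integrand.mono
    fun _ hρ => (lt_min one_pos hb).trans_le hρ.1).intervalIntegrable

lemma hasDerivAt_truncatedCondH (hA2 : A2 κ) (hx : 0 < x) :
    HasDerivAt (truncatedCondH κ) (-(x / κ (1 / x))) x := by
  have hx' : 0 < 1 / x := one_div_pos.2 hx
  have hκ : κ (1 / x) ≠ 0 := (hA2.comp_one_div_pos hx).ne'
  have hinv : HasDerivAt (fun x : ℝ => 1 / x) (-(x ^ 2)⁻¹) x := by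
    simpa only [one_div] using hasDerivAt_inv hx.ne'
  refine ((intervalIntegral.integral_hasDerivAt_right (hA2.intervalIntegrable_integrand hx')
    (hA2.continuousOn_integrand.stronglyMeasurableAtFilter isOpen_Ioi _ hx')
    (hA2.continuousOn_integrand.continuousAt (Ioi_mem_nhds hx'))).comp x hinv).congr_deriv ?_
  field_simp

lemma not_bddAbove_truncatedCondH (hA2 : A2 κ) (hH : CondH κ) (hx : 0 < x) :
    ¬ BddAbove (truncatedCondH κ '' Ioo 0 x) := by
  refine fun hbdd => not_bddAbove_intervalIntegral (T := 1 / x)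
    (fun b hb => hA2.intervalIntegrable_integrand (one_pos.trans_le hb)) (fun ρ hρ => ?_) hH
    (hbdd.mono (image_subset_iff.2 fun b hb => ?_))
  · have hρ0 : 0 < ρ := one_pos.trans hρ
    exact one_div_nonneg.2 (mul_pos (pow_pos hρ0 3) (hA2.2 ρ hρ0)).le
  · have hb0 : 0 < b := (one_div_pos.2 hx).trans hb
    refine ⟨1 / b, ⟨one_div_pos.2 hb0, (one_div_lt hb0 hx).2 hb⟩, ?_⟩
    simp only [truncatedCondH, one_div_one_div]

theorem exists_comparison {u₀ : ℝ} (hA2 : A2 κ) (hA1 : A1 V V' V'' UM) (hH : CondH κ)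
    (hτ : 0 < τ) (hK₀ : V' 0 < K) (hc : c ≤ c0v V) (hu₀ : 0 < u₀) :
    ∃ x₁ ∈ Ioo 0 u₀, ∃ W W' : ℝ → ℝ, (∀ x ∈ Ioc 0 x₁, HasDerivAt W (W' x) x) ∧
      (∀ x ∈ Ioc 0 x₁, -2 * (g1TV κ τ x * fTV V K c x) ≤ W' x) ∧
      ¬ BddAbove (W '' Ioo 0 x₁) := by
  obtain ⟨m, hm, δ, hδ, hlin⟩ := hA1.exists_mul_le_fTV hK₀ hc
  have hC : 0 < 2 * m / τ := by positivity
  obtain ⟨x₁, hx₁, hx₁min⟩ := exists_between (lt_min hδ hu₀)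
  refine ⟨x₁, ⟨hx₁, hx₁min.trans_le (min_le_right _ _)⟩, fun x => 2 * m / τ * truncatedCondH κ x,
    fun x => 2 * m / τ * -(x / κ (1 / x)),
    fun x hx => (hA2.hasDerivAt_truncatedCondH hx.1).const_mul _, fun x hx => ?_, ?_⟩
  · have hle := mul_le_mul_of_nonneg_left
      (hlin x ⟨hx.1, hx.2.trans (hx₁min.le.trans (min_le_left _ _))⟩) (hA2.g1TV_pos hτ hx.1).le
    have hκ := hA2.comp_one_div_pos hx.1
    have hg₁ : 2 * m / τ * -(x / κ (1 / x)) = -2 * (g1TV κ τ x * (m * x)) := by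
      simp only [g1TV]
      field_simp
    linarith
  · rintro ⟨B, hB⟩
    refine hA2.not_bddAbove_truncatedCondH hH hx₁ ⟨B / (2 * m / τ), ?_⟩
    exact forall_mem_image.2 fun x hx => (le_div_iff₀' hC).2 (hB (mem_image_of_mem _ hx))

end A2

end Comparison

section TravelingWaves

variable {V V' V'' κ u w : ℝ → ℝ} {τ UM K c K₁ μ ub : ℝ} {umx : ℝ → ℝ}

lemma isTVSol_iff_isSolution : IsTVSol V V' κ τ K c μ u w ↔
    IsSolution (fun x => g1TV κ τ x * fTV V K c x)
      (fun x => g2TV κ τ x * fdTV V' K x + μ * g2TV κ τ x) u w := by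
  have hH : ∀ x, g2TV κ τ x * fdTV V' K x + μ * g2TV κ τ x = g2TV κ τ x * hTV V' K μ x :=
    fun x => by rw [hTV]; ring
  simp only [hH]
  exact ⟨fun h => ⟨h.1, h.2⟩, fun h => ⟨h.1, h.2⟩⟩

lemma hasHO_iff_exists_isHomoclinic : HasHO V V' κ τ K c μ ub ↔
    ∃ u w, IsHomoclinic (fun x => g1TV κ τ x * fTV V K c x)
      (fun x => g2TV κ τ x * fdTV V' K x + μ * g2TV κ τ x) ub u w ∧ ∀ z, 0 < u z := by
  constructor
  · rintro ⟨u, w, hsol, hu, hub, hut, hwb, hwt, hne⟩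
    exact ⟨u, w, ⟨isTVSol_iff_isSolution.1 hsol, hub, hut, hwb, hwt, hne⟩, hu⟩
  · rintro ⟨u, w, ⟨hsol, hub, hut, hwb, hwt, hne⟩, hu⟩
    exact ⟨u, w, isTVSol_iff_isSolution.2 hsol, hu, hub, hut, hwb, hwt, hne⟩

lemma CondC.condH (hC : CondC V' κ UM K₁ K) (hK : K < K₁) : CondH κ ∧ V' 0 < K := by
  obtain ⟨hlt, -⟩ | ⟨hH, hK₀, -⟩ := hC
  · exact absurd hlt hK.not_gt
  · exact ⟨hH, hK₀⟩

lemma lt_and_le_of_mem_D2 (h : (K, c) ∈ D2 V V' umx K₁) : K < K₁ ∧ c ≤ c0v V := by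
  obtain ⟨-, hK, hc⟩ | ⟨-, hK, -, hc⟩ := h
  · exact ⟨hK, hc.le⟩
  · exact ⟨hK, hc.le⟩

theorem stmt5_general {u0 u2 : ℝ} (hA1 : A1 V V' V'' UM) (hA2 : A2 κ) (hτ : 0 < τ)
    (hK₀ : V' 0 < K) (hKM : K < V' UM)
    (hcase : (∃ u1 μb μf, ZerosD1 V K c u1 u0 u2 ∧ HasHE1 V V' κ τ K c μb u1 u2 ∧
        HasHE2 V V' κ τ K c μf u1 u2 ∧ μb < μf) ∨
      (CondH κ ∧ c ≤ c0v V ∧ ZerosD2 V K c u0 u2)) :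
    ∃ μp, ∀ μ, HasHO V V' κ τ K c μ u2 ↔ μ = μp := by
  obtain ⟨p, q, hf⟩ := hA1.exists_isNShaped_fTV (c := c) hK₀ hKM
  have hg₁ := hA2.contDiffOn_g1TV hτ
  have hk := hA2.contDiffOn_g2TV hτ
  have hH₀ := hk.mul (hA1.contDiffOn_fdTV (K := K))
  have hk0 := fun x => hA2.g2TV_pos hτ (u := x)
  simp only [hasHO_iff_exists_isHomoclinic]
  obtain ⟨u1, μb, μf, ⟨hu1, hu10, hu02, hf1, hf0, hf2, -⟩, ⟨u, w, h, -, huw⟩,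
    ⟨u', w', h', -, huw'⟩, hlt⟩ | ⟨hH, hc, hu0, hu02, hf0, hf2, -⟩ := hcase
  · have hG := (hf.isForce hu1.le hu10 hu02 hf1.ge (fun _ => hf1.le) hf0 hf2).mul_left hg₁
      fun _ => hA2.g1TV_pos hτ
    exact hG.existsUnique_isHomoclinic hH₀ hk hk0
      (hG.exists_hasLoop_of_heteroclinic hu1 hH₀.continuousOn hk.continuousOn hk0 hlt
        (isTVSol_iff_isSolution.1 h) huw (isTVSol_iff_isSolution.1 h') huw')
  · have hG := (hf.isForce le_rfl hu0 hu02 (hA1.fTV_zero_nonneg hK₀ hc)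
      (fun h => absurd h (lt_irrefl 0)) hf0 hf2).mul_left hg₁ fun _ => hA2.g1TV_pos hτ
    obtain ⟨x₁, hx₁, W, W', hW, hWG, hunb⟩ := hA2.exists_comparison hA1 hH hτ hK₀ hc hu0
    exact hG.existsUnique_isHomoclinic hH₀ hk hk0
      (hG.exists_hasLoop_of_degenerate hH₀.continuousOn hk.continuousOn hk0 hx₁ hW hWG hunb)

end TravelingWaves

theorem stmt5
    (V V' V'' κ : ℝ → ℝ) (τ UM K c K₁ : ℝ) (uMx umx : ℝ → ℝ)
    (hA1 : A1 V V' V'' UM) (hA2 : A2 κ) (hτ : 0 < τ) (hK : K ≠ 0)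
    (huMx : UMaxHyp V' UM uMx) (humx : UMinHyp V' UM umx)
    (hK1 : K1Hyp V V' UM umx K₁)
    (hC : CondC V' κ UM K₁ K) (u0 u2 : ℝ)
    (hcase : ((K, c) ∈ D1 V V' UM uMx umx ∧
        ∃ u1 μb μf, ZerosD1 V K c u1 u0 u2 ∧
          (∀ μ, HasHE1 V V' κ τ K c μ u1 u2 ↔ μ = μb) ∧
          (∀ μ, HasHE2 V V' κ τ K c μ u1 u2 ↔ μ = μf) ∧ μb < μf) ∨
      ((K, c) ∈ D2 V V' umx K₁ ∧ ZerosD2 V K c u0 u2)) :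
    ∃ μp : ℝ, ∀ μ : ℝ, HasHO V V' κ τ K c μ u2 ↔ μ = μp := by
  obtain ⟨hD, u1, μb, μf, hz, hb, hf, hlt⟩ | ⟨hD, hz⟩ := hcase
  · exact stmt5_general hA1 hA2 hτ hD.1 hD.2.1
      (.inl ⟨u1, μb, μf, hz, (hb μb).2 rfl, (hf μf).2 rfl, hlt⟩)
  · obtain ⟨hKK₁, hc⟩ := lt_and_le_of_mem_D2 hD
    obtain ⟨hH, hK₀⟩ := hC.condH hKK₁
    exact stmt5_general hA1 hA2 hτ hK₀ (hKK₁.trans hK1.2.1) (.inr ⟨hH, hc, hz⟩)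

end TrafficTW
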